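/- Let b ≥ 3 be a fixed real constant, 0 < λ ≤ 1, and 0 < α ≤ 1. Then, as T → ∞, the sum of (b + β) over all nontrivial zeros ρ = β + iγ of L(λ,α,·) with 0 < γ ≤ T (counted with multiplicity) equals (b + 1/2)·(T/(2π))·log(T/(2πeαλ)) + (T/(4π))·log(α/λ) + O(log T). -/

import Mathlib

/-- The Dirichlet series of the Lerch zeta-function, convergent for `1 < re s`. -/
noncomputable def lerchSeries (lam alp : ℝ) (s : ℂ) : ℂ :=
  ∑' m : ℕ, Complex.exp (2 * Real.pi * Complex.I * lam * m) / ((m : ℂ) + alp) ^ s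

/-- `F` is the analytic continuation of the Lerch zeta-function with parameters `lam`, `alp`:
it is complex differentiable away from `1` and agrees with the Dirichlet series on `1 < re s`. -/
def IsLerch (lam alp : ℝ) (F : ℂ → ℂ) : Prop :=
  (∀ s : ℂ, s ≠ 1 → DifferentiableAt ℂ F s) ∧
  ∀ s : ℂ, 1 < s.re → F s = lerchSeries lam alp s

open scoped Classical

/-- The multiplicity (order of vanishing) of `F` at `z` (junk value `0` if `F` is not
analytic at `z` or vanishes to infinite order). -/
noncomputable def zeroOrder (F : ℂ → ℂ) (z : ℂ) : ℕ :=
  if h : AnalyticAt ℂ F z then (analyticOrderAt F z).toNat else 0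

/-!
Write `G s = a ^ s * F s`. On the line `re s = -n` the functional equation and Stirling's formula
give `log ‖G‖` up to `O(1 / t)`, and to the right of `1 + a` the series `G` is dominated by its
first term, which is `1`.

To turn this into a count of zeros, integrate `log ‖G‖` against the Laplacian of a product
`A(x) B(y)` of two piecewise linear compactly supported functions. The result is `2π` times the sum
of `A(β) B(γ)` over the zeros, and since `A''` and `B''` are finite sums of point masses, it only
involves integrals of `log ‖G‖` along finitely many lines; no argument of `G` has to be tracked.
Take for `A` the hat on `[-n, n + 4]` with peak at `2`, so that `A(β) = n + β` at all zeros, and for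
`B` a trapezoid that equals `1` up to height `T`. The vertical lines give the main term. For the
horizontal ones, Jensen's formula bounds the mean of the integral of `|log ‖G‖|` over heights in
`[T, T + 1]` by `O(log T)`, so suitable heights exist.

Summing `b + β` is affine in `b`, hence the cases `b = 1` and `b = 2` suffice.
-/

namespace LerchZeta

open Complex Filter Topology Asymptotics Set MeasureTheory
open scoped Real Interval

/-- The additive character `n ↦ e^{2πipn}` of the integers. -/
noncomputable def phase (p : ℝ) (n : ℤ) : ℂ := cexp (2 * π * I * p * n)

lemma norm_phase (p : ℝ) (n : ℤ) : ‖phase p n‖ = 1 := by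
  have : 2 * π * I * p * n = ((2 * π * p * n : ℝ) : ℂ) * I := by push_cast; ring
  rw [phase, this, norm_exp_ofReal_mul_I]

lemma phase_neg_add_one (p : ℝ) (n : ℤ) : phase p (-(n + 1)) = phase p (-1) * phase (-p) n := by
  rw [phase, phase, phase, ← Complex.exp_add]
  congr 1
  push_cast
  ring

lemma lerchSeries_eq_tsum_phase (p q : ℝ) (s : ℂ) :
    lerchSeries p q s = ∑' m : ℕ, phase p m / ((m : ℂ) + q) ^ s := by
  simp only [lerchSeries, phase, Int.cast_natCast]

/-- The even theta kernel `∑ₙ e^{2πipn} e^{-π(n+q)²x}`, written through `jacobiTheta₂`. -/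
noncomputable def evenTheta (p q x : ℝ) : ℂ :=
  cexp (-π * q ^ 2 * x) * jacobiTheta₂ (p + q * (I * x)) (I * x)

/-- The odd theta kernel `∑ₙ e^{2πipn} (n + q) e^{-π(n+q)²x}`, written through `jacobiTheta₂` and
its derivative. -/
noncomputable def oddTheta (p q x : ℝ) : ℂ :=
  cexp (-π * q ^ 2 * x) * (jacobiTheta₂' (p + q * (I * x)) (I * x) / (2 * π * I)
    + q * jacobiTheta₂ (p + q * (I * x)) (I * x))

lemma hasSum_evenTheta (p q : ℝ) {x : ℝ} (hx : 0 < x) :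
    HasSum (fun n : ℤ ↦ phase p n * (Real.exp (-π * (n + q) ^ 2 * x) : ℂ)) (evenTheta p q x) := by
  have hθ := hasSum_jacobiTheta₂_term (p + q * (I * x)) (τ := I * x) (by simpa)
  refine (hθ.mul_left (cexp (-π * q ^ 2 * x))).congr_fun fun n ↦ ?_
  rw [jacobiTheta₂_term, ofReal_exp, phase, ← Complex.exp_add, ← Complex.exp_add]
  congr 1
  push_cast
  linear_combination (-2 * π * n * q * x - π * n ^ 2 * x : ℂ) * I_sq

lemma hasSum_oddTheta (p q : ℝ) {x : ℝ} (hx : 0 < x) :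
    HasSum (fun n : ℤ ↦ phase p n * ((n + q : ℝ) : ℂ) * (Real.exp (-π * (n + q) ^ 2 * x) : ℂ))
      (oddTheta p q x) := by
  have hθ := hasSum_jacobiTheta₂_term (p + q * (I * x)) (τ := I * x) (by simpa)
  have hθ' := hasSum_jacobiTheta₂'_term (p + q * (I * x)) (τ := I * x) (by simpa)
  refine (((hθ'.div_const (2 * π * I)).add (hθ.mul_left ↑q)).mul_left
    (cexp (-π * q ^ 2 * x))).congr_fun fun n ↦ ?_
  rw [jacobiTheta₂'_term, mul_assoc (2 * π * I), mul_div_cancel_left₀ _ two_pi_I_ne_zero,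
    ← add_mul, mul_left_comm, jacobiTheta₂_term, ← Complex.exp_add, ofReal_exp, phase,
    mul_comm (cexp _) (((n + q : ℝ) : ℂ)), mul_assoc, ← Complex.exp_add]
  push_cast
  congr 2
  linear_combination (-2 * π * n * q * x - π * n ^ 2 * x : ℂ) * I_sq

section FunctionalEquation

variable (p q : ℝ) {x : ℝ}

lemma gaussian_mul_modular_factor (hx : 0 < x) :
    cexp (-π * q ^ 2 * (1 / x)) * cexp (-π * I * (p + q * (I * (1 / x))) ^ 2 / (I * (1 / x))) =
      cexp (-(2 * π * I * p * q)) * cexp (-π * p ^ 2 * x) := by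
  have hx0 : (x : ℂ) ≠ 0 := by exact_mod_cast hx.ne'
  rw [← Complex.exp_add, ← Complex.exp_add]
  congr 1
  field_simp
  linear_combination (-q ^ 2 : ℂ) * I_sq

lemma jacobiTheta₂_ray_inv (hx : 0 < x) :
    jacobiTheta₂ (p + q * (I * (1 / x))) (I * (1 / x)) =
      x ^ (1 / 2 : ℂ) * cexp (-π * I * (p + q * (I * (1 / x))) ^ 2 / (I * (1 / x))) *
        jacobiTheta₂ (-q + p * (I * x)) (I * x) := by
  have hx0 : (x : ℂ) ≠ 0 := by exact_mod_cast hx.ne'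
  have harg : arg x ≠ π := by rw [arg_ofReal_of_nonneg hx.le]; exact Real.pi_ne_zero.symm
  have hτ : -1 / (I * (1 / x)) = I * x := by field_simp; rw [I_sq]
  have hz : (p + q * (I * (1 / x))) / (I * (1 / x)) = -(-q + p * (I * x)) := by
    field_simp; linear_combination (p * x : ℂ) * I_sq
  have hfac : -I * (I * (1 / x)) = (x : ℂ)⁻¹ := by field_simp; rw [I_sq]; simp
  rw [jacobiTheta₂_functional_equation, hτ, hz, hfac, jacobiTheta₂_neg_left, inv_cpow _ _ harg,
    one_div ((x : ℂ) ^ (1 / 2 : ℂ))⁻¹, inv_inv]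

lemma jacobiTheta₂'_ray_inv (hx : 0 < x) :
    jacobiTheta₂' (p + q * (I * (1 / x))) (I * (1 / x)) =
      x ^ (1 / 2 : ℂ) * cexp (-π * I * (p + q * (I * (1 / x))) ^ 2 / (I * (1 / x))) * (I * x) *
        (jacobiTheta₂' (-q + p * (I * x)) (I * x) +
          2 * π * I * (p + q * (I * (1 / x))) * jacobiTheta₂ (-q + p * (I * x)) (I * x)) := by
  have hx0 : (x : ℂ) ≠ 0 := by exact_mod_cast hx.ne'
  have harg : arg x ≠ π := by rw [arg_ofReal_of_nonneg hx.le]; exact Real.pi_ne_zero.symm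
  have hτ : -1 / (I * (1 / x)) = I * x := by field_simp; rw [I_sq]
  have hz : (p + q * (I * (1 / x))) / (I * (1 / x)) = -(-q + p * (I * x)) := by
    field_simp; linear_combination (p * x : ℂ) * I_sq
  have hfac : -I * (I * (1 / x)) = (x : ℂ)⁻¹ := by field_simp; rw [I_sq]; simp
  have hdiv (E A : ℂ) : E / (I * (1 / x)) * (-A) = E * (I * x) * A := by
    have hI : E / (I * (1 / x)) = -(E * (I * x)) := by
      rw [div_eq_iff (by simp [hx0])]; field_simp; linear_combination E * I_sq
    rw [hI]; ring
  rw [jacobiTheta₂'_functional_equation, hτ, hz, hfac, jacobiTheta₂_neg_left,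
    jacobiTheta₂'_neg_left, inv_cpow _ _ harg, one_div ((x : ℂ) ^ (1 / 2 : ℂ))⁻¹, inv_inv,
    ← neg_add', hdiv]

lemma evenTheta_one_div (hx : 0 < x) :
    evenTheta p q (1 / x) =
      (cexp (-(2 * π * I * p * q)) * ((x ^ (1 / 2 : ℝ) : ℝ) : ℂ)) * evenTheta (-q) p x := by
  have hmod := gaussian_mul_modular_factor p q hx
  rw [evenTheta, evenTheta, ofReal_cpow hx.le]
  push_cast
  rw [jacobiTheta₂_ray_inv p q hx]
  linear_combination ((x : ℂ) ^ (1 / 2 : ℂ) * jacobiTheta₂ (-q + p * (I * x)) (I * x)) * hmod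

lemma oddTheta_one_div (hx : 0 < x) :
    oddTheta p q (1 / x) =
      (I * cexp (-(2 * π * I * p * q)) * ((x ^ (3 / 2 : ℝ) : ℝ) : ℂ)) * oddTheta (-q) p x := by
  have hx0 : (x : ℂ) ≠ 0 := by exact_mod_cast hx.ne'
  have hpi : (π : ℂ) ≠ 0 := by exact_mod_cast Real.pi_ne_zero
  have hcpow : (x : ℂ) ^ (3 / 2 : ℂ) = x ^ (1 / 2 : ℂ) * x := by
    rw [show (3 / 2 : ℂ) = 1 / 2 + 1 by norm_num, cpow_add _ _ hx0, cpow_one]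
  have hmod := gaussian_mul_modular_factor p q hx
  rw [oddTheta, oddTheta, ofReal_cpow hx.le]
  push_cast
  rw [jacobiTheta₂_ray_inv p q hx, jacobiTheta₂'_ray_inv p q hx, hcpow]
  generalize jacobiTheta₂ (-q + p * (I * x)) (I * x) = θ
  generalize jacobiTheta₂' (-q + p * (I * x)) (I * x) = θ'
  generalize cexp (-π * I * (p + q * (I * (1 / x))) ^ 2 / (I * (1 / x))) = E at *
  have hcomb : I * x * (θ' + 2 * π * I * (p + q * (I * (1 / x))) * θ) / (2 * π * I) + q * θ =
      I * x * (θ' / (2 * π * I) + p * θ) := by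
    field_simp
    linear_combination (2 * π * q * θ : ℂ) * I_sq
  linear_combination (cexp (-π * q ^ 2 * (1 / x)) * (x : ℂ) ^ (1 / 2 : ℂ) * E) * hcomb +
    ((x : ℂ) ^ (1 / 2 : ℂ) * (I * x * (θ' / (2 * π * I) + p * θ))) * hmod

end FunctionalEquation

section Continuity

variable (p q : ℝ)

lemma continuousAt_jacobiTheta₂_ray {x : ℝ} (hx : 0 < x) :
    ContinuousAt (fun u : ℝ ↦ jacobiTheta₂ (p + q * (I * u)) (I * u)) x := by
  have hray : Continuous fun u : ℝ ↦ ((p : ℂ) + q * (I * u), I * (u : ℂ)) := by fun_prop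
  exact (continuousAt_jacobiTheta₂ (p + q * (I * x)) (τ := I * x)
    (by rwa [I_mul_im, ofReal_re])).comp
      (f := fun u : ℝ ↦ ((p : ℂ) + q * (I * u), I * (u : ℂ))) hray.continuousAt

lemma continuousAt_jacobiTheta₂'_ray {x : ℝ} (hx : 0 < x) :
    ContinuousAt (fun u : ℝ ↦ jacobiTheta₂' (p + q * (I * u)) (I * u)) x := by
  have hray : Continuous fun u : ℝ ↦ ((p : ℂ) + q * (I * u), I * (u : ℂ)) := by fun_prop
  exact (continuousAt_jacobiTheta₂' (p + q * (I * x)) (τ := I * x)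
    (by rwa [I_mul_im, ofReal_re])).comp
      (f := fun u : ℝ ↦ ((p : ℂ) + q * (I * u), I * (u : ℂ))) hray.continuousAt

lemma continuousOn_evenTheta : ContinuousOn (evenTheta p q) (Ioi 0) := fun x hx ↦
  ((Continuous.continuousAt (by fun_prop)).mul
    (continuousAt_jacobiTheta₂_ray p q hx)).continuousWithinAt

lemma continuousOn_oddTheta : ContinuousOn (oddTheta p q) (Ioi 0) := fun x hx ↦
  ((Continuous.continuousAt (by fun_prop)).mul
    (((continuousAt_jacobiTheta₂'_ray p q hx).div_const _).add
      (continuousAt_const.mul (continuousAt_jacobiTheta₂_ray p q hx)))).continuousWithinAt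

end Continuity

section Decay

variable (p : ℝ) {q : ℝ}

/-- The limit at infinity of the even theta kernel; it is nonzero only when `n + q` vanishes for
some integer `n`, which for `0 < q ≤ 1` means `q = 1`, `n = -1`. -/
noncomputable def evenThetaLimit (p q : ℝ) : ℂ := if q = 1 then phase p (-1) else 0

lemma coe_unitAddCircle_eq_zero_iff (hq : q ∈ Ioc (0 : ℝ) 1) :
    (q : UnitAddCircle) = 0 ↔ q = 1 := by
  rw [← AddCircle.coe_period (1 : ℝ)]
  exact AddCircle.coe_eq_coe_iff_of_mem_Ioc (a := 0) (by simpa using hq) (by simp)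

lemma intCast_add_eq_zero_iff (hq : q ∈ Ioc (0 : ℝ) 1) (n : ℤ) :
    (n : ℝ) + q = 0 ↔ q = 1 ∧ n = -1 := by
  constructor
  · intro h
    have hneg : n < 0 := by exact_mod_cast (by linarith [hq.1] : (n : ℝ) < 0)
    have hge : -1 ≤ n := by exact_mod_cast (by linarith [hq.2] : (-1 : ℝ) ≤ n)
    obtain rfl : n = -1 := by omega
    push_cast at h
    exact ⟨by linarith, rfl⟩
  · rintro ⟨rfl, rfl⟩
    simp

lemma hasSum_evenTheta_sub_limit (hq : q ∈ Ioc (0 : ℝ) 1) {x : ℝ} (hx : 0 < x) :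
    HasSum (fun n : ℤ ↦ if (n : ℝ) + q = 0 then 0 else
      phase p n * (Real.exp (-π * (n + q) ^ 2 * x) : ℂ))
      (evenTheta p q x - evenThetaLimit p q) := by
  have hpoint : HasSum (fun n : ℤ ↦ if n = -1 then evenThetaLimit p q else 0)
    (evenThetaLimit p q) := hasSum_ite_eq (-1 : ℤ) _
  refine ((hasSum_evenTheta p q hx).sub hpoint).congr_fun fun n ↦ ?_
  simp only [intCast_add_eq_zero_iff hq]
  by_cases hq1 : q = 1 <;> by_cases hn : n = -1 <;> simp [hq1, hn, evenThetaLimit]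

lemma hasSum_hurwitzKernelBound_sub (hq : q ∈ Ioc (0 : ℝ) 1) {x : ℝ} (hx : 0 < x) :
    HasSum (fun n : ℤ ↦ if (n : ℝ) + q = 0 then 0 else Real.exp (-π * (n + q) ^ 2 * x))
      (HurwitzKernelBounds.F_int 0 q x - (if (q : UnitAddCircle) = 0 then 1 else 0)) := by
  have hpoint : HasSum (fun n : ℤ ↦ if n = -1 then (if q = 1 then 1 else 0 : ℝ) else 0)
    (if q = 1 then 1 else 0 : ℝ) := hasSum_ite_eq (-1 : ℤ) _
  have hsum := (HurwitzKernelBounds.summable_f_int 0 q hx).hasSum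
  have htsum : HurwitzKernelBounds.F_int 0 q x = ∑' n : ℤ, HurwitzKernelBounds.f_int 0 q x n := by
    simp [HurwitzKernelBounds.F_int]
  simp only [coe_unitAddCircle_eq_zero_iff hq, htsum]
  refine (hsum.sub hpoint).congr_fun fun n ↦ ?_
  simp only [intCast_add_eq_zero_iff hq]
  by_cases hq1 : q = 1 <;> by_cases hn : n = -1 <;>
    simp [hq1, hn, HurwitzKernelBounds.f_int]

lemma isBigO_evenTheta_sub_limit (hq : q ∈ Ioc (0 : ℝ) 1) (r : ℝ) :
    (fun x ↦ evenTheta p q x - evenThetaLimit p q) =O[atTop] (fun x : ℝ ↦ x ^ r) := by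
  obtain ⟨v, hv, hdecay⟩ := HurwitzKernelBounds.isBigO_atTop_F_int_zero_sub q
  refine (IsBigO.trans ?_ hdecay).trans (isLittleO_exp_neg_mul_rpow_atTop hv _).isBigO
  refine Eventually.isBigO ?_
  filter_upwards [eventually_gt_atTop 0] with t ht
  rw [← (hasSum_evenTheta_sub_limit p hq ht).tsum_eq]
  refine tsum_of_norm_bounded (hasSum_hurwitzKernelBound_sub hq ht) fun n ↦ ?_
  split_ifs
  · simp
  · rw [norm_mul, norm_phase, one_mul, norm_real, Real.norm_eq_abs, abs_of_pos (Real.exp_pos _)]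

lemma isBigO_oddTheta (q r : ℝ) :
    (fun x ↦ oddTheta p q x) =O[atTop] (fun x : ℝ ↦ x ^ r) := by
  obtain ⟨v, hv, hdecay⟩ := HurwitzKernelBounds.isBigO_atTop_F_int_one q
  refine (IsBigO.trans ?_ hdecay).trans (isLittleO_exp_neg_mul_rpow_atTop hv _).isBigO
  refine Eventually.isBigO ?_
  filter_upwards [eventually_gt_atTop 0] with t ht
  have htsum : HurwitzKernelBounds.F_int 1 q t = ∑' n : ℤ, HurwitzKernelBounds.f_int 1 q t n := by
    simp [HurwitzKernelBounds.F_int]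
  rw [← (hasSum_oddTheta p q ht).tsum_eq, htsum]
  refine tsum_of_norm_bounded (HurwitzKernelBounds.summable_f_int 1 q ht).hasSum fun n ↦ ?_
  rw [norm_mul, norm_mul, norm_phase, one_mul, norm_real, norm_real, Real.norm_eq_abs,
    Real.norm_eq_abs, abs_of_pos (Real.exp_pos _), HurwitzKernelBounds.f_int, pow_one]

end Decay

section Mellin

variable (p : ℝ) {q : ℝ} {s : ℂ}

lemma hasSum_int_eq_add {f : ℤ → ℂ} {A : ℂ} (hf : HasSum f A) :
    A = ∑' n : ℕ, f n + ∑' n : ℕ, f (-((n : ℤ) + 1)) := by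
  rw [← hf.tsum_eq]
  refine tsum_of_nat_of_neg_add_one (hf.summable.comp_injective Nat.cast_injective) ?_
  exact hf.summable.comp_injective (i := fun n : ℕ ↦ -((n : ℤ) + 1)) fun a b h ↦ by simpa using h

/-- The part of the two-sided Lerch series over the negative integers,
`∑_{n < 0} e^{2πipn} / |n + q|^s`. When `q = 1` the term `n = -1` is read as `1 / 0^s = 0`. -/
noncomputable def negSeries (p q : ℝ) (s : ℂ) : ℂ := phase p (-1) * lerchSeries (-p) (1 - q) s

lemma negSeries_eq_tsum (p q : ℝ) (s : ℂ) :
    negSeries p q s = ∑' m : ℕ, phase p (-((m : ℤ) + 1)) / ((m : ℂ) + (1 - q : ℝ)) ^ s := by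
  rw [negSeries, lerchSeries_eq_tsum_phase, ← tsum_mul_left]
  simp only [phase_neg_add_one, mul_div_assoc]

lemma abs_neg_natCast_succ_add (hq : q ∈ Ioc (0 : ℝ) 1) (m : ℕ) :
    |((-((m : ℤ) + 1) : ℤ) : ℝ) + q| = m + (1 - q) := by
  rw [abs_of_nonpos (by push_cast; linarith [hq.2])]
  push_cast
  ring

lemma mellin_evenTheta (hq : q ∈ Ioc (0 : ℝ) 1) (hs : 1 < s.re) :
    mellin (fun x ↦ evenTheta p q x - evenThetaLimit p q) (s / 2) =
      Gammaℝ s * (lerchSeries p q s + negSeries p q s) := by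
  have hmellin := hasSum_mellin_pi_mul_sq (a := fun n : ℤ ↦ phase p n)
    (r := fun n : ℤ ↦ (n : ℝ) + q) (F := fun x ↦ evenTheta p q x - evenThetaLimit p q) (s := s)
    (by linarith) (fun t ht ↦ hasSum_evenTheta_sub_limit p hq ht)
    (by simpa only [norm_phase] using (Real.summable_one_div_int_add_rpow q s.re).2 hs)
  rw [hasSum_int_eq_add hmellin, mul_add, lerchSeries_eq_tsum_phase, negSeries_eq_tsum,
    ← tsum_mul_left, ← tsum_mul_left]
  congr 1
  · refine tsum_congr fun m ↦ ?_
    have := hq.1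
    rw [abs_of_pos (by positivity)]
    push_cast
    rw [mul_div_assoc]
  · refine tsum_congr fun m ↦ ?_
    rw [abs_neg_natCast_succ_add hq]
    push_cast
    rw [mul_div_assoc]

lemma mellin_oddTheta (hq : q ∈ Ioc (0 : ℝ) 1) (hs : 1 < s.re) :
    mellin (oddTheta p q) ((s + 1) / 2) =
      Gammaℝ (s + 1) * (lerchSeries p q s - negSeries p q s) := by
  have hmellin := hasSum_mellin_pi_mul_sq' (a := fun n : ℤ ↦ phase p n)
    (r := fun n : ℤ ↦ (n : ℝ) + q) (F := oddTheta p q) (s := s) (by linarith)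
    (fun t ht ↦ hasSum_oddTheta p q ht)
    (by simpa only [norm_phase] using (Real.summable_one_div_int_add_rpow q s.re).2 hs)
  rw [hasSum_int_eq_add hmellin, mul_sub, sub_eq_add_neg, lerchSeries_eq_tsum_phase,
    negSeries_eq_tsum, ← tsum_mul_left, ← tsum_mul_left, ← tsum_neg]
  congr 1
  · refine tsum_congr fun m ↦ ?_
    have := hq.1
    rw [abs_of_pos (by positivity), sign_pos (by positivity)]
    push_cast
    rw [mul_div_assoc, SignType.coe_one]
    ring
  · refine tsum_congr fun m ↦ ?_
    rw [abs_neg_natCast_succ_add hq]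
    rcases eq_or_lt_of_le (show (0 : ℝ) ≤ m + (1 - q) by linarith [hq.2]) with hzero | hpos
    · have hs0 : s ≠ 0 := fun h ↦ by simp only [h, zero_re] at hs; linarith
      have hzero' : (m : ℂ) + (1 - q : ℝ) = 0 := by exact_mod_cast hzero.symm
      rw [hzero', ← hzero]
      simp [zero_cpow hs0]
    · rw [sign_neg (by push_cast; linarith)]
      push_cast
      rw [mul_div_assoc, SignType.coe_one]
      ring

end Mellin

section Continuation

variable {l a : ℝ} (hl : l ∈ Ioc (0 : ℝ) 1) (ha : a ∈ Ioc (0 : ℝ) 1)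

/-- The even theta kernels of `(l, a)` and `(-a, l)` as a pair related by `x ↦ 1 / x`. -/
@[simps]
noncomputable def evenPair : WeakFEPair ℂ where
  f := evenTheta l a
  g := evenTheta (-a) l
  hf_int := (continuousOn_evenTheta l a).locallyIntegrableOn measurableSet_Ioi
  hg_int := (continuousOn_evenTheta (-a) l).locallyIntegrableOn measurableSet_Ioi
  k := 1 / 2
  hk := by norm_num
  ε := cexp (-(2 * π * I * l * a))
  hε := Complex.exp_ne_zero _
  f₀ := evenThetaLimit l a
  g₀ := evenThetaLimit (-a) l
  hf_top := isBigO_evenTheta_sub_limit l ha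
  hg_top := isBigO_evenTheta_sub_limit (-a) hl
  h_feq _ hx := evenTheta_one_div l a hx

variable (l a) in
/-- The odd theta kernels of `(l, a)` and `(-a, l)` as a pair related by `x ↦ 1 / x`. -/
@[simps]
noncomputable def oddPair : WeakFEPair ℂ where
  f := oddTheta l a
  g := oddTheta (-a) l
  hf_int := (continuousOn_oddTheta l a).locallyIntegrableOn measurableSet_Ioi
  hg_int := (continuousOn_oddTheta (-a) l).locallyIntegrableOn measurableSet_Ioi
  k := 3 / 2
  hk := by norm_num
  ε := I * cexp (-(2 * π * I * l * a))
  hε := mul_ne_zero I_ne_zero (Complex.exp_ne_zero _)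
  f₀ := 0
  g₀ := 0
  hf_top r := by simpa only [sub_zero] using isBigO_oddTheta l a r
  hg_top r := by simpa only [sub_zero] using isBigO_oddTheta (-a) l r
  h_feq _ hx := oddTheta_one_div l a hx

variable (l a) in
lemma isStrongFEPair_oddPair : IsStrongFEPair (oddPair l a) := ⟨rfl, rfl⟩

/-- The Lerch zeta-function, as half the sum of its even and odd parts, each being a completed
function divided by its Gamma factor. At `s = 0` and `s = 1` it takes junk values. -/
noncomputable def lerchZeta (s : ℂ) : ℂ :=
  (1 / 2) * ((evenPair hl ha).Λ (s / 2) * (Gammaℝ s)⁻¹ +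
    (oddPair l a).Λ ((s + 1) / 2) * (Gammaℝ (s + 1))⁻¹)

lemma evenPair_Λ {s : ℂ} (hs : 1 < s.re) :
    (evenPair hl ha).Λ (s / 2) = Gammaℝ s * (lerchSeries l a s + negSeries l a s) := by
  rw [← mellin_evenTheta l ha hs]
  exact ((evenPair hl ha).hasMellin (s := s / 2)
    (by simp only [evenPair_k, div_ofNat_re]; linarith)).2.symm

lemma evenPair_Λ_one_sub {w : ℂ} (hw : 1 < w.re) :
    (evenPair hl ha).Λ ((1 - w) / 2) = cexp (-(2 * π * I * l * a)) *
      (Gammaℝ w * (lerchSeries (-a) l w + negSeries (-a) l w)) := by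
  have hfe := (evenPair hl ha).functional_equation (w / 2)
  rw [← mellin_evenTheta (-a) hl hw]
  rw [smul_eq_mul] at hfe
  have hk : (((evenPair hl ha).k : ℂ) - w / 2) = (1 - w) / 2 := by
    rw [evenPair_k]; push_cast; ring
  rw [← hk, hfe]
  congr 1
  exact ((evenPair hl ha).symm.hasMellin (s := w / 2)
    (by simp only [WeakFEPair.symm_k, evenPair_k, div_ofNat_re]; linarith)).2.symm

variable (l) in
include ha in
lemma oddPair_Λ {s : ℂ} (hs : 1 < s.re) :
    (oddPair l a).Λ ((s + 1) / 2) =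
      Gammaℝ (s + 1) * (lerchSeries l a s - negSeries l a s) := by
  rw [← mellin_oddTheta l ha hs, (isStrongFEPair_oddPair l a).Λ_eq]
  rfl

variable (a) in
include hl in
lemma oddPair_Λ_one_sub {w : ℂ} (hw : 1 < w.re) :
    (oddPair l a).Λ ((1 - w + 1) / 2) = I * cexp (-(2 * π * I * l * a)) *
      (Gammaℝ (w + 1) * (lerchSeries (-a) l w - negSeries (-a) l w)) := by
  have hfe := (oddPair l a).functional_equation ((w + 1) / 2)
  rw [← mellin_oddTheta (-a) hl hw]
  rw [smul_eq_mul] at hfe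
  have hk : (((oddPair l a).k : ℂ) - (w + 1) / 2) = (1 - w + 1) / 2 := by
    rw [oddPair_k]; push_cast; ring
  rw [← hk, hfe, (isStrongFEPair_oddPair l a).symm_Λ_eq]
  rfl

lemma lerchZeta_eq_lerchSeries {s : ℂ} (hs : 1 < s.re) :
    lerchZeta hl ha s = lerchSeries l a s := by
  have hΓ := Gammaℝ_ne_zero_of_re_pos (s := s) (by linarith)
  have hΓ' := Gammaℝ_ne_zero_of_re_pos (s := s + 1) (by simp only [add_re, one_re]; linarith)
  rw [lerchZeta, evenPair_Λ hl ha hs, oddPair_Λ l ha hs]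
  field_simp
  ring

lemma lerchZeta_one_sub {w : ℂ} (hw : 1 < w.re) :
    lerchZeta hl ha (1 - w) = (1 / 2) * cexp (-(2 * π * I * l * a)) * Gammaℂ w *
      (cexp (π * w / 2 * I) * lerchSeries (-a) l w +
        cexp (-(π * w / 2) * I) * negSeries (-a) l w) := by
  have hΓ := Gammaℝ_ne_zero_of_re_pos (s := w) (by linarith)
  have hΓ' := Gammaℝ_ne_zero_of_re_pos (s := w + 1) (by simp only [add_re, one_re]; linarith)
  have hn (n : ℕ) : w ≠ -n := by
    rintro rfl
    rw [neg_re, natCast_re] at hw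
    linarith [(n.cast_nonneg : (0 : ℝ) ≤ n)]
  have hexp_neg : cexp (-(π * w / 2) * I) = cos (π * w / 2) - sin (π * w / 2) * I := by
    rw [exp_mul_I, Complex.cos_neg, Complex.sin_neg]; ring
  rw [lerchZeta, evenPair_Λ_one_sub hl ha hw, oddPair_Λ_one_sub a hl hw, inv_Gammaℝ_one_sub hn,
    show 1 - w + 1 = 2 - w by ring, inv_Gammaℝ_two_sub hn, exp_mul_I, hexp_neg]
  field_simp
  ring

lemma differentiableAt_evenPair_Λ {s : ℂ} (h0 : s ≠ 0) (h1 : s ≠ 1) :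
    DifferentiableAt ℂ (fun s ↦ (evenPair hl ha).Λ (s / 2)) s := by
  simp only [WeakFEPair.Λ]
  have hk : ((evenPair hl ha).k : ℂ) - s / 2 ≠ 0 := fun h ↦ h1 <| by
    rw [evenPair_k] at h
    push_cast at h
    linear_combination (-2) * h
  refine ((DifferentiableAt.comp s (evenPair hl ha).differentiable_Λ₀.differentiableAt
    (by fun_prop)).sub ?_).sub ?_
  · have hpole : DifferentiableAt ℂ (fun s : ℂ ↦ 1 / (s / 2)) s :=
      (differentiableAt_const _).div (differentiableAt_id.div_const 2) (by simpa)
    exact hpole.smul_const _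
  · have hpole : DifferentiableAt ℂ
        (fun s : ℂ ↦ (evenPair hl ha).ε / (((evenPair hl ha).k : ℂ) - s / 2)) s :=
      (differentiableAt_const _).div ((differentiableAt_id.div_const 2).const_sub _) hk
    exact hpole.smul_const _

lemma differentiableAt_lerchZeta {s : ℂ} (h0 : s ≠ 0) (h1 : s ≠ 1) :
    DifferentiableAt ℂ (lerchZeta hl ha) s := by
  have hodd : DifferentiableAt ℂ (fun s ↦ (oddPair l a).Λ ((s + 1) / 2)) s :=
    DifferentiableAt.comp s
      ((isStrongFEPair_oddPair l a).differentiable_Λ.differentiableAt) (by fun_prop)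
  have hΓ : DifferentiableAt ℂ (fun s : ℂ ↦ (Gammaℝ (s + 1))⁻¹) s :=
    DifferentiableAt.comp (g := fun s : ℂ ↦ (Gammaℝ s)⁻¹) (f := fun s : ℂ ↦ s + 1) s
      (differentiable_Gammaℝ_inv (s + 1)) (by fun_prop)
  unfold lerchZeta
  exact (differentiableAt_const _).mul (((differentiableAt_evenPair_Λ hl ha h0 h1).mul
    (differentiable_Gammaℝ_inv s)).add (hodd.mul hΓ))

end Continuation

end LerchZeta

namespace IsLerch

open Complex Filter Topology Set LerchZeta

lemma eq_lerchZeta {l a : ℝ} {F : ℂ → ℂ} (hF : IsLerch l a F) (hl : l ∈ Ioc (0 : ℝ) 1)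
    (ha : a ∈ Ioc (0 : ℝ) 1) {s : ℂ} (h0 : s ≠ 0) (h1 : s ≠ 1) : F s = lerchZeta hl ha s := by
  have hopen : IsOpen ({0, 1}ᶜ : Set ℂ) := (Set.toFinite _).isClosed.isOpen_compl
  have hconn : IsPreconnected ({0, 1}ᶜ : Set ℂ) :=
    (Set.Countable.isPathConnected_compl_of_one_lt_rank (by simp)
      (Set.toFinite _).countable).isConnected.isPreconnected
  have hF_an : AnalyticOnNhd ℂ F ({0, 1}ᶜ : Set ℂ) :=
    DifferentiableOn.analyticOnNhd (fun z hz ↦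
      (hF.1 z fun h ↦ hz (Or.inr h)).differentiableWithinAt) hopen
  have hζ_an : AnalyticOnNhd ℂ (lerchZeta hl ha) ({0, 1}ᶜ : Set ℂ) :=
    DifferentiableOn.analyticOnNhd (fun z hz ↦ (differentiableAt_lerchZeta hl ha
      (fun h ↦ hz (Or.inl h)) fun h ↦ hz (Or.inr h)).differentiableWithinAt) hopen
  refine hF_an.eqOn_of_preconnected_of_eventuallyEq hζ_an hconn (z₀ := 2) (by simp) ?_
    (by simp [h0, h1])
  have hhalf : {z : ℂ | 1 < z.re} ∈ 𝓝 (2 : ℂ) :=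
    (isOpen_lt continuous_const continuous_re).mem_nhds (by simp)
  filter_upwards [hhalf] with z hz
  rw [hF.2 z hz, lerchZeta_eq_lerchSeries hl ha hz]

lemma one_sub {l a : ℝ} {F : ℂ → ℂ} (hF : IsLerch l a F) (hl : l ∈ Ioc (0 : ℝ) 1)
    (ha : a ∈ Ioc (0 : ℝ) 1) {w : ℂ} (hw : 1 < w.re) :
    F (1 - w) = (1 / 2) * cexp (-(2 * Real.pi * I * l * a)) * Gammaℂ w *
      (cexp (Real.pi * w / 2 * I) * lerchSeries (-a) l w +
        cexp (-(Real.pi * w / 2) * I) * negSeries (-a) l w) := by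
  have h0 : 1 - w ≠ 0 := fun h ↦ by
    rw [← sub_eq_zero.1 h, one_re] at hw
    exact lt_irrefl _ hw
  have h1 : 1 - w ≠ 1 := fun h ↦ by
    obtain rfl : w = 0 := by linear_combination -h
    rw [zero_re] at hw
    linarith
  rw [hF.eq_lerchZeta hl ha h0 h1, lerchZeta_one_sub hl ha hw]

end IsLerch

namespace LerchZeta

open Complex Filter Topology Asymptotics Set MeasureTheory
open scoped Real Interval

section NormalizedSeries

variable {p μ : ℝ}

/-- The term of index `m + 1` of `μ ^ s * lerchSeries p μ s`. -/
noncomputable def normalizedTerm (p μ : ℝ) (m : ℕ) (s : ℂ) : ℂ :=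
  phase p (m + 1 : ℕ) * ((μ / (m + 1 + μ) : ℝ) : ℂ) ^ s

/-- The Lerch series divided by its first term `μ ^ (-s)`; it tends to `1` as `re s → ∞`. -/
noncomputable def normalizedSeries (p μ : ℝ) (s : ℂ) : ℂ := 1 + ∑' m : ℕ, normalizedTerm p μ m s

lemma norm_normalizedTerm (hμ : 0 < μ) (m : ℕ) (s : ℂ) :
    ‖normalizedTerm p μ m s‖ = (μ / (m + 1 + μ)) ^ s.re := by
  rw [normalizedTerm, norm_mul, norm_phase, one_mul, norm_cpow_eq_rpow_re_of_pos (by positivity)]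

lemma div_succ_add_le (hμ : μ ∈ Ioc (0 : ℝ) 1) (m : ℕ) : μ / (m + 1 + μ) ≤ 1 / (m + 2) := by
  have hm : (0 : ℝ) ≤ m := m.cast_nonneg
  obtain ⟨hμ0, hμ1⟩ := hμ
  rw [div_le_div_iff₀ (by positivity) (by positivity)]
  nlinarith only [hm, hμ1]

lemma norm_normalizedTerm_le (hμ : μ ∈ Ioc (0 : ℝ) 1) (m : ℕ) {s : ℂ} {σ : ℝ} (hσ : 0 ≤ σ)
    (hs : σ ≤ s.re) :
    ‖normalizedTerm p μ m s‖ ≤ (1 / 2) ^ (s.re - σ) * (1 / (m + 2 : ℝ)) ^ σ := by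
  have hμ0 := hμ.1
  have hhalf : 1 / ((m : ℝ) + 2) ≤ 1 / 2 :=
    one_div_le_one_div_of_le two_pos (by linarith [(m.cast_nonneg : (0 : ℝ) ≤ m)])
  calc ‖normalizedTerm p μ m s‖ = (μ / (m + 1 + μ)) ^ s.re := norm_normalizedTerm hμ0 m s
    _ ≤ (1 / (m + 2 : ℝ)) ^ s.re :=
        Real.rpow_le_rpow (by positivity) (div_succ_add_le hμ m) (hσ.trans hs)
    _ = (1 / (m + 2 : ℝ)) ^ (s.re - σ) * (1 / (m + 2 : ℝ)) ^ σ := by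
        rw [← Real.rpow_add (by positivity), sub_add_cancel]
    _ ≤ (1 / 2) ^ (s.re - σ) * (1 / (m + 2 : ℝ)) ^ σ := by
        gcongr

lemma summable_one_div_add_two_rpow {σ : ℝ} (hσ : 1 < σ) :
    Summable fun m : ℕ ↦ (1 / (m + 2 : ℝ)) ^ σ := by
  refine ((summable_nat_add_iff 2).2 (Real.summable_one_div_nat_rpow.2 hσ)).congr fun m ↦ ?_
  rw [Real.div_rpow (by positivity) (by positivity), Real.one_rpow]
  push_cast
  rfl

lemma tsum_one_div_add_two_sq_le : ∑' m : ℕ, (1 / (m + 2 : ℝ)) ^ (2 : ℝ) ≤ 2 / 3 := by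
  have hshift := hasSum_zeta_two.summable.sum_add_tsum_nat_add 2
  rw [hasSum_zeta_two.tsum_eq] at hshift
  simp only [one_div, Finset.sum_range_succ, Finset.range_zero, Finset.sum_empty,
    CharP.cast_eq_zero, ne_eq, OfNat.ofNat_ne_zero, not_false_eq_true, zero_pow, inv_zero,
    Nat.cast_one, one_pow, inv_one, zero_add, Nat.cast_add, Nat.cast_ofNat] at hshift
  have hterm : ∑' m : ℕ, (1 / (m + 2 : ℝ)) ^ (2 : ℝ) = ∑' m : ℕ, (((m : ℝ) + 2) ^ 2)⁻¹ :=
    tsum_congr fun m ↦ by rw [Real.rpow_two, one_div, inv_pow]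
  rw [hterm]
  nlinarith [Real.pi_lt_d2, Real.pi_pos]

lemma summable_normalizedTerm (hμ : μ ∈ Ioc (0 : ℝ) 1) {s : ℂ} (hs : 1 < s.re) :
    Summable fun m ↦ normalizedTerm p μ m s := by
  refine Summable.of_norm_bounded (summable_one_div_add_two_rpow hs) fun m ↦ ?_
  simpa only [sub_self, Real.rpow_zero, one_mul] using
    norm_normalizedTerm_le (p := p) hμ m (by linarith) (le_refl s.re)

lemma phase_div_cpow_eq (hμ : 0 < μ) (m : ℕ) (s : ℂ) :
    phase p (m + 1 : ℕ) / (((m + 1 : ℕ) : ℂ) + μ) ^ s =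
      (μ : ℂ) ^ (-s) * normalizedTerm p μ m s := by
  have hden : (0 : ℝ) < m + 1 + μ := by positivity
  have hden' : ((m + 1 : ℕ) : ℂ) + μ = ((m + 1 + μ : ℝ) : ℂ) := by push_cast; ring
  have hdenpow : ((m + 1 + μ : ℝ) : ℂ) ^ s ≠ 0 :=
    cpow_ne_zero_iff.2 (Or.inl (by exact_mod_cast hden.ne'))
  have hμpow : (μ : ℂ) ^ s ≠ 0 := cpow_ne_zero_iff.2 (Or.inl (by exact_mod_cast hμ.ne'))
  have hquot : ((μ / (m + 1 + μ) : ℝ) : ℂ) ^ s * ((m + 1 + μ : ℝ) : ℂ) ^ s = (μ : ℂ) ^ s := by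
    rw [← mul_cpow_ofReal_nonneg (by positivity) hden.le, ← ofReal_mul,
      div_mul_cancel₀ _ hden.ne']
  rw [hden', normalizedTerm, cpow_neg, div_eq_iff hdenpow, mul_assoc, mul_assoc, hquot,
    mul_comm (phase p _), inv_mul_cancel_left₀ hμpow]

lemma lerchSeries_eq_cpow_mul (hμ : μ ∈ Ioc (0 : ℝ) 1) {s : ℂ} (hs : 1 < s.re) :
    lerchSeries p μ s = (μ : ℂ) ^ (-s) * normalizedSeries p μ s := by
  have hsum : Summable fun m : ℕ ↦ phase p m / ((m : ℂ) + μ) ^ s := by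
    rw [← summable_nat_add_iff 1]
    exact ((summable_normalizedTerm (p := p) hμ hs).mul_left ((μ : ℂ) ^ (-s))).congr fun m ↦
      (phase_div_cpow_eq hμ.1 m s).symm
  rw [lerchSeries_eq_tsum_phase, hsum.tsum_eq_zero_add, normalizedSeries, mul_add,
    ← tsum_mul_left]
  congr 1
  · simp [phase, cpow_neg]
  · exact tsum_congr fun m ↦ phase_div_cpow_eq hμ.1 m s

lemma norm_normalizedSeries_sub_one_le (hμ : μ ∈ Ioc (0 : ℝ) 1) {s : ℂ} (hs : 2 ≤ s.re) :
    ‖normalizedSeries p μ s - 1‖ ≤ 2 / 3 * (1 / 2) ^ (s.re - 2) := by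
  have hmaj := (summable_one_div_add_two_rpow one_lt_two).hasSum.mul_left
    ((1 / 2 : ℝ) ^ (s.re - 2))
  rw [normalizedSeries, add_sub_cancel_left, mul_comm]
  refine (tsum_of_norm_bounded hmaj fun m ↦ norm_normalizedTerm_le hμ m two_pos.le hs).trans ?_
  gcongr
  exact tsum_one_div_add_two_sq_le

lemma half_rpow_le_one {x : ℝ} (hx : 0 ≤ x) : (1 / 2 : ℝ) ^ x ≤ 1 :=
  Real.rpow_le_one (by norm_num) (by norm_num) hx

lemma norm_normalizedSeries_sub_one_le_two_thirds (hμ : μ ∈ Ioc (0 : ℝ) 1) {s : ℂ}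
    (hs : 2 ≤ s.re) : ‖normalizedSeries p μ s - 1‖ ≤ 2 / 3 := by
  linarith [norm_normalizedSeries_sub_one_le (p := p) hμ hs,
    half_rpow_le_one (sub_nonneg.2 hs)]

lemma differentiableAt_normalizedSeries (hμ : μ ∈ Ioc (0 : ℝ) 1) {s : ℂ} (hs : 3 / 2 < s.re) :
    DifferentiableAt ℂ (normalizedSeries p μ) s := by
  have hopen : IsOpen {z : ℂ | 3 / 2 < z.re} := isOpen_lt continuous_const continuous_re
  have htail : DifferentiableOn ℂ (fun s ↦ ∑' m : ℕ, normalizedTerm p μ m s)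
      {z : ℂ | 3 / 2 < z.re} := by
    refine differentiableOn_tsum_of_summable_norm
      (summable_one_div_add_two_rpow (σ := 3 / 2) (by norm_num)) (fun m z _ ↦ ?_) hopen
      fun m z hz ↦ ?_
    · have hbase : ((μ / (m + 1 + μ) : ℝ) : ℂ) ≠ 0 := by
        have := hμ.1
        exact_mod_cast (by positivity : μ / (m + 1 + μ) ≠ 0)
      exact ((differentiableAt_id.const_cpow (Or.inl hbase)).const_mul _).differentiableWithinAt
    · have hz' : 3 / 2 < z.re := hz
      refine (norm_normalizedTerm_le hμ m (by norm_num) hz'.le).trans ?_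
      exact mul_le_of_le_one_left (by positivity) (half_rpow_le_one (by linarith))
  exact (differentiableAt_const _).add (htail.differentiableAt (hopen.mem_nhds hs))

section ZeroFree

lemma one_add_div_lt_rpow_neg (hμ : 0 < μ) (m : ℕ) :
    1 + μ / (m + 1 + μ) < ((m + μ) / (m + 1 + μ)) ^ (-μ) := by
  have hden : (0 : ℝ) < m + 1 + μ := by positivity
  have hlog : Real.log ((m + μ) / (m + 1 + μ)) < -(1 / (m + 1 + μ)) := by
    refine (Real.log_lt_sub_one_of_pos (by positivity) fun h ↦ ?_).trans_eq (by field_simp; ring)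
    rw [div_eq_one_iff_eq hden.ne'] at h
    linarith
  have hexp := Real.add_one_le_exp (Real.log ((m + μ) / (m + 1 + μ)) * -μ)
  have hsplit : μ / (m + 1 + μ) = μ * (1 / (m + 1 + μ)) := by ring
  rw [Real.rpow_def_of_pos (by positivity)]
  nlinarith

lemma rpow_lt_rpow_sub_rpow (hμ : 0 < μ) (m : ℕ) :
    (μ / (m + 1 + μ)) ^ (1 + μ) < (μ / (m + μ)) ^ μ - (μ / ((m + 1 : ℕ) + μ)) ^ μ := by
  have hratio : (μ / (m + μ)) ^ μ =
      (μ / (m + 1 + μ)) ^ μ * ((m + μ) / (m + 1 + μ)) ^ (-μ) := by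
    rw [Real.rpow_neg (by positivity), ← Real.inv_rpow (by positivity),
      ← Real.mul_rpow (by positivity) (by positivity)]
    congr 1
    field_simp
  have hpow : (μ / (m + 1 + μ)) ^ (1 + μ) = (μ / (m + 1 + μ)) ^ μ * (μ / (m + 1 + μ)) := by
    rw [add_comm 1 μ, Real.rpow_add_one (by positivity)]
  have hpos : 0 < (μ / (m + 1 + μ)) ^ μ := by positivity
  push_cast
  rw [hratio, hpow]
  nlinarith [one_add_div_lt_rpow_neg hμ m]

lemma sum_range_rpow_le (hμ : 0 < μ) (n : ℕ) :
    ∑ m ∈ Finset.range n, (μ / ((m + 1 : ℕ) + 1 + μ)) ^ (1 + μ) ≤ (μ / ((1 : ℕ) + μ)) ^ μ := by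
  set h : ℕ → ℝ := fun m ↦ (μ / (m + μ)) ^ μ
  calc ∑ m ∈ Finset.range n, (μ / ((m + 1 : ℕ) + 1 + μ)) ^ (1 + μ)
      ≤ ∑ m ∈ Finset.range n, (h (m + 1) - h (m + 1 + 1)) :=
        Finset.sum_le_sum fun m _ ↦ (rpow_lt_rpow_sub_rpow hμ (m + 1)).le
    _ = h 1 - h (n + 1) := Finset.sum_range_sub' (fun m ↦ h (m + 1)) n
    _ ≤ h 1 := sub_le_self _ (by positivity)

lemma summable_rpow_one_add (hμ : 0 < μ) :
    Summable fun m : ℕ ↦ (μ / (m + 1 + μ)) ^ (1 + μ) := by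
  rw [← summable_nat_add_iff 1]
  exact summable_of_sum_range_le (fun m ↦ by positivity) (sum_range_rpow_le hμ)

lemma tsum_rpow_one_add_lt_one (hμ : 0 < μ) :
    ∑' m : ℕ, (μ / (m + 1 + μ)) ^ (1 + μ) < 1 := by
  have hsum := summable_rpow_one_add hμ
  have htail := ((summable_nat_add_iff 1).2 hsum).tsum_le_of_sum_range_le (sum_range_rpow_le hμ)
  have hfirst := rpow_lt_rpow_sub_rpow hμ 0
  rw [Nat.cast_zero, zero_add (μ : ℝ), div_self hμ.ne', Real.one_rpow, zero_add] at hfirst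
  rw [hsum.tsum_eq_zero_add, Nat.cast_zero]
  linarith

lemma normalizedSeries_ne_zero (hμ : 0 < μ) {s : ℂ} (hs : 1 + μ ≤ s.re) :
    normalizedSeries p μ s ≠ 0 := by
  intro hzero
  have htail : ‖∑' m : ℕ, normalizedTerm p μ m s‖ < 1 := by
    refine (tsum_of_norm_bounded (summable_rpow_one_add hμ).hasSum fun m ↦ ?_).trans_lt
      (tsum_rpow_one_add_lt_one hμ)
    rw [norm_normalizedTerm hμ]
    refine Real.rpow_le_rpow_of_exponent_ge (by positivity) ?_ hs
    rw [div_le_one (by positivity)]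
    linarith [(m.cast_nonneg : (0 : ℝ) ≤ m)]
  rw [normalizedSeries] at hzero
  rw [eq_neg_of_add_eq_zero_right hzero, norm_neg, norm_one] at htail
  exact lt_irrefl _ htail

end ZeroFree

section VerticalIntegral

lemma norm_log_one_add_le_two_mul {z : ℂ} (hz : ‖z‖ ≤ 2 / 3) : ‖log (1 + z)‖ ≤ 2 * ‖z‖ := by
  have hlog := norm_log_one_add_le (z := z) (by linarith)
  have hinv : (1 - ‖z‖)⁻¹ ≤ 3 := by
    rw [inv_le_comm₀ (by linarith) (by norm_num)]
    linarith
  have hsq : ‖z‖ ^ 2 * (1 - ‖z‖)⁻¹ ≤ ‖z‖ ^ 2 * 3 := by gcongr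
  nlinarith [norm_nonneg z]

lemma norm_log_normalizedSeries_le (hμ : μ ∈ Ioc (0 : ℝ) 1) {s : ℂ} (hs : 2 ≤ s.re) :
    ‖log (normalizedSeries p μ s)‖ ≤ 2 * (1 / 2) ^ (s.re - 2) := by
  have hlog := norm_log_one_add_le_two_mul
    (norm_normalizedSeries_sub_one_le_two_thirds (p := p) hμ hs)
  rw [add_sub_cancel] at hlog
  have hpos : (0 : ℝ) < (1 / 2) ^ (s.re - 2) := by positivity
  linarith [norm_normalizedSeries_sub_one_le (p := p) hμ hs]

lemma differentiableAt_log_normalizedSeries (hμ : μ ∈ Ioc (0 : ℝ) 1) {s : ℂ} (hs : 2 ≤ s.re) :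
    DifferentiableAt ℂ (fun s ↦ log (normalizedSeries p μ s)) s := by
  refine (differentiableAt_normalizedSeries hμ (by linarith)).clog (Or.inl ?_)
  have hre := (abs_re_le_norm _).trans
    (norm_normalizedSeries_sub_one_le_two_thirds (p := p) hμ hs)
  rw [sub_re, one_re, abs_le] at hre
  linarith [hre.1]

lemma continuous_half_rpow_sub : Continuous fun x : ℝ ↦ (2 : ℝ) * (1 / 2) ^ (x - 2) :=
  continuous_const.mul
    ((Real.continuous_const_rpow (by norm_num)).comp (continuous_id.sub continuous_const))

lemma integral_half_rpow_le {σ A : ℝ} (hσ : 2 ≤ σ) :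
    ∫ x in σ..A, (2 : ℝ) * (1 / 2) ^ (x - 2) ≤ 4 := by
  have hlog : 0 < Real.log 2 := Real.log_pos one_lt_two
  have hderiv (x : ℝ) : HasDerivAt (fun x : ℝ ↦ -(2 / Real.log 2) * (1 / 2 : ℝ) ^ (x - 2))
      (2 * (1 / 2) ^ (x - 2)) x := by
    refine ((((hasDerivAt_id x).sub_const 2).const_rpow (a := (1 / 2 : ℝ)) (by norm_num)).const_mul
      (-(2 / Real.log 2))).congr_deriv ?_
    rw [one_div, Real.log_inv]
    simp only [id_eq]
    field_simp
  rw [intervalIntegral.integral_eq_sub_of_hasDerivAt (fun x _ ↦ hderiv x)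
    (continuous_half_rpow_sub.intervalIntegrable _ _)]
  have hle := half_rpow_le_one (sub_nonneg.2 hσ)
  have hpos : (0 : ℝ) < (1 / 2) ^ (A - 2) := by positivity
  have hconst : 2 / Real.log 2 ≤ 4 := by
    rw [div_le_iff₀ hlog]
    linarith [Real.log_two_gt_d9]
  have hconst_pos : 0 < 2 / Real.log 2 := by positivity
  nlinarith

lemma norm_integral_log_normalizedSeries_horizontal_le (hμ : μ ∈ Ioc (0 : ℝ) 1) {σ A : ℝ}
    (hσ : 2 ≤ σ) (hA : σ ≤ A) (y : ℝ) :
    ‖∫ x in σ..A, log (normalizedSeries p μ (x + y * I))‖ ≤ 4 := by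
  refine (intervalIntegral.norm_integral_le_of_norm_le hA (Eventually.of_forall fun x hx ↦ ?_)
    (continuous_half_rpow_sub.intervalIntegrable _ _)).trans (integral_half_rpow_le hσ)
  have hre : ((x : ℂ) + y * I).re = x := by simp
  simpa only [hre] using
    norm_log_normalizedSeries_le (p := p) hμ (s := x + y * I) (by rw [hre]; linarith [hx.1])

lemma exists_norm_integral_log_normalizedSeries_le_one (p : ℝ) (hμ : μ ∈ Ioc (0 : ℝ) 1) (σ : ℝ)
    (t₁ t₂ : ℝ) :
    ∃ A, σ ≤ A ∧ ‖∫ t in t₁..t₂, log (normalizedSeries p μ (A + t * I))‖ ≤ 1 := by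
  have hlim : Tendsto (fun A : ℝ ↦ 2 * (1 / 2 : ℝ) ^ (A - 2) * |t₂ - t₁|) atTop (𝓝 0) := by
    have hpow := (tendsto_rpow_atTop_of_base_lt_one (1 / 2 : ℝ) (by norm_num) (by norm_num)).comp
      (tendsto_atTop_add_const_right atTop (-2 : ℝ) tendsto_id)
    simpa only [Function.comp_def, id, ← sub_eq_add_neg, mul_zero, zero_mul] using
      (hpow.const_mul 2).mul_const |t₂ - t₁|
  obtain ⟨A, hsmall, hσA, h2A⟩ := ((hlim.eventually (gt_mem_nhds one_pos)).and
    ((eventually_ge_atTop σ).and (eventually_ge_atTop 2))).exists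
  refine ⟨A, hσA, (intervalIntegral.norm_integral_le_of_norm_le_const fun t _ ↦ ?_).trans
    hsmall.le⟩
  have hre : ((A : ℂ) + t * I).re = A := by simp
  simpa only [hre] using norm_log_normalizedSeries_le (p := p) hμ (s := A + t * I) (by rwa [hre])

-- The bound is uniform in the height because the contour can be pushed to `re s = ∞`.
lemma norm_integral_log_normalizedSeries_le (hμ : μ ∈ Ioc (0 : ℝ) 1) {σ : ℝ} (hσ : 2 ≤ σ)
    (t₁ t₂ : ℝ) : ‖∫ t in t₁..t₂, log (normalizedSeries p μ (σ + t * I))‖ ≤ 9 := by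
  obtain ⟨A, hσA, hfar⟩ := exists_norm_integral_log_normalizedSeries_le_one p hμ σ t₁ t₂
  have hdiff : DifferentiableOn ℂ (fun s ↦ log (normalizedSeries p μ s))
      (uIcc σ A ×ℂ uIcc t₁ t₂) := fun z hz ↦ by
    rw [mem_reProdIm, uIcc_of_le hσA] at hz
    exact (differentiableAt_log_normalizedSeries hμ (hσ.trans hz.1.1)).differentiableWithinAt
  have hCauchy := integral_boundary_rect_eq_zero_of_differentiableOn _ ⟨σ, t₁⟩ ⟨A, t₂⟩ hdiff
  simp only [smul_eq_mul] at hCauchy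
  have hvert : I * ∫ t in t₁..t₂, log (normalizedSeries p μ (σ + t * I)) =
      (∫ x in σ..A, log (normalizedSeries p μ (x + t₁ * I))) -
        (∫ x in σ..A, log (normalizedSeries p μ (x + t₂ * I))) +
        I * ∫ t in t₁..t₂, log (normalizedSeries p μ (A + t * I)) := by
    linear_combination -hCauchy
  rw [← one_mul ‖_‖, ← norm_I, ← norm_mul, hvert]
  refine (norm_add_le _ _).trans ((add_le_add (norm_sub_le _ _) le_rfl).trans ?_)
  rw [norm_mul, norm_I, one_mul]
  linarith [norm_integral_log_normalizedSeries_horizontal_le (p := p) hμ hσ hσA t₁,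
    norm_integral_log_normalizedSeries_horizontal_le (p := p) hμ hσ hσA t₂]

lemma continuous_log_normalizedSeries_vertical (p : ℝ) (hμ : μ ∈ Ioc (0 : ℝ) 1) {σ : ℝ}
    (hσ : 2 ≤ σ) : Continuous fun t : ℝ ↦ log (normalizedSeries p μ (σ + t * I)) :=
  continuous_iff_continuousAt.2 fun t ↦
    (differentiableAt_log_normalizedSeries (p := p) hμ (s := σ + t * I)
      (by simpa using hσ)).continuousAt.comp (f := fun t : ℝ ↦ (σ : ℂ) + t * I) (by fun_prop)

lemma continuous_log_norm_normalizedSeries (p : ℝ) (hμ : μ ∈ Ioc (0 : ℝ) 1) {σ : ℝ}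
    (hσ : 2 ≤ σ) : Continuous fun t : ℝ ↦ Real.log ‖normalizedSeries p μ (σ + t * I)‖ := by
  simpa only [Function.comp_def, log_re] using
    continuous_re.comp (continuous_log_normalizedSeries_vertical p hμ hσ)

lemma abs_integral_log_norm_normalizedSeries_le (p : ℝ) (hμ : μ ∈ Ioc (0 : ℝ) 1) {σ : ℝ}
    (hσ : 2 ≤ σ) (t₁ t₂ : ℝ) :
    |∫ t in t₁..t₂, Real.log ‖normalizedSeries p μ (σ + t * I)‖| ≤ 9 := by
  have hre : ∫ t in t₁..t₂, Real.log ‖normalizedSeries p μ (σ + t * I)‖ =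
      (∫ t in t₁..t₂, log (normalizedSeries p μ (σ + t * I))).re := by
    simp only [← log_re]
    exact (reCLM.intervalIntegral_comp_comm
      ((continuous_log_normalizedSeries_vertical p hμ hσ).intervalIntegrable _ _))
  rw [hre]
  exact (abs_re_le_norm _).trans (norm_integral_log_normalizedSeries_le hμ hσ t₁ t₂)

end VerticalIntegral

end NormalizedSeries

end LerchZeta

namespace LerchZeta

open Complex Filter Topology Asymptotics Set MeasureTheory
open scoped Real Interval

section Gamma

lemma norm_Gamma_add_neg_mul_I (x t : ℝ) :
    ‖Gamma (x + (-t : ℝ) * I)‖ = ‖Gamma (x + t * I)‖ := by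
  have hconj : (x : ℂ) + (-t : ℝ) * I = (starRingEnd ℂ) (x + t * I) := by simp
  rw [hconj, Gamma_conj, norm_conj]

lemma norm_Gamma_one_add_mul_I_sq {t : ℝ} (ht : 0 < t) :
    ‖Gamma (1 + t * I)‖ ^ 2 = π * t / Real.sinh (π * t) := by
  have htI : (t : ℂ) * I ≠ 0 := by simp [ht.ne']
  have : sinh (π * t) ≠ 0 := by
    rw [← ofReal_mul, ← ofReal_sinh]
    exact_mod_cast (Real.sinh_pos_iff.2 (by positivity : 0 < π * t)).ne'
  have hconj : (starRingEnd ℂ) (Gamma (1 + t * I)) = Gamma (1 - t * I) := by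
    rw [← Gamma_conj]
    simp [sub_eq_add_neg]
  have hprod : Gamma (1 + t * I) * (starRingEnd ℂ) (Gamma (1 + t * I)) =
      π * t / sinh (π * t) := by
    rw [hconj, add_comm (1 : ℂ), Gamma_add_one _ htI, mul_assoc, Gamma_mul_Gamma_one_sub,
      ← mul_assoc, sin_mul_I]
    field_simp
  rw [mul_conj, ← ofReal_mul, ← ofReal_sinh, ← ofReal_div] at hprod
  rw [← normSq_eq_norm_sq]
  exact_mod_cast hprod

/-- The main term of Stirling's formula for `log ‖Γ(n + 1 + it)‖` as `t → ∞`. -/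
noncomputable def stirlingTerm (n : ℕ) (t : ℝ) : ℝ :=
  (n + 1 / 2) * Real.log t + (1 / 2) * Real.log (2 * π) - π * t / 2

lemma abs_log_one_sub_exp_neg_le {t : ℝ} (ht : 1 ≤ t) :
    |Real.log (1 - Real.exp (-(2 * π * t)))| ≤ 1 / t := by
  have : 0 < 1 / t := by positivity
  set x := Real.exp (-(2 * π * t)) with hx
  have hx0 : 0 < x := Real.exp_pos _
  have hx_le : x ≤ 1 / 6 * (1 / t) := by
    calc x = 1 / Real.exp (2 * π * t) := by rw [hx, Real.exp_neg, one_div]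
      _ ≤ 1 / (6 * t) := by
        refine one_div_le_one_div_of_le (by positivity) ?_
        nlinarith [Real.add_one_le_exp (2 * π * t), Real.pi_gt_three]
      _ = 1 / 6 * (1 / t) := by rw [one_div_mul_one_div]
  have ht1 : 1 / t ≤ 1 := by rwa [div_le_one (by linarith)]
  have hpos : 0 < 1 - x := by linarith
  have hupper : Real.log (1 - x) ≤ 0 := Real.log_nonpos hpos.le (by linarith)
  have hlower := Real.one_sub_inv_le_log_of_pos hpos
  have hinv : (1 - x)⁻¹ ≤ 1 + 2 * x := by
    rw [inv_eq_one_div, div_le_iff₀ hpos]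
    nlinarith
  rw [abs_le]
  constructor <;> linarith

lemma abs_log_norm_Gamma_one_add_mul_I_sub_le {t : ℝ} (ht : 1 ≤ t) :
    |Real.log ‖Gamma (1 + t * I)‖ - stirlingTerm 0 t| ≤ 1 / t := by
  have ht0 : 0 < t := by linarith
  have := Real.pi_pos
  have hx : Real.exp (-(2 * π * t)) < 1 :=
    Real.exp_lt_one_iff.2 (neg_lt_zero.2 (by positivity))
  have hquot : π * t / Real.sinh (π * t) =
      2 * π * t * (Real.exp (π * t))⁻¹ * (1 - Real.exp (-(2 * π * t)))⁻¹ := by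
    have hsinh : Real.sinh (π * t) = Real.exp (π * t) * (1 - Real.exp (-(2 * π * t))) / 2 := by
      rw [Real.sinh_eq, mul_sub, ← Real.exp_add]
      ring_nf
    have := sub_pos.2 hx
    rw [hsinh]
    field_simp
  have hlog : 2 * Real.log ‖Gamma (1 + t * I)‖ =
      2 * stirlingTerm 0 t - Real.log (1 - Real.exp (-(2 * π * t))) := by
    have hsq := congrArg Real.log (norm_Gamma_one_add_mul_I_sq ht0)
    have hpos := sub_pos.2 hx
    rw [Real.log_pow, hquot, Real.log_mul (by positivity) (by positivity),
      Real.log_mul (by positivity) (by positivity), Real.log_mul (by positivity) ht0.ne',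
      Real.log_inv, Real.log_inv, Real.log_exp] at hsq
    rw [stirlingTerm]
    push_cast at hsq ⊢
    linarith
  have hsmall := abs_le.1 (abs_log_one_sub_exp_neg_le ht)
  rw [abs_le]
  constructor <;> linarith [hsmall.1, hsmall.2]

lemma abs_log_norm_add_mul_I_sub_log_le (x : ℝ) {t : ℝ} (ht : 1 ≤ t) :
    |Real.log ‖(x : ℂ) + t * I‖ - Real.log t| ≤ x ^ 2 / t := by
  have : 0 < t := by linarith
  have hsq : ‖(x : ℂ) + t * I‖ ^ 2 = t ^ 2 * (1 + x ^ 2 / t ^ 2) := by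
    rw [← normSq_eq_norm_sq, normSq_add_mul_I]
    field_simp
    ring
  have hlog := congrArg Real.log hsq
  have hq : 0 ≤ x ^ 2 / t ^ 2 := by positivity
  have hpos : 0 < 1 + x ^ 2 / t ^ 2 := by linarith
  rw [Real.log_pow, Real.log_mul (by positivity) hpos.ne', Real.log_pow] at hlog
  push_cast at hlog
  have hlower : 0 ≤ Real.log (1 + x ^ 2 / t ^ 2) := Real.log_nonneg (by linarith)
  have hupper := Real.log_le_sub_one_of_pos hpos
  have hdiv : x ^ 2 / t ^ 2 ≤ x ^ 2 / t := by
    gcongr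
    nlinarith
  rw [abs_le]
  constructor <;> linarith

lemma exists_abs_log_norm_Gamma_sub_le (n : ℕ) : ∃ C : ℝ, 0 ≤ C ∧ ∀ t : ℝ, 1 ≤ t →
    |Real.log ‖Gamma (n + 1 + t * I)‖ - stirlingTerm n t| ≤ C / t := by
  induction n with
  | zero =>
    refine ⟨1, zero_le_one, fun t ht ↦ ?_⟩
    simpa only [Nat.cast_zero, zero_add] using abs_log_norm_Gamma_one_add_mul_I_sub_le ht
  | succ n ih =>
    obtain ⟨C, hC0, hC⟩ := ih
    refine ⟨C + (n + 1) ^ 2, by positivity, fun t ht ↦ ?_⟩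
    have hne : (n : ℂ) + 1 + t * I ≠ 0 := fun h ↦ by
      have him := congrArg im h
      simp at him
      linarith
    have hΓ : Gamma (n + 1 + t * I) ≠ 0 := Gamma_ne_zero_of_re_pos (by
      simp only [add_re, natCast_re, one_re, mul_re, ofReal_re, I_re, mul_zero, ofReal_im, I_im,
        mul_one, sub_self, add_zero]
      positivity)
    have hrec : Real.log ‖Gamma ((n + 1 : ℕ) + 1 + t * I)‖ =
        Real.log ‖((n + 1 : ℝ) : ℂ) + t * I‖ + Real.log ‖Gamma (n + 1 + t * I)‖ := by
      rw [show ((n + 1 : ℕ) : ℂ) + 1 + t * I = (n + 1 + t * I) + 1 by push_cast; ring,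
        Gamma_add_one _ hne, norm_mul,
        Real.log_mul (norm_ne_zero_iff.2 hne) (norm_ne_zero_iff.2 hΓ)]
      push_cast
      rfl
    have hmain : stirlingTerm (n + 1) t = Real.log t + stirlingTerm n t := by
      rw [stirlingTerm, stirlingTerm]
      push_cast
      ring
    rw [hrec, hmain, add_sub_add_comm, add_comm C, add_div]
    exact (abs_add_le _ _).trans
      (add_le_add (abs_log_norm_add_mul_I_sub_log_le (n + 1) ht) (hC t ht))

lemma exists_norm_Gamma_mul_exp_le (n : ℕ) : ∃ C : ℝ, 0 ≤ C ∧ ∀ t : ℝ, 1 ≤ |t| →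
    ‖Gamma (n + 1 + t * I)‖ * Real.exp (π * |t| / 2) ≤ C * |t| ^ (n + 1) := by
  obtain ⟨C, hC0, hC⟩ := exists_abs_log_norm_Gamma_sub_le n
  refine ⟨Real.exp (C + 1 / 2 * Real.log (2 * π)), by positivity, fun t ht ↦ ?_⟩
  have : 0 < |t| := by linarith
  have habs : ‖Gamma (n + 1 + t * I)‖ = ‖Gamma (n + 1 + |t| * I)‖ := by
    rcases abs_choice t with h | h <;> rw [h]
    simpa using (norm_Gamma_add_neg_mul_I (n + 1) t).symm
  have hΓ : 0 < ‖Gamma (n + 1 + |t| * I)‖ :=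
    norm_pos_iff.2 (Gamma_ne_zero_of_re_pos (by
      simp only [add_re, natCast_re, one_re, mul_re, ofReal_re, I_re, mul_zero, ofReal_im, I_im,
        mul_one, sub_self, add_zero]
      positivity))
  have hStirling := (abs_le.1 (hC |t| ht)).2
  have herr : C / |t| ≤ C := div_le_self hC0 ht
  have hlog : 0 ≤ Real.log |t| := Real.log_nonneg ht
  have hpow : |t| ^ (n + 1) = Real.exp ((n + 1) * Real.log |t|) := by
    rw [← Nat.cast_add_one, ← Real.log_pow, Real.exp_log (by positivity)]
  rw [habs, ← Real.exp_log hΓ, ← Real.exp_add, hpow, ← Real.exp_add, Real.exp_le_exp]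
  rw [stirlingTerm] at hStirling
  linarith

lemma norm_Gammaℂ (w : ℂ) : ‖Gammaℂ w‖ = 2 * (2 * π) ^ (-w.re) * ‖Gamma w‖ := by
  rw [Gammaℂ_def, norm_mul, norm_mul, show (2 * π : ℂ) = ((2 * π : ℝ) : ℂ) by push_cast; ring,
    norm_cpow_eq_rpow_re_of_pos (by positivity), neg_re, norm_ofNat]

end Gamma

section Bounds

variable (p : ℝ) {q : ℝ}

lemma norm_negSeries_term_le (hq : q ≤ 1) (R : ℝ) (m : ℕ) {w : ℂ} (hw : 2 ≤ w.re)
    (hwR : w.re ≤ R) :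
    ‖phase p (-((m : ℤ) + 1)) / ((m : ℂ) + (1 - q : ℝ)) ^ w‖ ≤
      1 / |(m : ℝ) + (1 - q)| ^ (2 : ℝ) + 1 / |(m : ℝ) + (1 - q)| ^ R := by
  rw [norm_div, norm_phase, show (m : ℂ) + (1 - q : ℝ) = ((m + (1 - q) : ℝ) : ℂ) by push_cast; ring]
  have hbase : (0 : ℝ) ≤ m + (1 - q) := add_nonneg m.cast_nonneg (sub_nonneg.2 hq)
  rcases hbase.eq_or_lt with hzero | hpos
  · have hw0 : w ≠ 0 := by
      rintro rfl
      rw [zero_re] at hw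
      linarith
    rw [← hzero, ofReal_zero, zero_cpow hw0, norm_zero, div_zero]
    positivity
  · rw [norm_cpow_eq_rpow_re_of_pos hpos, abs_of_pos hpos]
    simp only [one_div, ← Real.rpow_neg hpos.le]
    have h2 : 0 < (m + (1 - q)) ^ (-(2 : ℝ)) := by positivity
    have hR : 0 < (m + (1 - q)) ^ (-R) := by positivity
    rcases le_total 1 (m + (1 - q)) with hge | hle
    · linarith [Real.rpow_le_rpow_of_exponent_le hge (neg_le_neg hw)]
    · linarith [Real.rpow_le_rpow_of_exponent_ge hpos hle (neg_le_neg hwR)]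

lemma exists_norm_negSeries_le (hq : q ≤ 1) {R : ℝ} (hR : 1 < R) :
    ∃ C : ℝ, 0 ≤ C ∧ ∀ w : ℂ, 2 ≤ w.re → w.re ≤ R → ‖negSeries p q w‖ ≤ C := by
  have hsum := ((Real.summable_one_div_nat_add_rpow (1 - q) 2).2 one_lt_two).add
    ((Real.summable_one_div_nat_add_rpow (1 - q) R).2 hR)
  refine ⟨∑' m : ℕ, (1 / |m + (1 - q)| ^ (2 : ℝ) + 1 / |m + (1 - q)| ^ R),
    tsum_nonneg fun m ↦ by positivity, fun w hw hwR ↦ ?_⟩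
  rw [negSeries_eq_tsum]
  exact tsum_of_norm_bounded hsum.hasSum fun m ↦ norm_negSeries_term_le p hq R m hw hwR

variable {μ : ℝ} (hμ : μ ∈ Ioc (0 : ℝ) 1) {s : ℂ} (hs : 2 ≤ s.re)

include hμ hs

lemma one_third_le_norm_normalizedSeries : 1 / 3 ≤ ‖normalizedSeries p μ s‖ := by
  have hclose := norm_normalizedSeries_sub_one_le_two_thirds (p := p) hμ hs
  have htri := norm_sub_norm_le (1 : ℂ) (1 - normalizedSeries p μ s)
  rw [norm_sub_rev] at hclose
  rw [sub_sub_cancel, norm_one] at htri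
  linarith

lemma norm_normalizedSeries_le_two : ‖normalizedSeries p μ s‖ ≤ 2 := by
  have hclose := norm_normalizedSeries_sub_one_le_two_thirds (p := p) hμ hs
  have htri := norm_add_le (1 : ℂ) (normalizedSeries p μ s - 1)
  rw [add_sub_cancel, norm_one] at htri
  linarith

lemma norm_lerchSeries_le : ‖lerchSeries p μ s‖ ≤ 2 * μ ^ (-s.re) := by
  rw [lerchSeries_eq_cpow_mul hμ (by linarith), norm_mul, norm_cpow_eq_rpow_re_of_pos hμ.1,
    neg_re, mul_comm]
  have := hμ.1
  gcongr
  exact norm_normalizedSeries_le_two p hμ hs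

lemma one_third_le_norm_lerchSeries : 1 / 3 ≤ ‖lerchSeries p μ s‖ := by
  rw [lerchSeries_eq_cpow_mul hμ (by linarith), norm_mul, norm_cpow_eq_rpow_re_of_pos hμ.1]
  have hpow : 1 ≤ μ ^ (-s).re :=
    Real.one_le_rpow_of_pos_of_le_one_of_nonpos hμ.1 hμ.2 (by rw [neg_re]; linarith)
  nlinarith [one_third_le_norm_normalizedSeries p hμ hs]

end Bounds

lemma norm_exp_pi_mul_div_two_mul_I (w : ℂ) :
    ‖cexp (π * w / 2 * I)‖ = Real.exp (-(π * w.im / 2)) := by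
  rw [norm_exp]
  congr 1
  simp

lemma norm_exp_neg_pi_mul_div_two_mul_I (w : ℂ) :
    ‖cexp (-(π * w / 2) * I)‖ = Real.exp (π * w.im / 2) := by
  rw [norm_exp]
  congr 1
  simp

lemma norm_exp_neg_two_pi_I_mul (l a : ℝ) : ‖cexp (-(2 * π * I * l * a))‖ = 1 := by
  rw [show -(2 * π * I * l * a) = ((-(2 * π * l * a) : ℝ) : ℂ) * I by push_cast; ring,
    norm_exp_ofReal_mul_I]

/-- `F` divided by the first term `a ^ (-s)` of its Dirichlet series. -/
noncomputable def normalizedLerch (a : ℝ) (F : ℂ → ℂ) (s : ℂ) : ℂ := (a : ℂ) ^ s * F s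

/-- The explicit part of `log ‖normalizedLerch a F (-n + it)‖` as `t → ∞`. -/
noncomputable def leftLogTerm (l a : ℝ) (n : ℕ) (t : ℝ) : ℝ :=
  (n + 1 / 2) * Real.log (t / (2 * π)) - n * Real.log a - (n + 1) * Real.log l

lemma one_add_ne_zero_of_norm_lt_one {η : ℂ} (hη : ‖η‖ < 1) : 1 + η ≠ 0 := fun h ↦ by
  rw [eq_neg_of_add_eq_zero_right h, norm_neg, norm_one] at hη
  exact hη.false

lemma log_norm_normalizedLerch_one_sub {l a : ℝ} (hl : l ∈ Ioc (0 : ℝ) 1) (ha : 0 < a) {F : ℂ → ℂ}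
    {w η : ℂ} (hw : 2 ≤ w.re) (hη : 1 + η ≠ 0)
    (hF : F (1 - w) = (1 / 2) * cexp (-(2 * π * I * l * a)) * Gammaℂ w *
      (cexp (π * w / 2 * I) * lerchSeries (-a) l w) * (1 + η)) :
    Real.log ‖normalizedLerch a F (1 - w)‖ = (1 - w.re) * Real.log a - w.re * Real.log (2 * π) +
      Real.log ‖Gamma w‖ - π * w.im / 2 - w.re * Real.log l +
        Real.log ‖normalizedSeries (-a) l w‖ + Real.log ‖1 + η‖ := by
  have hl0 := hl.1
  have hΓ : 0 < ‖Gamma w‖ := norm_pos_iff.2 (Gamma_ne_zero_of_re_pos (by linarith))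
  have hD : 0 < ‖normalizedSeries (-a) l w‖ := by
    linarith [one_third_le_norm_normalizedSeries (-a) hl hw]
  have : 0 < ‖1 + η‖ := norm_pos_iff.2 hη
  have hnorm : ‖normalizedLerch a F (1 - w)‖ = a ^ (1 - w.re) * ((2 * π) ^ (-w.re) * ‖Gamma w‖ *
      Real.exp (-(π * w.im / 2)) * (l ^ (-w.re) * ‖normalizedSeries (-a) l w‖) * ‖1 + η‖) := by
    rw [normalizedLerch, hF, lerchSeries_eq_cpow_mul hl (by linarith)]
    simp only [norm_mul]
    rw [norm_exp_neg_two_pi_I_mul, norm_Gammaℂ, norm_exp_pi_mul_div_two_mul_I,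
      norm_cpow_eq_rpow_re_of_pos ha, norm_cpow_eq_rpow_re_of_pos hl0, neg_re, sub_re, one_re,
      norm_div, norm_one, norm_ofNat]
    ring
  rw [hnorm, Real.log_mul (by positivity) (by positivity),
    Real.log_mul (by positivity) (by positivity), Real.log_mul (by positivity) (by positivity),
    Real.log_mul (by positivity) (by positivity), Real.log_mul (by positivity) (by positivity),
    Real.log_mul (by positivity) (by positivity), Real.log_rpow ha, Real.log_rpow hl0,
    Real.log_rpow (by positivity), Real.log_exp]
  ring

end LerchZeta

namespace IsLerch

open Complex Filter Topology Set LerchZeta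
open scoped Real

variable {l a : ℝ} {F : ℂ → ℂ} (hF : IsLerch l a F) (hl : l ∈ Ioc (0 : ℝ) 1)
  (ha : a ∈ Ioc (0 : ℝ) 1)

include hF hl ha

lemma exists_one_sub_eq_mul_one_add {R : ℝ} (hR : 1 < R) :
    ∃ C t₁ : ℝ, 0 ≤ C ∧ 1 ≤ t₁ ∧ ∀ w : ℂ, 2 ≤ w.re → w.re ≤ R → t₁ ≤ -w.im →
      ∃ η : ℂ, ‖η‖ ≤ 1 / 2 ∧ ‖η‖ ≤ C / -w.im ∧
        F (1 - w) = (1 / 2) * cexp (-(2 * π * I * l * a)) * Gammaℂ w *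
          (cexp (π * w / 2 * I) * lerchSeries (-a) l w) * (1 + η) := by
  obtain ⟨C, hC0, hC⟩ := exists_norm_negSeries_le (-a) hl.2 hR
  refine ⟨3 * C, max 1 (6 * C), by positivity, le_max_left _ _, fun w hw hwR him ↦ ?_⟩
  have ht1 : 1 ≤ -w.im := (le_max_left _ _).trans him
  have ht6 : 6 * C ≤ -w.im := (le_max_right _ _).trans him
  have hL := one_third_le_norm_lerchSeries (-a) hl hw
  have hL0 : lerchSeries (-a) l w ≠ 0 := norm_pos_iff.1 (by linarith)
  set η : ℂ := cexp (-(π * w / 2) * I) * negSeries (-a) l w /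
    (cexp (π * w / 2 * I) * lerchSeries (-a) l w) with hη
  have hexp : Real.exp (π * w.im / 2 - -(π * w.im / 2)) ≤ 1 / -w.im := by
    rw [show π * w.im / 2 - -(π * w.im / 2) = -(π * -w.im) by ring, Real.exp_neg, inv_eq_one_div]
    refine one_div_le_one_div_of_le (by linarith) ?_
    nlinarith [Real.pi_gt_three, Real.add_one_le_exp (π * -w.im)]
  have hratio : ‖negSeries (-a) l w‖ / ‖lerchSeries (-a) l w‖ ≤ 3 * C := by
    rw [div_le_iff₀ (by linarith)]
    nlinarith [hC w hw hwR]
  have hη_le : ‖η‖ ≤ 3 * C / -w.im := by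
    rw [hη, norm_div, norm_mul, norm_mul, norm_exp_pi_mul_div_two_mul_I,
      norm_exp_neg_pi_mul_div_two_mul_I, mul_div_mul_comm, ← Real.exp_sub]
    calc _ ≤ 1 / -w.im * (3 * C) := by gcongr
      _ = 3 * C / -w.im := by ring
  refine ⟨η, hη_le.trans ?_, hη_le, ?_⟩
  · rw [div_le_iff₀ (by linarith)]
    linarith
  · have := Complex.exp_ne_zero (π * w / 2 * I)
    rw [hF.one_sub hl ha (by linarith), hη]
    field_simp

lemma exists_ne_zero_of_re_le_neg_one {R : ℝ} (hR : 0 < R) :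
    ∃ t₁ : ℝ, 1 ≤ t₁ ∧ ∀ s : ℂ, -R ≤ s.re → s.re ≤ -1 → t₁ ≤ s.im → F s ≠ 0 := by
  obtain ⟨C, t₁, -, ht₁, hrep⟩ := hF.exists_one_sub_eq_mul_one_add hl ha (R := 1 + R) (by linarith)
  refine ⟨t₁, ht₁, fun s hsR hs him ↦ ?_⟩
  have hw : 2 ≤ (1 - s).re := by rw [sub_re, one_re]; linarith
  obtain ⟨η, hη, -, heq⟩ := hrep (1 - s) hw (by rw [sub_re, one_re]; linarith)
    (by rw [sub_im, one_im]; linarith)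
  have hη1 : 1 + η ≠ 0 := one_add_ne_zero_of_norm_lt_one (by linarith)
  have hΓ : Gammaℂ (1 - s) ≠ 0 := by
    have hpos := norm_pos_iff.2 (Gamma_ne_zero_of_re_pos (s := 1 - s) (by linarith))
    rw [← norm_pos_iff, norm_Gammaℂ]
    positivity
  have hL : lerchSeries (-a) l (1 - s) ≠ 0 :=
    norm_pos_iff.1 (by linarith [one_third_le_norm_lerchSeries (-a) hl hw])
  rw [sub_sub_cancel] at heq
  rw [heq]
  exact mul_ne_zero (mul_ne_zero (mul_ne_zero (mul_ne_zero (by norm_num) (Complex.exp_ne_zero _))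
    hΓ) (mul_ne_zero (Complex.exp_ne_zero _) hL)) hη1

lemma exists_abs_log_norm_left_sub_le {n : ℕ} (hn : 1 ≤ n) :
    ∃ C t₁ : ℝ, 0 ≤ C ∧ 1 ≤ t₁ ∧ ∀ t : ℝ, t₁ ≤ t →
      |Real.log ‖normalizedLerch a F (-(n : ℝ) + t * I)‖ - (leftLogTerm l a n t +
        Real.log ‖normalizedSeries (-a) l ((n + 1 : ℝ) + (-t : ℝ) * I)‖)| ≤ C / t := by
  have hn' : (1 : ℝ) ≤ n := by exact_mod_cast hn
  obtain ⟨C, t₁, hC0, ht₁, hrep⟩ :=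
    hF.exists_one_sub_eq_mul_one_add hl ha (R := n + 1) (by linarith)
  obtain ⟨C', hC'0, hΓ⟩ := exists_abs_log_norm_Gamma_sub_le n
  refine ⟨2 * C + C', t₁, by positivity, ht₁, fun t ht ↦ ?_⟩
  have ht0 : 0 < t := by linarith
  set w : ℂ := (n + 1 : ℝ) + (-t : ℝ) * I with hw
  have hwre : w.re = n + 1 := by simp [hw]
  have hwim : w.im = -t := by simp [hw]
  obtain ⟨η, hη, hηt, heq⟩ := hrep w (by linarith) (by rw [hwre]) (by rw [hwim]; linarith)
  rw [hwim, neg_neg] at hηt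
  have hη0 : 1 + η ≠ 0 := one_add_ne_zero_of_norm_lt_one (by linarith)
  have hlog := log_norm_normalizedLerch_one_sub hl ha.1 (by linarith) hη0 heq
  have hηlog : |Real.log ‖1 + η‖| ≤ 2 * (C / t) := by
    rw [← log_re]
    linarith [abs_re_le_norm (log (1 + η)), norm_log_one_add_le_two_mul (z := η) (by linarith)]
  have hΓw : ‖Gamma w‖ = ‖Gamma (n + 1 + t * I)‖ := by
    rw [hw, norm_Gamma_add_neg_mul_I]
    push_cast
    rfl
  have hΓlog := abs_le.1 (hΓ t (by linarith))
  rw [stirlingTerm, ← hΓw] at hΓlog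
  rw [show -((n : ℝ) : ℂ) + t * I = 1 - w by rw [hw]; push_cast; ring, hlog, hwre, hwim,
    leftLogTerm, Real.log_div (by positivity) (by positivity), add_div, mul_div_assoc 2 C t]
  rw [abs_le] at hηlog ⊢
  constructor <;> linarith [hηlog.1, hηlog.2, hΓlog.1, hΓlog.2]

end IsLerch

namespace LerchZeta

open Complex Filter Topology Asymptotics Set MeasureTheory
open scoped Real

section VerticalStrip

variable {x₁ x₂ : ℝ}

lemma exists_norm_mellin_le {f : ℝ → ℂ} (hf : ∀ s, MellinConvergent f s) (x₁ x₂ : ℝ) :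
    ∃ C : ℝ, 0 ≤ C ∧ ∀ s : ℂ, x₁ ≤ s.re → s.re ≤ x₂ → ‖mellin f s‖ ≤ C := by
  have hnorm (s : ℂ) {t : ℝ} (ht : 0 < t) :
      ‖(t : ℂ) ^ (s - 1) • f t‖ = t ^ (s.re - 1) * ‖f t‖ := by
    rw [norm_smul, norm_cpow_eq_rpow_re_of_pos ht, sub_re, one_re]
  refine ⟨∫ t in Ioi (0 : ℝ),
      (‖(t : ℂ) ^ ((x₁ : ℂ) - 1) • f t‖ + ‖(t : ℂ) ^ ((x₂ : ℂ) - 1) • f t‖),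
    integral_nonneg fun t ↦ by positivity, fun s hs₁ hs₂ ↦
      norm_integral_le_of_norm_le ((hf x₁).norm.add (hf x₂).norm) ?_⟩
  refine (ae_restrict_iff' measurableSet_Ioi).2 (Eventually.of_forall fun t (ht : 0 < t) ↦ ?_)
  rw [hnorm s ht, hnorm x₁ ht, hnorm x₂ ht, ← add_mul, ofReal_re, ofReal_re]
  gcongr
  have hpos₁ := Real.rpow_pos_of_pos ht (x₁ - 1)
  have hpos₂ := Real.rpow_pos_of_pos ht (x₂ - 1)
  rcases le_total 1 t with hge | hle
  · linarith [Real.rpow_le_rpow_of_exponent_le hge (sub_le_sub_right hs₂ 1)]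
  · linarith [Real.rpow_le_rpow_of_exponent_ge ht hle (sub_le_sub_right hs₁ 1)]

lemma norm_Gamma_le_Gamma_re {w : ℂ} (hw : 0 < w.re) : ‖Gamma w‖ ≤ Real.Gamma w.re := by
  rw [Gamma_eq_integral hw, Real.Gamma_eq_integral hw, GammaIntegral]
  refine norm_integral_le_of_norm_le (Real.GammaIntegral_convergent hw) ?_
  refine (ae_restrict_iff' measurableSet_Ioi).2 (Eventually.of_forall fun t (ht : 0 < t) ↦ ?_)
  rw [norm_mul, norm_cpow_eq_rpow_re_of_pos ht, norm_real, Real.norm_eq_abs, Real.abs_exp,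
    sub_re, one_re]

lemma norm_sin_le_exp_abs_im (z : ℂ) : ‖sin z‖ ≤ Real.exp |z.im| := by
  have hneg : ‖cexp (-z * I)‖ ≤ Real.exp |z.im| := by
    simpa [Complex.norm_exp] using le_abs_self z.im
  have hpos : ‖cexp (z * I)‖ ≤ Real.exp |z.im| := by
    simpa [Complex.norm_exp] using neg_le_abs z.im
  rw [sin, norm_div, norm_mul, norm_I, mul_one, norm_ofNat]
  linarith [norm_sub_le (cexp (-z * I)) (cexp (z * I))]

lemma inv_Gamma_eq_mul_sin_div {z : ℂ} (hz : z.re ≤ 0) :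
    (Gamma z)⁻¹ = Gamma (1 - z) * sin (π * z) / π := by
  have hΓ : Gamma (1 - z) ≠ 0 :=
    Gamma_ne_zero_of_re_pos (by rw [sub_re, one_re]; linarith)
  have hrefl := congrArg Inv.inv (Gamma_mul_Gamma_one_sub z)
  rw [inv_div, mul_inv] at hrefl
  rw [mul_div_assoc, ← hrefl]
  field_simp

lemma exists_norm_inv_Gamma_le_of_re_nonpos (x₁ : ℝ) : ∃ C : ℝ, 0 ≤ C ∧
    ∀ z : ℂ, x₁ ≤ z.re → z.re ≤ 0 → ‖(Gamma z)⁻¹‖ ≤ C * Real.exp (π * |z.im|) := by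
  have hcont : ContinuousOn Real.Gamma (Icc 1 (1 - x₁)) := fun x hx ↦
    (Real.differentiableAt_Gamma fun m h ↦ by
      linarith [hx.1, (m.cast_nonneg : (0 : ℝ) ≤ m)]).continuousAt.continuousWithinAt
  obtain ⟨C, hC⟩ := isCompact_Icc.exists_bound_of_continuousOn hcont
  refine ⟨|C|, abs_nonneg _, fun z hz₁ hz₀ ↦ ?_⟩
  have hre : (1 - z).re = 1 - z.re := by rw [sub_re, one_re]
  have hΓ : ‖Gamma (1 - z)‖ ≤ |C| := by
    refine (norm_Gamma_le_Gamma_re (by linarith)).trans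
      ((le_abs_self _).trans ((hC _ ?_).trans (le_abs_self _)))
    rw [hre]
    constructor <;> linarith
  have hsin := norm_sin_le_exp_abs_im (π * z)
  rw [im_ofReal_mul, abs_mul, abs_of_pos Real.pi_pos] at hsin
  rw [inv_Gamma_eq_mul_sin_div hz₀, norm_div, norm_mul, norm_real, Real.norm_eq_abs,
    abs_of_pos Real.pi_pos]
  refine (div_le_self (by positivity) (by linarith [Real.pi_gt_three])).trans ?_
  gcongr

lemma exists_norm_inv_Gamma_le (x₁ : ℝ) (k : ℕ) : ∃ C : ℝ, 0 ≤ C ∧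
    ∀ z : ℂ, x₁ ≤ z.re → z.re ≤ k → 1 ≤ |z.im| →
      ‖(Gamma z)⁻¹‖ ≤ C * Real.exp (π * |z.im|) := by
  induction k generalizing x₁ with
  | zero =>
    obtain ⟨C, hC0, hC⟩ := exists_norm_inv_Gamma_le_of_re_nonpos x₁
    exact ⟨C, hC0, fun z hz₁ hz₀ _ ↦ hC z hz₁ (by simpa using hz₀)⟩
  | succ k ih =>
    obtain ⟨C, hC0, hC⟩ := ih (x₁ - 1)
    refine ⟨C, hC0, fun z hz₁ hzk him ↦ ?_⟩
    push_cast at hzk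
    have hre : (z - 1).re = z.re - 1 := by rw [sub_re, one_re]
    have him_eq : (z - 1).im = z.im := by rw [sub_im, one_im, sub_zero]
    have hnorm : 1 ≤ ‖z - 1‖ := him.trans (him_eq ▸ abs_im_le_norm (z - 1))
    have hbound := hC (z - 1) (by linarith) (by linarith) (by rwa [him_eq])
    rw [him_eq] at hbound
    have hrec := Gamma_add_one (z - 1) (norm_pos_iff.1 (by linarith))
    rw [sub_add_cancel] at hrec
    rw [hrec, mul_inv, norm_mul, norm_inv (z - 1)]
    exact (mul_le_of_le_one_left (norm_nonneg _) (inv_le_one_of_one_le₀ hnorm)).trans hbound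

lemma exists_norm_inv_Gammaℝ_le (x₁ x₂ : ℝ) : ∃ C : ℝ, 0 ≤ C ∧
    ∀ z : ℂ, x₁ ≤ z.re → z.re ≤ x₂ → 2 ≤ |z.im| →
      ‖(Gammaℝ z)⁻¹‖ ≤ C * Real.exp (π * |z.im|) := by
  obtain ⟨k, hk⟩ := exists_nat_ge (x₂ / 2)
  obtain ⟨C, hC0, hC⟩ := exists_norm_inv_Gamma_le (x₁ / 2) k
  refine ⟨π ^ (x₂ / 2) * C, by positivity, fun z hz₁ hz₂ him ↦ ?_⟩
  have hre : (z / 2).re = z.re / 2 := div_ofNat_re z 2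
  have him_eq : |(z / 2).im| = |z.im| / 2 := by rw [div_ofNat_im, abs_div, abs_two]
  have hΓ := hC (z / 2) (by linarith) (by linarith) (by linarith)
  rw [him_eq] at hΓ
  have hexp : Real.exp (π * (|z.im| / 2)) ≤ Real.exp (π * |z.im|) :=
    Real.exp_le_exp.2 (by nlinarith [Real.pi_pos])
  rw [Gammaℝ_def, mul_inv, norm_mul, ← cpow_neg, norm_cpow_eq_rpow_re_of_pos Real.pi_pos,
    neg_div, neg_neg, hre]
  calc _ ≤ π ^ (x₂ / 2) * (C * Real.exp (π * |z.im|)) := by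
        gcongr
        · linarith [Real.pi_gt_three]
        · exact hΓ.trans (by gcongr)
    _ = _ := by ring

lemma exists_norm_le_of_re_eq {f : ℂ → ℂ} {x C : ℝ}
    (hf : ∀ s : ℂ, s.re = x → DifferentiableAt ℂ f s)
    (hC : ∀ s : ℂ, s.re = x → 1 ≤ |s.im| → ‖f s‖ ≤ C) :
    ∃ C', ∀ s : ℂ, s.re = x → ‖f s‖ ≤ C' := by
  have hcont : ContinuousOn (fun t : ℝ ↦ f (x + t * I)) (Icc (-1) 1) := fun t _ ↦
    (ContinuousAt.comp (f := fun t : ℝ ↦ (x + t * I : ℂ)) (hf _ (by simp)).continuousAt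
      (by fun_prop)).continuousWithinAt
  obtain ⟨K, hK⟩ := isCompact_Icc.exists_bound_of_continuousOn hcont
  refine ⟨max C K, fun s hs ↦ ?_⟩
  rcases le_total 1 |s.im| with him | him
  · exact (hC s hs him).trans (le_max_left _ _)
  · have hbound := hK s.im (abs_le.1 him)
    rw [← hs, re_add_im] at hbound
    exact hbound.trans (le_max_right _ _)

lemma exists_norm_le_of_vertical_strip {f : ℂ → ℂ} {A B C : ℝ} (hx : x₁ < x₂)
    (hf : ∀ s : ℂ, x₁ ≤ s.re → s.re ≤ x₂ → DifferentiableAt ℂ f s)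
    (hleft : ∀ s : ℂ, s.re = x₁ → 1 ≤ |s.im| → ‖f s‖ ≤ C)
    (hright : ∀ s : ℂ, s.re = x₂ → 1 ≤ |s.im| → ‖f s‖ ≤ C)
    (hB : 0 ≤ B) (hexp : ∀ s : ℂ, x₁ ≤ s.re → s.re ≤ x₂ → 2 ≤ |s.im| →
      ‖f s‖ ≤ A * Real.exp (B * |s.im|)) :
    ∃ C' : ℝ, 0 ≤ C' ∧ ∀ s : ℂ, x₁ ≤ s.re → s.re ≤ x₂ → ‖f s‖ ≤ C' := by
  obtain ⟨C₁, hC₁⟩ := exists_norm_le_of_re_eq (fun s hs ↦ hf s hs.ge (by linarith)) hleft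
  obtain ⟨C₂, hC₂⟩ := exists_norm_le_of_re_eq (fun s hs ↦ hf s (by linarith) hs.le) hright
  have hw : 0 < x₂ - x₁ := sub_pos.2 hx
  refine ⟨max 0 (max C₁ C₂), le_max_left _ _, fun s hs₁ hs₂ ↦
    PhragmenLindelof.vertical_strip (a := x₁) (b := x₂) ?_
      ⟨1 / (x₂ - x₁), by gcongr; linarith [Real.pi_gt_three], B * (x₂ - x₁), ?_⟩
      (fun z hz ↦ (hC₁ z hz).trans ((le_max_left _ _).trans (le_max_right _ _)))
      (fun z hz ↦ (hC₂ z hz).trans ((le_max_right _ _).trans (le_max_right _ _))) hs₁ hs₂⟩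
  · refine DifferentiableOn.diffContOnCl fun s hs ↦ ?_
    have hclosure : closure (re ⁻¹' Ioo x₁ x₂) ⊆ re ⁻¹' Icc x₁ x₂ :=
      closure_minimal (preimage_mono Ioo_subset_Icc_self) (isClosed_Icc.preimage continuous_re)
    exact (hf s (hclosure hs).1 (hclosure hs).2).differentiableWithinAt
  · refine IsBigO.of_bound |A| ?_
    have hfar : ∀ᶠ s : ℂ in comap (_root_.abs ∘ im) atTop, 2 ≤ |s.im| :=
      (eventually_ge_atTop (2 : ℝ)).comap (_root_.abs ∘ im)
    rw [eventually_inf_principal]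
    filter_upwards [hfar] with s him hs
    rw [Real.norm_eq_abs, Real.abs_exp]
    refine (hexp s hs.1.le hs.2.le him).trans (mul_le_mul (le_abs_self A) ?_ (Real.exp_pos _).le
      (abs_nonneg A))
    have hlin : |s.im| ≤ (x₂ - x₁) * Real.exp (1 / (x₂ - x₁) * |s.im|) := by
      have h1 := Real.add_one_le_exp (1 / (x₂ - x₁) * |s.im|)
      calc |s.im| = (x₂ - x₁) * (1 / (x₂ - x₁) * |s.im|) := by field_simp
        _ ≤ _ := by gcongr; linarith
    rw [Real.exp_le_exp, mul_assoc]
    gcongr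

end VerticalStrip

section Entire

variable {l a : ℝ} (hl : l ∈ Ioc (0 : ℝ) 1) (ha : a ∈ Ioc (0 : ℝ) 1)

lemma exists_norm_lerchZeta_le_exp (x₁ x₂ : ℝ) : ∃ C : ℝ, 0 ≤ C ∧
    ∀ s : ℂ, x₁ ≤ s.re → s.re ≤ x₂ → 2 ≤ |s.im| →
      ‖lerchZeta hl ha s‖ ≤ C * Real.exp (π * |s.im|) := by
  set P := evenPair hl ha
  obtain ⟨C₁, hC₁0, hC₁⟩ := exists_norm_mellin_le
    (fun s ↦ (P.isStrongFEPair_toStrongFEPair.hasMellin s).1) (x₁ / 2) (x₂ / 2)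
  obtain ⟨C₂, hC₂0, hC₂⟩ := exists_norm_mellin_le
    (fun s ↦ ((isStrongFEPair_oddPair l a).hasMellin s).1) ((x₁ + 1) / 2) ((x₂ + 1) / 2)
  obtain ⟨C₃, hC₃0, hC₃⟩ := exists_norm_inv_Gammaℝ_le x₁ x₂
  obtain ⟨C₄, hC₄0, hC₄⟩ := exists_norm_inv_Gammaℝ_le (x₁ + 1) (x₂ + 1)
  refine ⟨1 / 2 * ((C₁ + ‖P.f₀‖ + ‖P.ε‖ * ‖P.g₀‖) * C₃ + C₂ * C₄), by positivity,
    fun s hs₁ hs₂ him ↦ ?_⟩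
  have hre : (s / 2).re = s.re / 2 := div_ofNat_re s 2
  have hre' : ((s + 1) / 2).re = (s.re + 1) / 2 := by rw [div_ofNat_re, add_re, one_re]
  have him_half : 1 ≤ |(s / 2).im| := by rw [div_ofNat_im, abs_div, abs_two]; linarith
  have hnorm_half : 1 ≤ ‖s / 2‖ := him_half.trans (abs_im_le_norm _)
  have hnorm_sub : 1 ≤ ‖(P.k : ℂ) - s / 2‖ := by
    refine him_half.trans ((abs_im_le_norm ((P.k : ℂ) - s / 2)).trans' ?_)
    rw [sub_im, ofReal_im, zero_sub, abs_neg]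
  have heven : ‖P.Λ (s / 2)‖ ≤ C₁ + ‖P.f₀‖ + ‖P.ε‖ * ‖P.g₀‖ := by
    have hΛ₀ := hC₁ (s / 2) (by linarith) (by linarith)
    rw [WeakFEPair.Λ]
    refine (norm_sub_le _ _).trans (add_le_add ((norm_sub_le _ _).trans (add_le_add hΛ₀ ?_)) ?_)
    · rw [norm_smul, norm_div, norm_one]
      exact mul_le_of_le_one_left (norm_nonneg _) ((div_le_one (by linarith)).2 hnorm_half)
    · rw [norm_smul, norm_div]
      gcongr
      exact div_le_self (norm_nonneg _) hnorm_sub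
  have hodd : ‖(oddPair l a).Λ ((s + 1) / 2)‖ ≤ C₂ := by
    rw [(isStrongFEPair_oddPair l a).Λ_eq]
    exact hC₂ _ (by linarith) (by linarith)
  have hΓ := hC₃ s hs₁ hs₂ him
  have hΓ' := hC₄ (s + 1) (by simpa using hs₁) (by simpa using hs₂) (by simpa using him)
  rw [add_im, one_im, add_zero] at hΓ'
  rw [lerchZeta, norm_mul, norm_div, norm_one, norm_ofNat]
  calc _ ≤ 1 / 2 * ((C₁ + ‖P.f₀‖ + ‖P.ε‖ * ‖P.g₀‖) * (C₃ * Real.exp (π * |s.im|)) +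
        C₂ * (C₄ * Real.exp (π * |s.im|))) := by
        gcongr
        refine (norm_add_le _ _).trans ?_
        rw [norm_mul, norm_mul _ ((Gammaℝ (s + 1))⁻¹)]
        gcongr
    _ = _ := by ring

/-- The entire function `s (s - 1) L(l, a, s)`. -/
noncomputable def entireLerch (s : ℂ) : ℂ :=
  (1 / 2) * ((s * (s - 1) * (evenPair hl ha).Λ₀ (s / 2) - 2 * (s - 1) * evenThetaLimit l a +
      2 * cexp (-(2 * π * I * l * a)) * s * evenThetaLimit (-a) l) * (Gammaℝ s)⁻¹ +
    s * (s - 1) * (oddPair l a).Λ ((s + 1) / 2) * (Gammaℝ (s + 1))⁻¹)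

lemma entireLerch_eq {s : ℂ} (h0 : s ≠ 0) (h1 : s ≠ 1) :
    entireLerch hl ha s = s * (s - 1) * lerchZeta hl ha s := by
  have h1' : 1 - s ≠ 0 := sub_ne_zero.2 h1.symm
  have : (1 / 2 - s / 2 : ℂ) ≠ 0 := fun h ↦ h1' (by linear_combination 2 * h)
  have heven : s * (s - 1) * (evenPair hl ha).Λ (s / 2) =
      s * (s - 1) * (evenPair hl ha).Λ₀ (s / 2) - 2 * (s - 1) * evenThetaLimit l a +
        2 * cexp (-(2 * π * I * l * a)) * s * evenThetaLimit (-a) l := by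
    rw [WeakFEPair.Λ]
    simp only [evenPair_k, evenPair_f₀, evenPair_g₀, evenPair_ε, smul_eq_mul]
    push_cast
    field_simp
    ring
  rw [entireLerch, ← heven, lerchZeta]
  ring

lemma differentiable_entireLerch : Differentiable ℂ (entireLerch hl ha) := by
  have heven : Differentiable ℂ fun s ↦ (evenPair hl ha).Λ₀ (s / 2) :=
    (evenPair hl ha).differentiable_Λ₀.comp (by fun_prop)
  have hodd : Differentiable ℂ fun s ↦ (oddPair l a).Λ ((s + 1) / 2) :=
    (isStrongFEPair_oddPair l a).differentiable_Λ.comp (by fun_prop)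
  have := differentiable_Gammaℝ_inv
  have hΓ' : Differentiable ℂ fun s : ℂ ↦ (Gammaℝ (s + 1))⁻¹ :=
    differentiable_Gammaℝ_inv.comp (g := fun s : ℂ ↦ (Gammaℝ s)⁻¹) (by fun_prop)
  unfold entireLerch
  fun_prop

lemma one_le_norm_add_natCast_add_one {n : ℕ} {s : ℂ} (hs : -(n : ℝ) ≤ s.re) :
    1 ≤ ‖s + (n + 1)‖ := by
  refine le_trans ?_ (re_le_norm (s + (n + 1)))
  simp only [add_re, natCast_re, one_re]
  linarith

end Entire

end LerchZeta

namespace IsLerch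

open Complex Filter Topology Set LerchZeta
open scoped Real

section Growth

variable {l a : ℝ} {F : ℂ → ℂ} (hF : IsLerch l a F) (hl : l ∈ Ioc (0 : ℝ) 1)
  (ha : a ∈ Ioc (0 : ℝ) 1)

include hF hl ha

lemma entireLerch_eq {s : ℂ} (h0 : s ≠ 0) (h1 : s ≠ 1) :
    entireLerch hl ha s = s * (s - 1) * F s := by
  rw [LerchZeta.entireLerch_eq hl ha h0 h1, hF.eq_lerchZeta hl ha h0 h1]

lemma exists_norm_le_of_re_eq_neg {n : ℕ} (hn : 1 ≤ n) : ∃ C : ℝ, 0 ≤ C ∧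
    ∀ s : ℂ, s.re = -n → 1 ≤ |s.im| → ‖F s‖ ≤ C * |s.im| ^ (n + 1) := by
  have hn' : (1 : ℝ) ≤ n := by exact_mod_cast hn
  have hl0 := hl.1
  obtain ⟨C₁, hC₁0, hΓ⟩ := exists_norm_Gamma_mul_exp_le n
  obtain ⟨C₂, hC₂0, hneg⟩ := exists_norm_negSeries_le (-a) hl.2 (R := n + 1) (by linarith)
  refine ⟨(2 * π) ^ (-(n + 1 : ℝ)) * (2 * l ^ (-(n + 1 : ℝ)) + C₂) * C₁, by positivity,
    fun s hs him ↦ ?_⟩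
  set w := 1 - s with hw
  have hwre : w.re = n + 1 := by rw [hw, sub_re, one_re, hs]; ring
  have hwim : w.im = -s.im := by rw [hw, sub_im, one_im, zero_sub]
  have hwΓ := hΓ (-s.im) (by rwa [abs_neg])
  have hw_eq : (n : ℂ) + 1 + (-s.im : ℝ) * I = w := by
    apply Complex.ext <;> simp [hwre, hwim]
  rw [hw_eq, abs_neg] at hwΓ
  have hser := norm_lerchSeries_le (-a) hl (s := w) (by linarith)
  rw [hwre] at hser
  have hbracket : ‖cexp (π * w / 2 * I) * lerchSeries (-a) l w +
      cexp (-(π * w / 2) * I) * negSeries (-a) l w‖ ≤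
      Real.exp (π * |s.im| / 2) * (2 * l ^ (-(n + 1 : ℝ)) + C₂) := by
    refine (norm_add_le _ _).trans ?_
    rw [norm_mul, norm_mul, norm_exp_pi_mul_div_two_mul_I, norm_exp_neg_pi_mul_div_two_mul_I,
      hwim, mul_add]
    gcongr
    · nlinarith [le_abs_self s.im, Real.pi_pos]
    · nlinarith [neg_abs_le s.im, Real.pi_pos]
    · exact hneg w (by linarith) hwre.le
  rw [show s = 1 - w by rw [hw]; ring, hF.one_sub hl ha (by linarith), norm_mul, norm_mul,
    norm_mul, norm_exp_neg_two_pi_I_mul, norm_Gammaℂ, hwre]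
  rw [show |(1 - w).im| = |s.im| by rw [hw, sub_sub_cancel]]
  calc _ ≤ ‖(1 / 2 : ℂ)‖ * 1 * (2 * (2 * π) ^ (-(n + 1 : ℝ)) * ‖Gamma w‖) *
        (Real.exp (π * |s.im| / 2) * (2 * l ^ (-(n + 1 : ℝ)) + C₂)) := by gcongr
    _ = (2 * π) ^ (-(n + 1 : ℝ)) * (2 * l ^ (-(n + 1 : ℝ)) + C₂) *
        (‖Gamma w‖ * Real.exp (π * |s.im| / 2)) := by
        rw [norm_div, norm_one, norm_ofNat]; ring
    _ ≤ (2 * π) ^ (-(n + 1 : ℝ)) * (2 * l ^ (-(n + 1 : ℝ)) + C₂) *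
        (C₁ * |s.im| ^ (n + 1)) := by gcongr
    _ = _ := by ring

lemma norm_entireLerch_div_le {n : ℕ} {s : ℂ} (hs : -(n : ℝ) ≤ s.re) (him : 1 ≤ |s.im|) :
    ‖entireLerch hl ha s / (s + (n + 1)) ^ (n + 3)‖ ≤
      (n + 2) * (n + 3) * (‖F s‖ / ‖s + (n + 1)‖ ^ (n + 1)) := by
  have hne (c : ℝ) : s ≠ c := by
    rintro rfl
    norm_num at him
  have hge : 1 ≤ ‖s + (n + 1)‖ := one_le_norm_add_natCast_add_one hs
  have hc : ‖(n + 1 : ℂ)‖ = n + 1 := by exact_mod_cast Complex.norm_natCast (n + 1)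
  have htri := norm_sub_le (s + (n + 1)) (n + 1 : ℂ)
  rw [hc, add_sub_cancel_right] at htri
  have htri' := norm_sub_le s 1
  rw [norm_one] at htri'
  have : (0 : ℝ) ≤ n := n.cast_nonneg
  have hs_le : ‖s‖ ≤ (n + 2) * ‖s + (n + 1)‖ := by nlinarith
  have hs_sub_le : ‖s - 1‖ ≤ (n + 3) * ‖s + (n + 1)‖ := by nlinarith
  rw [hF.entireLerch_eq hl ha (mod_cast hne 0) (mod_cast hne 1), norm_div, norm_mul, norm_mul,
    norm_pow, div_le_iff₀ (by positivity)]
  calc _ ≤ (n + 2) * ‖s + (n + 1)‖ * ((n + 3) * ‖s + (n + 1)‖) * ‖F s‖ := by gcongr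
    _ = _ := by
      field_simp
      ring

lemma exists_norm_entireLerch_div_le {n : ℕ} (hn : 1 ≤ n) {R : ℝ} (hR : 2 ≤ R) :
    ∃ C : ℝ, 0 ≤ C ∧ ∀ s : ℂ, -(n : ℝ) ≤ s.re → s.re ≤ R →
      ‖entireLerch hl ha s / (s + (n + 1)) ^ (n + 3)‖ ≤ C := by
  have hn' : (1 : ℝ) ≤ n := by exact_mod_cast hn
  obtain ⟨C₁, hC₁0, hC₁⟩ := hF.exists_norm_le_of_re_eq_neg hl ha hn
  obtain ⟨C₂, -, hC₂⟩ := exists_norm_lerchZeta_le_exp hl ha (-n) R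
  have ha0 := ha.1
  have hK : (0 : ℝ) ≤ (n + 2) * (n + 3) := by positivity
  have hR0 : 0 ≤ 2 * a ^ (-R) := by positivity
  refine exists_norm_le_of_vertical_strip (x₁ := -n) (x₂ := R) (by linarith)
    (C := (n + 2) * (n + 3) * (C₁ + 2 * a ^ (-R))) (A := (n + 2) * (n + 3) * C₂)
    (fun s hs _ ↦ ?_) (fun s hs him ↦ ?_) (fun s hs him ↦ ?_) Real.pi_pos.le
    fun s hs hsR him ↦ ?_
  · have hne : s + (n + 1) ≠ 0 :=
      norm_pos_iff.1 (one_pos.trans_le (one_le_norm_add_natCast_add_one hs))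
    exact (differentiable_entireLerch hl ha s).div (by fun_prop) (pow_ne_zero _ hne)
  · refine (hF.norm_entireLerch_div_le hl ha hs.ge him).trans (mul_le_mul_of_nonneg_left ?_ hK)
    have hge := one_le_norm_add_natCast_add_one hs.ge
    have him_le : |s.im| ≤ ‖s + (n + 1)‖ := by simpa using abs_im_le_norm (s + (n + 1))
    rw [div_le_iff₀ (by positivity)]
    calc ‖F s‖ ≤ C₁ * ‖s + (n + 1)‖ ^ (n + 1) := (hC₁ s hs him).trans (by gcongr)
      _ ≤ _ := by gcongr; linarith
  · refine (hF.norm_entireLerch_div_le hl ha (by linarith) him).trans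
      (mul_le_mul_of_nonneg_left ?_ hK)
    refine (div_le_self (norm_nonneg _) (one_le_pow₀
      (one_le_norm_add_natCast_add_one (by linarith)))).trans ?_
    rw [hF.2 s (by linarith), ← hs]
    linarith [norm_lerchSeries_le l ha (s := s) (by linarith)]
  · refine (hF.norm_entireLerch_div_le hl ha hs (by linarith)).trans ?_
    have hne (c : ℝ) : s ≠ c := by
      rintro rfl
      norm_num at him
    rw [mul_assoc _ C₂]
    refine mul_le_mul_of_nonneg_left ((div_le_self (norm_nonneg _) (one_le_pow₀
      (one_le_norm_add_natCast_add_one hs))).trans ?_) hK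
    rw [hF.eq_lerchZeta hl ha (mod_cast hne 0) (mod_cast hne 1)]
    exact hC₂ s hs hsR him

lemma exists_norm_le_pow {n : ℕ} (hn : 1 ≤ n) {R : ℝ} (hR : 2 ≤ R) :
    ∃ C : ℝ, 0 ≤ C ∧ ∀ s : ℂ, -(n : ℝ) ≤ s.re → s.re ≤ R → 1 ≤ |s.im| →
      ‖F s‖ ≤ C * |s.im| ^ (n + 3) := by
  obtain ⟨C, hC0, hC⟩ := hF.exists_norm_entireLerch_div_le hl ha hn hR
  refine ⟨C * (R + n + 2) ^ (n + 3), by positivity, fun s hs hsR him ↦ ?_⟩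
  have hne (c : ℝ) : s ≠ c := by
    rintro rfl
    norm_num at him
  have hge := one_le_norm_add_natCast_add_one hs
  have hbound := hC s hs hsR
  rw [hF.entireLerch_eq hl ha (mod_cast hne 0) (mod_cast hne 1), norm_div, norm_mul, norm_mul,
    norm_pow, div_le_iff₀ (by positivity)] at hbound
  have hs_ge : 1 ≤ ‖s‖ := him.trans (abs_im_le_norm s)
  have hs_sub_ge : 1 ≤ ‖s - 1‖ := him.trans (by simpa using abs_im_le_norm (s - 1))
  have hprod : 1 ≤ ‖s‖ * ‖s - 1‖ := by nlinarith
  have hlin : ‖s + (n + 1)‖ ≤ (R + n + 2) * |s.im| := by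
    have htri := norm_le_abs_re_add_abs_im (s + (n + 1))
    have hre : |(s + (n + 1)).re| ≤ R + n + 1 := by
      simp only [add_re, natCast_re, one_re]
      exact abs_le.2 ⟨by linarith [(n.cast_nonneg : (0 : ℝ) ≤ n)], by linarith⟩
    have him_eq : |(s + (n + 1)).im| = |s.im| := by simp
    nlinarith [(n.cast_nonneg : (0 : ℝ) ≤ n)]
  calc ‖F s‖ ≤ ‖s‖ * ‖s - 1‖ * ‖F s‖ := le_mul_of_one_le_left (norm_nonneg _) hprod
    _ ≤ C * ((R + n + 2) * |s.im|) ^ (n + 3) := hbound.trans (by gcongr)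
    _ = _ := by rw [mul_pow, mul_assoc]

end Growth

end IsLerch

namespace LerchZeta

open Complex Filter Topology Set MeasureTheory
open scoped Real Interval

/-- Finitely many weighted nodes on the line whose weights have vanishing zeroth and first moment,
so that the piecewise affine function with slope jumps `weight i` at `node i` has compact
support. -/
structure BalancedNodes (ι : Type*) [Fintype ι] where
  /-- The jump of the slope at each node. -/
  weight : ι → ℝ
  /-- The position of each node. -/
  node : ι → ℝ
  sum_weight : ∑ i, weight i = 0
  sum_weight_mul_node : ∑ i, weight i * node i = 0

namespace BalancedNodes

variable {ι κ : Type*} [Fintype ι] [Fintype κ]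

/-- The compactly supported piecewise affine function attached to balanced nodes. -/
def tent (A : BalancedNodes ι) (x : ℝ) : ℝ :=
  ∑ i, A.weight i * max (x - A.node i) 0

lemma continuous_tent (A : BalancedNodes ι) : Continuous A.tent := by
  unfold tent
  fun_prop

lemma sum_weight_mul_node_sub (A : BalancedNodes ι) (x : ℝ) :
    ∑ i, A.weight i * (A.node i - x) = 0 := by
  simp only [mul_sub, Finset.sum_sub_distrib, ← Finset.sum_mul, A.sum_weight_mul_node,
    A.sum_weight, zero_mul, sub_zero]

lemma sum_weight_mul_max_node_sub (A : BalancedNodes ι) (x : ℝ) :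
    ∑ i, A.weight i * max (A.node i - x) 0 = A.tent x := by
  rw [← sub_eq_zero, tent, ← Finset.sum_sub_distrib]
  simpa only [← mul_sub, ← neg_sub (A.node _) x, max_zero_sub_eq_self]
    using A.sum_weight_mul_node_sub x

lemma sum_weight_mul_abs_node_sub (A : BalancedNodes ι) (x : ℝ) :
    ∑ i, A.weight i * |A.node i - x| = 2 * A.tent x := by
  rw [two_mul]
  nth_rw 1 [← A.sum_weight_mul_max_node_sub x]
  rw [tent, ← Finset.sum_add_distrib]
  simp only [← mul_add, ← neg_sub (A.node _) x, max_zero_add_max_neg_zero_eq_abs_self]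

lemma tent_eq_zero_of_notMem_Ioo (A : BalancedNodes ι) {u v x : ℝ}
    (hA : ∀ i, A.node i ∈ Icc u v) (hx : x ∉ Ioo u v) : A.tent x = 0 := by
  rw [mem_Ioo, not_and_or, not_lt, not_lt] at hx
  rcases hx with hx | hx
  · exact Finset.sum_eq_zero fun i _ ↦ by
      rw [max_eq_right (sub_nonpos.2 (hx.trans (hA i).1)), mul_zero]
  · rw [← A.sum_weight_mul_max_node_sub]
    exact Finset.sum_eq_zero fun i _ ↦ by
      rw [max_eq_right (sub_nonpos.2 ((hA i).2.trans hx)), mul_zero]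

variable {E : Type*} [NormedAddCommGroup E] [NormedSpace ℝ E] [CompleteSpace E]

lemma integral_max_sub_smul {u v p : ℝ} (hp : p ∈ Icc u v) {f f' f'' : ℝ → E}
    (hf : ∀ x ∈ Icc u v, HasDerivAt f (f' x) x) (hf' : ∀ x ∈ Icc u v, HasDerivAt f' (f'' x) x)
    (hf'' : ContinuousOn f'' (Icc u v)) :
    ∫ x in u..v, max (x - p) 0 • f'' x = (v - p) • f' v - f v + f p := by
  have hint : ∀ {c d}, c ∈ Icc u v → d ∈ Icc u v →
      IntervalIntegrable (fun x ↦ max (x - p) 0 • f'' x) volume c d := fun hc hd ↦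
    (ContinuousOn.smul (by fun_prop) (hf''.mono (uIcc_subset_Icc hc hd))).intervalIntegrable
  have hu : u ∈ Icc u v := left_mem_Icc.2 (hp.1.trans hp.2)
  have hv : v ∈ Icc u v := right_mem_Icc.2 (hp.1.trans hp.2)
  have hleft : ∫ x in u..p, max (x - p) 0 • f'' x = 0 := by
    refine intervalIntegral.integral_zero_ae (.of_forall fun x hx ↦ ?_)
    rw [uIoc_of_le hp.1] at hx
    rw [max_eq_right (by linarith [hx.2]), zero_smul]
  have hright : ∫ x in p..v, max (x - p) 0 • f'' x = (v - p) • f' v - f v - (0 - f p) := by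
    have hder : ∀ x ∈ uIcc p v,
        HasDerivAt (fun x ↦ (x - p) • f' x - f x) (max (x - p) 0 • f'' x) x := by
      intro x hx
      have hx' := uIcc_subset_Icc hp hv hx
      rw [uIcc_of_le hp.2] at hx
      rw [max_eq_left (by linarith [hx.1])]
      refine ((((hasDerivAt_id x).sub_const p).smul (hf' x hx')).sub (hf x hx')).congr_deriv ?_
      simp only [id_eq, one_smul, add_sub_cancel_right]
    rw [intervalIntegral.integral_eq_sub_of_hasDerivAt hder (hint hp hv), sub_self, zero_smul]
  rw [← intervalIntegral.integral_add_adjacent_intervals (hint hu hp) (hint hp hv), hleft, hright]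
  abel

/-- Integrating by parts twice: the second derivative of `A.tent` is a sum of point masses. -/
lemma integral_tent_smul (A : BalancedNodes ι) {u v : ℝ} (hA : ∀ i, A.node i ∈ Icc u v)
    {f f' f'' : ℝ → E} (hf : ∀ x ∈ Icc u v, HasDerivAt f (f' x) x)
    (hf' : ∀ x ∈ Icc u v, HasDerivAt f' (f'' x) x) (hf'' : ContinuousOn f'' (Icc u v)) :
    ∫ x in u..v, A.tent x • f'' x = ∑ i, A.weight i • f (A.node i) := by
  have hint (i : ι) : IntervalIntegrable (fun x ↦ A.weight i • max (x - A.node i) 0 • f'' x)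
      volume u v := by
    refine ContinuousOn.intervalIntegrable_of_Icc ((hA i).1.trans (hA i).2) ?_
    exact continuousOn_const.smul (ContinuousOn.smul (by fun_prop) hf'')
  simp only [tent, Finset.sum_smul, mul_smul]
  rw [intervalIntegral.integral_finsetSum fun i _ ↦ hint i]
  simp only [intervalIntegral.integral_smul]
  have hzero : ∑ i, A.weight i • ((v - A.node i) • f' v - f v) = 0 := by
    simp only [smul_sub, smul_smul, Finset.sum_sub_distrib, ← Finset.sum_smul, A.sum_weight,
      zero_smul, sub_zero]
    rw [← neg_eq_zero, ← neg_smul, ← Finset.sum_neg_distrib]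
    simp only [← mul_neg, neg_sub, A.sum_weight_mul_node_sub, zero_smul]
  simp only [integral_max_sub_smul (hA _) hf hf' hf'', smul_add, Finset.sum_add_distrib, hzero,
    zero_add]

lemma integral_tent_mul_re (A : BalancedNodes ι) {u v : ℝ} (hA : ∀ i, A.node i ∈ Icc u v)
    {z w : ℂ} {k k' k'' : ℂ → ℂ} (hk : ∀ x ∈ Icc u v, HasDerivAt k (k' (z + x * w)) (z + x * w))
    (hk' : ∀ x ∈ Icc u v, HasDerivAt k' (k'' (z + x * w)) (z + x * w))
    (hk'' : ∀ x ∈ Icc u v, ContinuousAt k'' (z + x * w)) :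
    ∫ x in u..v, A.tent x * (w ^ 2 * k'' (z + x * w)).re =
      ∑ i, A.weight i * (k (z + A.node i * w)).re := by
  have hline (x : ℝ) : HasDerivAt (fun x : ℝ ↦ z + x * w) w x := by
    simpa only [id_eq, ofReal_one, one_mul] using
      (((hasDerivAt_id x).ofReal_comp).mul_const w).const_add z
  have hre {f : ℝ → ℂ} {c : ℂ} {x : ℝ} (h : HasDerivAt f c x) :
      HasDerivAt (fun x ↦ (f x).re) c.re x :=
    reCLM.hasFDerivAt.comp_hasDerivAt x h
  refine A.integral_tent_smul hA (f := fun x ↦ (k (z + x * w)).re)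
    (f' := fun x ↦ (k' (z + x * w) * w).re) (fun x hx ↦ hre ((hk x hx).comp x (hline x)))
    (fun x hx ↦ hre ?_) fun x hx ↦ ?_
  · refine (((hk' x hx).comp x (hline x)).mul_const w).congr_deriv ?_
    ring
  · have : ContinuousAt (fun x : ℝ ↦ k'' (z + x * w)) x :=
      (hk'' x hx).comp (f := fun x : ℝ ↦ z + x * w) (hline x).continuousAt
    exact (continuous_re.continuousAt.comp (this.const_mul _)).continuousWithinAt

lemma integral_tent_mul_re_horizontal (A : BalancedNodes ι) {u v y : ℝ}
    (hA : ∀ i, A.node i ∈ Icc u v) {k k' k'' : ℂ → ℂ}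
    (hk : ∀ x ∈ Icc u v, HasDerivAt k (k' (x + y * I)) (x + y * I))
    (hk' : ∀ x ∈ Icc u v, HasDerivAt k' (k'' (x + y * I)) (x + y * I))
    (hk'' : ∀ x ∈ Icc u v, ContinuousAt k'' (x + y * I)) :
    ∫ x in u..v, A.tent x * (k'' (x + y * I)).re =
      ∑ i, A.weight i * (k (A.node i + y * I)).re := by
  have hline (x : ℝ) : (x + y * I : ℂ) = y * I + x * 1 := by ring
  simp only [hline] at hk hk' hk'' ⊢
  simpa only [one_pow, one_mul] using A.integral_tent_mul_re hA hk hk' hk''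

lemma integral_tent_mul_re_vertical (B : BalancedNodes κ) {u v x : ℝ}
    (hB : ∀ j, B.node j ∈ Icc u v) {k k' k'' : ℂ → ℂ}
    (hk : ∀ t ∈ Icc u v, HasDerivAt k (k' (x + t * I)) (x + t * I))
    (hk' : ∀ t ∈ Icc u v, HasDerivAt k' (k'' (x + t * I)) (x + t * I))
    (hk'' : ∀ t ∈ Icc u v, ContinuousAt k'' (x + t * I)) :
    ∫ t in u..v, B.tent t * (k'' (x + t * I)).re =
      -∑ j, B.weight j * (k (x + B.node j * I)).re := by
  rw [← B.integral_tent_mul_re hB hk hk' hk'', ← intervalIntegral.integral_neg]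
  simp only [I_sq, neg_one_mul, neg_re, mul_neg, neg_neg]

end BalancedNodes

/-- The second primitive of the logarithm. -/
noncomputable def logPrimitive (w : ℂ) : ℂ :=
  w ^ 2 / 2 * log w - 3 / 4 * w ^ 2

lemma hasDerivAt_logPrimitive {w : ℂ} (hw : w ∈ slitPlane) :
    HasDerivAt logPrimitive (w * log w - w) w := by
  have : w ≠ 0 := slitPlane_ne_zero hw
  refine ((((hasDerivAt_pow 2 w).div_const 2).mul (hasDerivAt_log hw)).sub
    ((hasDerivAt_pow 2 w).const_mul (3 / 4))).congr_deriv ?_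
  field_simp
  push_cast
  ring

lemma hasDerivAt_mul_log_sub {w : ℂ} (hw : w ∈ slitPlane) :
    HasDerivAt (fun w ↦ w * log w - w) (log w) w := by
  have : w ≠ 0 := slitPlane_ne_zero hw
  refine (((hasDerivAt_id w).mul (hasDerivAt_log hw)).sub (hasDerivAt_id w)).congr_deriv ?_
  simp only [id_eq]
  field_simp
  ring

lemma re_logPrimitive_neg {w : ℂ} (hw : w.im ≠ 0) :
    (logPrimitive (-w)).re = (logPrimitive w).re + π * w.re * |w.im| := by
  have hsq : (w ^ 2).im = 2 * w.re * w.im := by rw [sq, mul_im]; ring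
  rcases hw.lt_or_gt with h | h
  · have hlog : log (-w) = log w + π * I := by
      rw [log, log, norm_neg, arg_neg_eq_arg_add_pi_of_im_neg h]
      push_cast
      ring
    have : logPrimitive (-w) = logPrimitive w + (π / 2 : ℝ) * (w ^ 2 * I) := by
      rw [logPrimitive, logPrimitive, hlog]
      push_cast
      ring
    rw [this, add_re, re_ofReal_mul, mul_I_re, hsq, abs_of_neg h]
    ring
  · have hlog : log (-w) = log w - π * I := by
      rw [log, log, norm_neg, arg_neg_eq_arg_sub_pi_of_im_pos h]
      push_cast
      ring
    have : logPrimitive (-w) = logPrimitive w - (π / 2 : ℝ) * (w ^ 2 * I) := by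
      rw [logPrimitive, logPrimitive, hlog]
      push_cast
      ring
    rw [this, sub_re, re_ofReal_mul, mul_I_re, hsq, abs_of_pos h]
    ring

namespace BalancedNodes

variable {ι κ : Type*} [Fintype ι] [Fintype κ]

lemma integral_tent_mul_log_norm_sub_horizontal (A : BalancedNodes ι) {u v y : ℝ}
    (hA : ∀ i, A.node i ∈ Icc u v) {ρ : ℂ} (hy : ρ.im ≠ y) :
    ∫ x in u..v, A.tent x * Real.log ‖(x : ℂ) + y * I - ρ‖ =
      ∑ i, A.weight i * (logPrimitive (A.node i + y * I - ρ)).re := by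
  have hslit (x : ℝ) : (x : ℂ) + y * I - ρ ∈ slitPlane :=
    .inr (by simpa [sub_eq_zero] using hy.symm)
  simp only [← log_re]
  exact A.integral_tent_mul_re_horizontal hA
    (fun x _ ↦ (hasDerivAt_logPrimitive (hslit x)).comp_sub_const _ ρ)
    (fun x _ ↦ (hasDerivAt_mul_log_sub (hslit x)).comp_sub_const _ ρ)
    fun x _ ↦ (continuousAt_clog (hslit x)).comp (f := (· - ρ)) (by fun_prop)

/-- To the left of `ρ` the line has to be treated with the branch `log (ρ - z)`; the difference of
the two branches is where the zero `ρ` is counted. -/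
lemma integral_tent_mul_log_norm_sub_vertical (B : BalancedNodes κ) {u v x : ℝ}
    (hB : ∀ j, B.node j ∈ Icc u v) {ρ : ℂ} (hx : ρ.re ≠ x) (hρ : ∀ j, ρ.im ≠ B.node j) :
    ∫ t in u..v, B.tent t * Real.log ‖(x : ℂ) + t * I - ρ‖ =
      2 * π * max (ρ.re - x) 0 * B.tent ρ.im -
        ∑ j, B.weight j * (logPrimitive (x + B.node j * I - ρ)).re := by
  rcases hx.lt_or_gt with hx | hx
  · have hslit (t : ℝ) : (x : ℂ) + t * I - ρ ∈ slitPlane := .inl (by simpa using hx)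
    rw [max_eq_right (by linarith), mul_zero, zero_mul, zero_sub]
    simp only [← log_re]
    exact B.integral_tent_mul_re_vertical hB
      (fun t _ ↦ (hasDerivAt_logPrimitive (hslit t)).comp_sub_const _ ρ)
      (fun t _ ↦ (hasDerivAt_mul_log_sub (hslit t)).comp_sub_const _ ρ)
      fun t _ ↦ (continuousAt_clog (hslit t)).comp (f := (· - ρ)) (by fun_prop)
  · have hslit (t : ℝ) : ρ - ((x : ℂ) + t * I) ∈ slitPlane := .inl (by simpa using hx)
    have hre (j : κ) : (logPrimitive (ρ - (x + B.node j * I))).re =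
        (logPrimitive (x + B.node j * I - ρ)).re - π * (ρ.re - x) * |B.node j - ρ.im| := by
      rw [← neg_sub, re_logPrimitive_neg (by simpa [sub_eq_zero] using (hρ j).symm)]
      simp only [sub_re, add_re, ofReal_re, mul_I_re, ofReal_im, sub_im, add_im, mul_I_im,
        zero_add, neg_zero, add_zero]
      ring
    have hint := B.integral_tent_mul_re_vertical hB (k := fun z ↦ logPrimitive (ρ - z))
      (k' := fun z ↦ -((ρ - z) * log (ρ - z) - (ρ - z))) (k'' := fun z ↦ log (ρ - z))
      (fun t _ ↦ (hasDerivAt_logPrimitive (hslit t)).comp_const_sub ρ _)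
      (fun t _ ↦ ((hasDerivAt_mul_log_sub (hslit t)).comp_const_sub ρ _).neg.congr_deriv
        (neg_neg _))
      fun t _ ↦ (continuousAt_clog (hslit t)).comp (f := (ρ - ·)) (by fun_prop)
    simp only [log_re, norm_sub_rev ρ, hre] at hint
    rw [hint, max_eq_left (by linarith)]
    have hsum : ∑ j, B.weight j * (π * (ρ.re - x) * |B.node j - ρ.im|) =
        π * (ρ.re - x) * (2 * B.tent ρ.im) := by
      rw [← B.sum_weight_mul_abs_node_sub, Finset.mul_sum]
      exact Finset.sum_congr rfl fun j _ ↦ mul_left_comm _ _ _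
    simp only [mul_sub (B.weight _), Finset.sum_sub_distrib, hsum]
    ring

end BalancedNodes

lemma exists_exp_eq {U : Set ℂ} (hUo : IsOpen U) (hUc : Convex ℝ U) {g : ℂ → ℂ}
    (hg : DifferentiableOn ℂ g U) (hg0 : ∀ z ∈ U, g z ≠ 0) :
    ∃ h : ℂ → ℂ, DifferentiableOn ℂ h U ∧ ∀ z ∈ U, cexp (h z) = g z := by
  rcases U.eq_empty_or_nonempty with rfl | ⟨z₀, hz₀⟩
  · exact ⟨0, by simp, by simp⟩
  obtain ⟨k, hk⟩ := hUc.exists_forall_hasDerivWithinAt ((hg.deriv hUo).div hg hg0)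
  have hq : ∀ z ∈ U, HasDerivAt (fun z ↦ cexp (-k z) * g z) 0 z := by
    intro z hz
    have hkz := (hk z hz).hasDerivAt (hUo.mem_nhds hz)
    have hgz := (hg.differentiableAt (hUo.mem_nhds hz)).hasDerivAt
    refine (hkz.neg.cexp.mul hgz).congr_deriv ?_
    simp only [Pi.div_apply, mul_neg, neg_mul, mul_assoc, div_mul_cancel₀ _ (hg0 z hz),
      neg_add_cancel]
  have hconst : ∀ z ∈ U, cexp (-k z) * g z = cexp (-k z₀) * g z₀ := fun z hz ↦
    hUo.is_const_of_deriv_eq_zero hUc.isPreconnected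
      (fun w hw ↦ (hq w hw).differentiableAt.differentiableWithinAt)
      (fun w hw ↦ (hq w hw).deriv) hz hz₀
  have hne : cexp (-k z₀) * g z₀ ≠ 0 := mul_ne_zero (exp_ne_zero _) (hg0 z₀ hz₀)
  refine ⟨fun z ↦ k z + log (cexp (-k z₀) * g z₀),
    (fun z hz ↦ (hk z hz).differentiableWithinAt.add_const _), fun z hz ↦ ?_⟩
  rw [exp_add, exp_log hne, ← hconst z hz, ← mul_assoc, ← exp_add, add_neg_cancel, exp_zero,
    one_mul]

lemma divisor_eq_analyticOrderNatAt {U : Set ℂ} {G : ℂ → ℂ} (hG : AnalyticOnNhd ℂ G U) {z : ℂ}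
    (hz : z ∈ U) : MeromorphicOn.divisor G U z = analyticOrderNatAt G z := by
  rw [MeromorphicOn.AnalyticOnNhd.divisor_apply hG hz, analyticOrderNatAt]
  cases analyticOrderAt G z <;> rfl

lemma support_divisor_subset {U : Set ℂ} {G : ℂ → ℂ} (hG : AnalyticOnNhd ℂ G U)
    {S : Finset ℂ} (hS : ∀ z, z ∈ S ↔ z ∈ U ∧ G z = 0) :
    (MeromorphicOn.divisor G U).support ⊆ S := fun z hz ↦ by
  have hzU := (MeromorphicOn.divisor G U).supportWithinDomain hz
  refine (hS z).2 ⟨hzU, apply_eq_zero_of_analyticOrderNatAt_ne_zero fun h ↦ hz ?_⟩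
  rw [divisor_eq_analyticOrderNatAt hG hzU, h, Nat.cast_zero]

lemma finprod_sub_zpow_divisor_eq {U : Set ℂ} {G : ℂ → ℂ} (hG : AnalyticOnNhd ℂ G U)
    {S : Finset ℂ} (hS : ∀ z, z ∈ S ↔ z ∈ U ∧ G z = 0) :
    (∏ᶠ u, (· - u) ^ MeromorphicOn.divisor G U u : ℂ → ℂ) =
      fun z ↦ ∏ ρ ∈ S, (z - ρ) ^ analyticOrderNatAt G ρ := by
  have hsub : Function.mulSupport (fun u ↦ (· - u : ℂ → ℂ) ^ MeromorphicOn.divisor G U u) ⊆ S :=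
    fun u hu ↦ support_divisor_subset hG hS fun h ↦ hu <| by
      simp only [h, zpow_zero]
  rw [finprod_eq_prod_of_mulSupport_subset _ hsub]
  ext z
  rw [Finset.prod_apply]
  refine Finset.prod_congr rfl fun ρ hρ ↦ ?_
  rw [divisor_eq_analyticOrderNatAt hG ((hS ρ).1 hρ).1, zpow_natCast, Pi.pow_apply]

lemma exists_eq_prod_mul {U : Set ℂ} (hU : IsOpen U) {G : ℂ → ℂ} (hG : DifferentiableOn ℂ G U)
    {S : Finset ℂ} (hS : ∀ z, z ∈ S ↔ z ∈ U ∧ G z = 0) :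
    ∃ g : ℂ → ℂ, DifferentiableOn ℂ g U ∧ (∀ z ∈ U, g z ≠ 0) ∧
      ∀ z ∈ U, G z = (∏ ρ ∈ S, (z - ρ) ^ analyticOrderNatAt G ρ) * g z := by
  have han : AnalyticOnNhd ℂ G U := hG.analyticOnNhd hU
  have htop : ∀ z ∈ U, analyticOrderAt G z ≠ ⊤ := fun z hz htop ↦ by
    have : ∀ᶠ w in 𝓝 z, w ∈ S := by
      filter_upwards [analyticOrderAt_eq_top.1 htop, hU.mem_nhds hz] with w hw hwU
        using (hS w).2 ⟨hwU, hw⟩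
    exact (infinite_of_mem_nhds z this) S.finite_toSet
  obtain ⟨g, hg, hg0, hGg⟩ := MeromorphicOn.extract_zeros_poles (f := G) (U := U)
    han.meromorphicOn (fun z ↦ by simpa [(han z z.2).meromorphicOrderAt_eq] using htop z z.2)
    (S.finite_toSet.subset (support_divisor_subset han hS))
  rw [finprod_sub_zpow_divisor_eq han hS] at hGg
  refine ⟨g, hg.differentiableOn, fun z hz ↦ hg0 ⟨z, hz⟩, fun z hz ↦ ?_⟩
  have hne := mem_codiscreteWithin_iff_forall_mem_nhdsNE.1 hGg z hz
  have hpunct : G =ᶠ[𝓝[≠] z] fun z ↦ (∏ ρ ∈ S, (z - ρ) ^ analyticOrderNatAt G ρ) * g z := by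
    filter_upwards [hne, mem_nhdsWithin_of_mem_nhds (hU.mem_nhds hz)] with w hw hwU
      using hw.resolve_right (not_not_intro hwU)
  have hgz := (hg z hz).continuousAt
  exact (((han z hz).continuousAt.eventuallyEq_nhds_iff_eventuallyEq_nhdsNE (by fun_prop)).1
    hpunct).self_of_nhds

end LerchZeta

namespace LerchZeta

open Complex Filter Topology Set MeasureTheory
open scoped Real Interval

namespace BalancedNodes

variable {ι κ : Type*} [Fintype ι] [Fintype κ] (A : BalancedNodes ι) (B : BalancedNodes κ)

/-- The part in the rectangle `[[u, v]] ×ℂ [[p, q]]` of the vertical lines through the nodes of `A`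
and of the horizontal lines through the nodes of `B`. -/
def grid (u v p q : ℝ) : Set ℂ :=
  {z | z ∈ [[u, v]] ×ℂ [[p, q]] ∧ (z.re ∈ range A.node ∨ z.im ∈ range B.node)}

/-- The integral of `φ` over the grid against the distributional derivative
`A'' ⊗ B + A ⊗ B''` (the Laplacian) of the tent function `A.tent x * B.tent y`. -/
noncomputable def gridIntegral (u v p q : ℝ) (φ : ℂ → ℝ) : ℝ :=
  ∑ i, A.weight i * (∫ t in p..q, B.tent t * φ (A.node i + t * I)) +
    ∑ j, B.weight j * ∫ x in u..v, A.tent x * φ (x + B.node j * I)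

variable {A B} {u v p q : ℝ}

lemma vertical_mem_grid (hA : ∀ i, A.node i ∈ Icc u v) (i : ι) {t : ℝ} (ht : t ∈ [[p, q]]) :
    (A.node i + t * I : ℂ) ∈ grid A B u v p q := by
  refine ⟨mem_reProdIm.2 ?_, .inl ?_⟩
  · simpa using ⟨Icc_subset_uIcc (hA i), ht⟩
  · simp

lemma horizontal_mem_grid (hB : ∀ j, B.node j ∈ Icc p q) (j : κ) {x : ℝ} (hx : x ∈ [[u, v]]) :
    (x + B.node j * I : ℂ) ∈ grid A B u v p q := by
  refine ⟨mem_reProdIm.2 ?_, .inr ?_⟩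
  · simpa using ⟨hx, Icc_subset_uIcc (hB j)⟩
  · simp

lemma gridIntegral_congr (hA : ∀ i, A.node i ∈ Icc u v) (hB : ∀ j, B.node j ∈ Icc p q)
    {φ ψ : ℂ → ℝ} (h : EqOn φ ψ (grid A B u v p q)) :
    gridIntegral A B u v p q φ = gridIntegral A B u v p q ψ := by
  unfold gridIntegral
  congr 1
  · refine Finset.sum_congr rfl fun i _ ↦ congrArg _ (intervalIntegral.integral_congr fun t ht ↦ ?_)
    simp only [h (vertical_mem_grid hA i ht)]
  · refine Finset.sum_congr rfl fun j _ ↦ congrArg _ (intervalIntegral.integral_congr fun x hx ↦ ?_)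
    simp only [h (horizontal_mem_grid hB j hx)]

lemma integral_mul_sum_add {r s : ℝ} {w ψ : ℝ → ℝ} {S : Finset ℂ} {m : ℂ → ℝ}
    {φ : ℂ → ℝ → ℝ} (hw : Continuous w) (hφ : ∀ ρ ∈ S, ContinuousOn (φ ρ) [[r, s]])
    (hψ : ContinuousOn ψ [[r, s]]) :
    ∫ t in r..s, w t * (∑ ρ ∈ S, m ρ * φ ρ t + ψ t) =
      ∑ ρ ∈ S, m ρ * (∫ t in r..s, w t * φ ρ t) + ∫ t in r..s, w t * ψ t := by
  have hint (ρ : ℂ) (hρ : ρ ∈ S) :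
      IntervalIntegrable (fun t ↦ m ρ * (w t * φ ρ t)) volume r s :=
    (continuousOn_const.mul (hw.continuousOn.mul (hφ ρ hρ))).intervalIntegrable
  simp only [mul_add, Finset.mul_sum, mul_left_comm (w _)]
  rw [intervalIntegral.integral_add, intervalIntegral.integral_finsetSum hint]
  · simp only [intervalIntegral.integral_const_mul]
  · simpa only [Finset.sum_fn] using IntervalIntegrable.sum S hint
  · exact (hw.continuousOn.mul hψ).intervalIntegrable

lemma sum_mul_sum_mul_comm {σ : Type*} {S : Finset σ} (c : ι → ℝ) (m : σ → ℝ) (a : ι → σ → ℝ) :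
    ∑ i, c i * ∑ ρ ∈ S, m ρ * a i ρ = ∑ ρ ∈ S, m ρ * ∑ i, c i * a i ρ := by
  simp only [Finset.mul_sum, mul_left_comm (c _)]
  exact Finset.sum_comm

lemma gridIntegral_sum_add (hA : ∀ i, A.node i ∈ Icc u v) (hB : ∀ j, B.node j ∈ Icc p q)
    {S : Finset ℂ} {m : ℂ → ℝ} {φ : ℂ → ℂ → ℝ} {ψ : ℂ → ℝ}
    (hφ : ∀ ρ ∈ S, ContinuousOn (φ ρ) (grid A B u v p q))
    (hψ : ContinuousOn ψ (grid A B u v p q)) :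
    gridIntegral A B u v p q (fun z ↦ ∑ ρ ∈ S, m ρ * φ ρ z + ψ z) =
      ∑ ρ ∈ S, m ρ * gridIntegral A B u v p q (φ ρ) + gridIntegral A B u v p q ψ := by
  have hvert {f : ℂ → ℝ} (hf : ContinuousOn f (grid A B u v p q)) (i : ι) :
      ContinuousOn (fun t : ℝ ↦ f (A.node i + t * I)) [[p, q]] :=
    hf.comp (by fun_prop) fun t ht ↦ vertical_mem_grid hA i ht
  have hhor {f : ℂ → ℝ} (hf : ContinuousOn f (grid A B u v p q)) (j : κ) :
      ContinuousOn (fun x : ℝ ↦ f (x + B.node j * I)) [[u, v]] :=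
    hf.comp (by fun_prop) fun x hx ↦ horizontal_mem_grid hB j hx
  simp only [gridIntegral,
    integral_mul_sum_add B.continuous_tent (fun ρ hρ ↦ hvert (hφ ρ hρ) _) (hvert hψ _),
    integral_mul_sum_add A.continuous_tent (fun ρ hρ ↦ hhor (hφ ρ hρ) _) (hhor hψ _)]
  simp only [mul_add, Finset.sum_add_distrib]
  rw [sum_mul_sum_mul_comm, sum_mul_sum_mul_comm]
  ring

lemma gridIntegral_re_eq_zero (hA : ∀ i, A.node i ∈ Icc u v)
    (hB : ∀ j, B.node j ∈ Icc p q) {U : Set ℂ} (hUo : IsOpen U) (hUc : Convex ℝ U)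
    (hU : [[u, v]] ×ℂ [[p, q]] ⊆ U) {L : ℂ → ℂ} (hL : DifferentiableOn ℂ L U) :
    gridIntegral A B u v p q (fun z ↦ (L z).re) = 0 := by
  obtain ⟨k', hk'⟩ := hUc.exists_forall_hasDerivWithinAt hL
  obtain ⟨k, hk⟩ := hUc.exists_forall_hasDerivWithinAt
    fun z hz ↦ (hk' z hz).differentiableWithinAt
  have hmem {x t : ℝ} (hx : x ∈ Icc u v) (ht : t ∈ Icc p q) : (x + t * I : ℂ) ∈ U :=
    hU (mem_reProdIm.2 (by simpa using ⟨Icc_subset_uIcc hx, Icc_subset_uIcc ht⟩))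
  have hd {f g : ℂ → ℂ} (h : ∀ z ∈ U, HasDerivWithinAt f (g z) U z) {x t : ℝ}
      (hx : x ∈ Icc u v) (ht : t ∈ Icc p q) : HasDerivAt f (g (x + t * I)) (x + t * I) :=
    (h _ (hmem hx ht)).hasDerivAt (hUo.mem_nhds (hmem hx ht))
  have hc {x t : ℝ} (hx : x ∈ Icc u v) (ht : t ∈ Icc p q) : ContinuousAt L (x + t * I) :=
    (hL.differentiableAt (hUo.mem_nhds (hmem hx ht))).continuousAt
  have hvert (i : ι) := B.integral_tent_mul_re_vertical hB (x := A.node i)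
    (fun t ht ↦ hd hk (hA i) ht) (fun t ht ↦ hd hk' (hA i) ht) fun t ht ↦ hc (hA i) ht
  have hhor (j : κ) := A.integral_tent_mul_re_horizontal hA (y := B.node j)
    (fun x hx ↦ hd hk hx (hB j)) (fun x hx ↦ hd hk' hx (hB j)) fun x hx ↦ hc hx (hB j)
  simp only [gridIntegral, hvert, hhor, mul_neg, Finset.sum_neg_distrib, Finset.mul_sum]
  rw [Finset.sum_comm, neg_add_eq_zero]
  simp only [mul_left_comm (A.weight _)]

lemma gridIntegral_log_norm_sub (hA : ∀ i, A.node i ∈ Icc u v) (hB : ∀ j, B.node j ∈ Icc p q)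
    {ρ : ℂ} (hρA : ∀ i, ρ.re ≠ A.node i) (hρB : ∀ j, ρ.im ≠ B.node j) :
    gridIntegral A B u v p q (fun z ↦ Real.log ‖z - ρ‖) =
      2 * π * (A.tent ρ.re * B.tent ρ.im) := by
  simp only [gridIntegral, B.integral_tent_mul_log_norm_sub_vertical hB (hρA _) hρB,
    A.integral_tent_mul_log_norm_sub_horizontal hA (hρB _), mul_sub, Finset.sum_sub_distrib,
    Finset.mul_sum]
  rw [Finset.sum_comm (s := Finset.univ (α := κ))]
  simp only [mul_left_comm (B.weight _), sub_add_cancel]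
  unfold tent
  rw [Finset.sum_mul, Finset.mul_sum]
  refine Finset.sum_congr rfl fun i _ ↦ ?_
  ring

/-- A version of Littlewood's lemma in which the zeros are weighted with the piecewise affine
function `A.tent β * B.tent γ`. In contrast to the classical version no argument of `G` occurs. -/
lemma gridIntegral_log_norm (hA : ∀ i, A.node i ∈ Icc u v)
    (hB : ∀ j, B.node j ∈ Icc p q) {U : Set ℂ} (hUo : IsOpen U) (hUc : Convex ℝ U)
    (hU : [[u, v]] ×ℂ [[p, q]] ⊆ U) {G : ℂ → ℂ} (hG : DifferentiableOn ℂ G U) {S : Finset ℂ}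
    (hS : ∀ z, z ∈ S ↔ z ∈ U ∧ G z = 0) (hSA : ∀ ρ ∈ S, ∀ i, ρ.re ≠ A.node i)
    (hSB : ∀ ρ ∈ S, ∀ j, ρ.im ≠ B.node j) :
    gridIntegral A B u v p q (fun z ↦ Real.log ‖G z‖) =
      2 * π * ∑ ρ ∈ S, analyticOrderNatAt G ρ * (A.tent ρ.re * B.tent ρ.im) := by
  obtain ⟨g, hg, hg0, hGg⟩ := exists_eq_prod_mul hUo hG hS
  obtain ⟨h, hh, hexp⟩ := exists_exp_eq hUo hUc hg hg0
  have hgridU : grid A B u v p q ⊆ U := fun z hz ↦ hU hz.1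
  have hne : ∀ ρ ∈ S, ∀ z ∈ grid A B u v p q, z - ρ ≠ 0 := by
    rintro ρ hρ z ⟨-, ⟨i, hi⟩ | ⟨j, hj⟩⟩ h0 <;> rw [sub_eq_zero] at h0
    · exact hSA ρ hρ i (by rw [hi, h0])
    · exact hSB ρ hρ j (by rw [hj, h0])
  have hlog : EqOn (fun z ↦ Real.log ‖G z‖)
      (fun z ↦ ∑ ρ ∈ S, (analyticOrderNatAt G ρ : ℝ) * Real.log ‖z - ρ‖ + (h z).re)
      (grid A B u v p q) := by
    intro z hz
    have hpow : ∀ ρ ∈ S, (z - ρ) ^ analyticOrderNatAt G ρ ≠ 0 := fun ρ hρ ↦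
      pow_ne_zero _ (hne ρ hρ z hz)
    simp only [hGg z (hgridU hz), ← hexp z (hgridU hz), norm_mul, norm_prod, norm_exp]
    rw [Real.log_mul (Finset.prod_ne_zero_iff.2 fun ρ hρ ↦ norm_ne_zero_iff.2 (hpow ρ hρ))
      (Real.exp_pos _).ne', Real.log_exp, Real.log_prod fun ρ hρ ↦ norm_ne_zero_iff.2 (hpow ρ hρ)]
    simp only [norm_pow, Real.log_pow]
  rw [gridIntegral_congr hA hB hlog, gridIntegral_sum_add hA hB (ψ := fun z ↦ (h z).re)
    (fun ρ hρ ↦ ContinuousOn.log (by fun_prop) fun z hz ↦ norm_ne_zero_iff.2 (hne ρ hρ z hz))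
    (continuous_re.comp_continuousOn (hh.continuousOn.mono hgridU)),
    gridIntegral_re_eq_zero hA hB hUo hUc hU hh, add_zero, Finset.mul_sum]
  refine Finset.sum_congr rfl fun ρ hρ ↦ ?_
  rw [gridIntegral_log_norm_sub hA hB (hSA ρ hρ) (hSB ρ hρ)]
  ring

end BalancedNodes

end LerchZeta

namespace LerchZeta

open Complex Filter Topology Set MeasureTheory Metric
open scoped Real Interval ENNReal

section Jensen

variable {G : ℂ → ℂ} {c : ℂ} {R M : ℝ}

lemma log_norm_le_circleAverage (hR : 0 < R) (hG : AnalyticOnNhd ℂ G (closedBall c R))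
    (hc : G c ≠ 0) : Real.log ‖G c‖ ≤ Real.circleAverage (Real.log ‖G ·‖) c R := by
  rw [← abs_of_pos hR] at hG
  rw [hG.circleAverage_log_norm hR.ne' hc, le_add_iff_nonneg_left]
  refine finsum_nonneg fun u ↦ ?_
  by_cases hu : u ∈ closedBall c |R|
  · refine mul_nonneg (mod_cast MeromorphicOn.AnalyticOnNhd.divisor_nonneg hG u) ?_
    rcases eq_or_ne c u with rfl | hne
    · simp
    · refine Real.log_nonneg ?_
      rw [← div_eq_mul_inv, one_le_div (norm_pos_iff.mpr (sub_ne_zero.mpr hne)), ← dist_eq_norm,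
        dist_comm]
      simpa [abs_of_pos hR] using hu
  · simp [hu]

lemma abs_log_le_two_mul_sub_log {x : ℝ} (hM : 0 ≤ M) (hx : 0 ≤ x) (hxM : x ≤ Real.exp M) :
    |Real.log x| ≤ 2 * M - Real.log x := by
  have : Real.log x ≤ M := by
    rcases hx.eq_or_lt with rfl | hx
    · simpa using hM
    · exact (Real.log_le_iff_le_exp hx).mpr hxM
  exact abs_le.mpr ⟨by linarith, by linarith⟩

lemma circleIntegrable_log_norm (hR : 0 < R) (hG : AnalyticOnNhd ℂ G (closedBall c R)) :
    CircleIntegrable (Real.log ‖G ·‖) c R :=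
  (hG.mono (by simpa [abs_of_pos hR] using sphere_subset_closedBall)).meromorphicOn
    |>.circleIntegrable_log_norm

lemma circleAverage_abs_log_norm_le (hR : 0 < R) (hG : AnalyticOnNhd ℂ G (closedBall c R))
    (hM : 0 ≤ M) (hGM : ∀ z ∈ closedBall c R, ‖G z‖ ≤ Real.exp M) (hc : G c ≠ 0) :
    Real.circleAverage (fun z ↦ |Real.log ‖G z‖|) c R ≤ 2 * M - Real.log ‖G c‖ := by
  have hint := circleIntegrable_log_norm hR hG
  have hconst : CircleIntegrable (fun _ ↦ 2 * M) c R := circleIntegrable_const _ _ _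
  calc Real.circleAverage (fun z ↦ |Real.log ‖G z‖|) c R
      ≤ Real.circleAverage ((fun _ ↦ 2 * M) - fun z ↦ Real.log ‖G z‖) c R := by
        refine Real.circleAverage_mono hint.abs (hconst.sub hint) fun z hz ↦ ?_
        rw [abs_of_pos hR] at hz
        exact abs_log_le_two_mul_sub_log hM (norm_nonneg _) (hGM z (sphere_subset_closedBall hz))
    _ = 2 * M - Real.circleAverage (Real.log ‖G ·‖) c R := by
        rw [Real.circleAverage_sub hconst hint, Real.circleAverage_const]
    _ ≤ 2 * M - Real.log ‖G c‖ := by linarith [log_norm_le_circleAverage hR hG hc]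

lemma lintegral_circleMap_enorm_log_norm_le (hR : 0 < R)
    (hG : AnalyticOnNhd ℂ G (closedBall c R)) (hM : 0 ≤ M)
    (hGM : ∀ z ∈ closedBall c R, ‖G z‖ ≤ Real.exp M) (hc : G c ≠ 0) :
    ∫⁻ θ in Ioo (-π) π, ‖Real.log ‖G (circleMap c R θ)‖‖ₑ
      ≤ ENNReal.ofReal (2 * π * (2 * M - Real.log ‖G c‖)) := by
  have hπ : -π ≤ π := by linarith [Real.pi_pos]
  have hper : Function.Periodic (fun θ ↦ Real.log ‖G (circleMap c R θ)‖) (2 * π) :=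
    (periodic_circleMap c R).comp fun z ↦ Real.log ‖G z‖
  have hint : IntervalIntegrable (fun θ ↦ Real.log ‖G (circleMap c R θ)‖) volume (-π) π :=
    hper.intervalIntegrable₀ Real.two_pi_pos.ne' (circleIntegrable_log_norm hR hG) _ _
  have havg : ∫ θ in -π..π, |Real.log ‖G (circleMap c R θ)‖|
      = 2 * π * Real.circleAverage (fun z ↦ |Real.log ‖G z‖|) c R := by
    have := (hper.comp fun x : ℝ ↦ |x|).intervalIntegral_add_eq (-π) 0
    simp only [Function.comp_def, zero_add, show -π + 2 * π = π by ring] at this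
    rw [this, Real.circleAverage_def, smul_eq_mul, mul_inv_cancel_left₀ Real.two_pi_pos.ne']
  rw [setLIntegral_congr Ioo_ae_eq_Ioc,
    ← ofReal_integral_norm_eq_lintegral_enorm ((intervalIntegrable_iff_integrableOn_Ioc_of_le
      hπ).mp hint), ← intervalIntegral.integral_of_le hπ]
  refine ENNReal.ofReal_le_ofReal ?_
  simp only [Real.norm_eq_abs]
  rw [havg]
  gcongr
  exact circleAverage_abs_log_norm_le hR hG hM hGM hc

lemma lintegral_eq_lintegral_circleMap_le (f : ℂ → ℝ≥0∞) (c : ℂ) (R : ℝ) :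
    ∫⁻ z in closedBall c R, f z
      ≤ ∫⁻ r in Ioc 0 R, ENNReal.ofReal r * ∫⁻ θ in Ioo (-π) π, f (circleMap c r θ) := by
  have hpolar : ∀ p ∈ Complex.polarCoord.target,
      ENNReal.ofReal p.1 • (closedBall 0 R).indicator (fun w ↦ f (w + c))
        (Complex.polarCoord.symm p)
      = (Iic R).indicator (fun r ↦ ENNReal.ofReal r * f (circleMap c r p.2)) p.1 := by
    rintro ⟨r, θ⟩ ⟨hr, -⟩
    have hmap : Complex.polarCoord.symm (r, θ) + c = circleMap c r θ := by
      rw [Complex.polarCoord_symm_apply, circleMap, exp_mul_I, ofReal_cos, ofReal_sin, add_comm]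
    have hmem : Complex.polarCoord.symm (r, θ) ∈ closedBall 0 R ↔ r ∈ Iic R := by
      rw [mem_closedBall_zero_iff, norm_polarCoord_symm, abs_of_pos hr, mem_Iic]
    by_cases h : r ∈ Iic R
    · rw [indicator_of_mem (hmem.mpr h), indicator_of_mem h, hmap, smul_eq_mul]
    · rw [indicator_of_notMem (hmem.not.mpr h), indicator_of_notMem h, smul_zero]
  calc ∫⁻ z in closedBall c R, f z
      = ∫⁻ w, (closedBall 0 R).indicator (fun w ↦ f (w + c)) w := by
        rw [← lintegral_indicator measurableSet_closedBall, ← lintegral_add_right_eq_self _ c]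
        simp [indicator, mem_closedBall, dist_eq_norm]
    _ = ∫⁻ p in Ioi 0 ×ˢ Ioo (-π) π,
          (Iic R).indicator (fun r ↦ ENNReal.ofReal r * f (circleMap c r p.2)) p.1 := by
        rw [← Complex.lintegral_comp_polarCoord_symm]
        exact setLIntegral_congr_fun polarCoord.open_target.measurableSet hpolar
    _ ≤ ∫⁻ r in Ioi 0, ∫⁻ θ in Ioo (-π) π,
          (Iic R).indicator (fun r ↦ ENNReal.ofReal r * f (circleMap c r θ)) r := by
        rw [Measure.volume_eq_prod, ← Measure.prod_restrict]
        exact lintegral_prod_le _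
    _ = _ := by
        rw [← Ioi_inter_Iic, inter_comm, ← setLIntegral_indicator measurableSet_Iic]
        refine lintegral_congr fun r ↦ ?_
        by_cases hr : r ∈ Iic R
        · simp only [indicator_of_mem hr, lintegral_const_mul' _ _ ENNReal.ofReal_ne_top]
        · simp only [indicator_of_notMem hr, lintegral_zero]

lemma lintegral_closedBall_enorm_log_norm_le (hR : 0 ≤ R)
    (hG : AnalyticOnNhd ℂ G (closedBall c R)) (hM : 0 ≤ M)
    (hGM : ∀ z ∈ closedBall c R, ‖G z‖ ≤ Real.exp M) (hc : G c ≠ 0) :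
    ∫⁻ z in closedBall c R, ‖Real.log ‖G z‖‖ₑ
      ≤ ENNReal.ofReal (π * R ^ 2 * (2 * M - Real.log ‖G c‖)) := by
  set B := 2 * π * (2 * M - Real.log ‖G c‖) with hB
  have hB₀ : 0 ≤ B := by
    have := abs_log_le_two_mul_sub_log hM (norm_nonneg _) (hGM c (mem_closedBall_self hR))
    exact mul_nonneg Real.two_pi_pos.le ((abs_nonneg _).trans this)
  calc ∫⁻ z in closedBall c R, ‖Real.log ‖G z‖‖ₑ
      ≤ ∫⁻ r in Ioc 0 R, ENNReal.ofReal r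
          * ∫⁻ θ in Ioo (-π) π, ‖Real.log ‖G (circleMap c r θ)‖‖ₑ :=
        lintegral_eq_lintegral_circleMap_le _ _ _
    _ ≤ ∫⁻ r in Ioc 0 R, ENNReal.ofReal (r * B) := by
        refine setLIntegral_mono' measurableSet_Ioc fun r hr ↦ ?_
        have hsub : closedBall c r ⊆ closedBall c R := closedBall_subset_closedBall hr.2
        rw [ENNReal.ofReal_mul hr.1.le]
        gcongr
        exact lintegral_circleMap_enorm_log_norm_le hr.1 (hG.mono hsub) hM
          (fun z hz ↦ hGM z (hsub hz)) hc
    _ = ENNReal.ofReal (∫ r in 0..R, r * B) := by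
        have hint : IntegrableOn (fun r ↦ r * B) (Ioc 0 R) :=
          (by fun_prop : Continuous fun r ↦ r * B).integrableOn_Ioc
        rw [intervalIntegral.integral_of_le hR, ofReal_integral_eq_lintegral_ofReal hint]
        exact (ae_restrict_iff' measurableSet_Ioc).mpr <| ae_of_all _ fun r hr ↦
          mul_nonneg hr.1.le hB₀
    _ = ENNReal.ofReal (π * R ^ 2 * (2 * M - Real.log ‖G c‖)) := by
        rw [intervalIntegral.integral_mul_const, integral_id, hB]
        ring_nf

end Jensen

lemma setLIntegral_reProdIm {f : ℂ → ℝ≥0∞} (hf : Measurable f) {s t : Set ℝ}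
    (hs : MeasurableSet s) (ht : MeasurableSet t) :
    ∫⁻ z in s ×ℂ t, f z = ∫⁻ y in t, ∫⁻ x in s, f (x + y * I) := by
  have hst : MeasurableSet (s ×ℂ t) := (measurable_re hs).inter (measurable_im ht)
  have hpre : measurableEquivRealProd.symm ⁻¹' (s ×ℂ t) = s ×ˢ t := rfl
  rw [← volume_preserving_equiv_real_prod.symm.setLIntegral_comp_preimage hst hf, hpre,
    Measure.volume_eq_prod, ← Measure.prod_restrict, lintegral_prod_symm _ (by fun_prop)]
  simp only [measurableEquivRealProd_symm_apply, mk_eq_add_mul_I]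

lemma exists_lintegral_horizontal_le {f : ℂ → ℝ≥0∞} (hf : Measurable f) (a b T : ℝ) {N : Set ℝ}
    (hN : volume N = 0) : ∃ Y ∈ Icc T (T + 1), Y ∉ N ∧
      ∫⁻ x in Icc a b, f (x + Y * I) ≤ ∫⁻ z in Icc a b ×ℂ Icc T (T + 1), f z := by
  have hmeas : Measurable fun Y : ℝ ↦ ∫⁻ x in Icc a b, f (x + Y * I) :=
    Measurable.lintegral_prod_right' (f := fun p : ℝ × ℝ ↦ f (p.2 + p.1 * I)) (by fun_prop)
  have hprob : IsProbabilityMeasure (volume.restrict (Icc T (T + 1))) := ⟨by simp⟩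
  obtain ⟨Y, hYN, hY⟩ := exists_notMem_null_le_lintegral (μ := volume.restrict (Icc T (T + 1)))
    hmeas.aemeasurable (N := N ∪ (Icc T (T + 1))ᶜ) (measure_union_null
      (Measure.absolutelyContinuous_of_le Measure.restrict_le_self hN)
      (by rw [Measure.restrict_apply measurableSet_Icc.compl, compl_inter_self, measure_empty]))
  rw [mem_union, not_or, notMem_compl_iff] at hYN
  refine ⟨Y, hYN.2, hYN.1,
    hY.trans_eq (setLIntegral_reProdIm hf measurableSet_Icc measurableSet_Icc).symm⟩

end LerchZeta

namespace LerchZeta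

open Set MeasureTheory
open scoped Interval

namespace BalancedNodes

/-- The nodes whose tent is the hat function `x ↦ max (r - |x - c|) 0`. -/
noncomputable def hat (c r : ℝ) : BalancedNodes (Fin 3) where
  weight := ![1, -2, 1]
  node := ![c - r, c, c + r]
  sum_weight := by simp [Fin.sum_univ_three]; norm_num
  sum_weight_mul_node := by simp [Fin.sum_univ_three]; ring

lemma hat_node_mem_Icc {c r : ℝ} (hr : 0 ≤ r) (i : Fin 3) :
    (hat c r).node i ∈ Icc (c - r) (c + r) := by
  fin_cases i <;> constructor <;> simp [hat] <;> linarith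

lemma sum_hat_weight_mul (c r : ℝ) (f : ℝ → ℝ) :
    ∑ i, (hat c r).weight i * f ((hat c r).node i) = f (c - r) - 2 * f c + f (c + r) := by
  simp only [hat, Fin.sum_univ_three, Matrix.cons_val_zero, Matrix.cons_val_one, Matrix.cons_val]
  ring

lemma tent_hat {c r : ℝ} (hr : 0 ≤ r) (x : ℝ) : (hat c r).tent x = max (r - |x - c|) 0 := by
  simp only [tent, hat, Fin.sum_univ_three, Matrix.cons_val_zero, Matrix.cons_val_one,
    Matrix.cons_val]
  grind

/-- The nodes whose tent rises linearly from `0` to `1` on `[p₀, p₁]`, equals `1` on `[p₁, q₀]` and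
returns to `0` on `[q₀, q₁]`. -/
noncomputable def trapezoid {p₀ p₁ q₀ q₁ : ℝ} (hp : p₀ < p₁) (hq : q₀ < q₁) :
    BalancedNodes (Fin 4) where
  weight := ![(p₁ - p₀)⁻¹, -(p₁ - p₀)⁻¹, -(q₁ - q₀)⁻¹, (q₁ - q₀)⁻¹]
  node := ![p₀, p₁, q₀, q₁]
  sum_weight := by simp [Fin.sum_univ_four]
  sum_weight_mul_node := by
    have hp' : p₁ - p₀ ≠ 0 := (sub_pos.mpr hp).ne'
    have hq' : q₁ - q₀ ≠ 0 := (sub_pos.mpr hq).ne'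
    simp only [Fin.sum_univ_four, Matrix.cons_val_zero, Matrix.cons_val_one, Matrix.cons_val]
    field_simp
    ring

section Trapezoid

variable {p₀ p₁ q₀ q₁ : ℝ} (hp : p₀ < p₁) (hq : q₀ < q₁)

lemma sum_trapezoid_weight_mul (f : ℝ → ℝ) :
    ∑ i, (trapezoid hp hq).weight i * f ((trapezoid hp hq).node i) =
      (f q₁ - f q₀) / (q₁ - q₀) - (f p₁ - f p₀) / (p₁ - p₀) := by
  simp only [trapezoid, Fin.sum_univ_four, Matrix.cons_val_zero, Matrix.cons_val_one,
    Matrix.cons_val]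
  ring

lemma trapezoid_node_mem_Icc (hpq : p₁ ≤ q₀) (i : Fin 4) :
    (trapezoid hp hq).node i ∈ Icc p₀ q₁ := by
  fin_cases i <;> constructor <;> simp [trapezoid] <;> linarith

lemma tent_trapezoid (x : ℝ) : (trapezoid hp hq).tent x =
    (max (x - p₀) 0 - max (x - p₁) 0) / (p₁ - p₀)
      - (max (x - q₀) 0 - max (x - q₁) 0) / (q₁ - q₀) := by
  simp only [tent, trapezoid, Fin.sum_univ_four, Matrix.cons_val_zero, Matrix.cons_val_one,
    Matrix.cons_val]
  ring

lemma tent_trapezoid_eq_one {x : ℝ} (hx : x ∈ Icc p₁ q₀) : (trapezoid hp hq).tent x = 1 := by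
  obtain ⟨h₁, h₂⟩ := hx
  rw [tent_trapezoid, max_eq_left (by linarith), max_eq_left (by linarith),
    max_eq_right (by linarith), max_eq_right (by linarith), sub_sub_sub_cancel_left,
    div_self (sub_pos.mpr hp).ne', sub_self, zero_div, sub_zero]

lemma tent_trapezoid_mem_Icc (hpq : p₁ ≤ q₀) (x : ℝ) :
    (trapezoid hp hq).tent x ∈ Icc 0 1 := by
  have hp' := sub_pos.mpr hp
  have hq' := sub_pos.mpr hq
  rcases le_total x q₀ with hx | hx
  · rw [tent_trapezoid, max_eq_right (by linarith : x - q₀ ≤ 0),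
      max_eq_right (by linarith : x - q₁ ≤ 0), sub_self, zero_div, sub_zero]
    exact ⟨div_nonneg (by grind) hp'.le, (div_le_one hp').mpr (by grind)⟩
  · rw [tent_trapezoid, max_eq_left (by linarith : 0 ≤ x - p₀),
      max_eq_left (by linarith : 0 ≤ x - p₁), sub_sub_sub_cancel_left, div_self hp'.ne']
    exact ⟨sub_nonneg.mpr ((div_le_one hq').mpr (by grind)),
      sub_le_self _ (div_nonneg (by grind) hq'.le)⟩

/-- Integration by parts turns the trapezoid into the difference of the mean values of a primitive
of `u` over `[q₀, q₁]` and over `[p₀, p₁]`. -/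
lemma exists_integral_trapezoid_mul_eq (hpq : p₁ ≤ q₀) {u : ℝ → ℝ}
    (hu : ContinuousOn u (Icc p₀ q₁)) : ∃ ξ ∈ Icc p₀ p₁, ∃ η ∈ Icc q₀ q₁,
      ∫ t in p₀..q₁, (trapezoid hp hq).tent t * u t = ∫ t in ξ..η, u t := by
  have hle : p₀ ≤ q₁ := by linarith
  obtain ⟨v, hv, huv⟩ : ∃ v : ℝ → ℝ, Continuous v ∧ EqOn u v (Icc p₀ q₁) :=
    ⟨IccExtend hle ((Icc p₀ q₁).domRestrict u),
      (continuousOn_iff_continuous_domRestrict.mp hu).Icc_extend',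
      fun t ht ↦ (IccExtend_of_mem hle ((Icc p₀ q₁).domRestrict u) ht).symm⟩
  have hprim {w : ℝ → ℝ} (hw : Continuous w) (x : ℝ) :
      HasDerivAt (fun y ↦ ∫ t in p₀..y, w t) (w x) x :=
    (hw.integral_hasStrictDerivAt p₀ x).hasDerivAt
  have hV : Continuous fun y ↦ ∫ t in p₀..y, v t :=
    continuous_iff_continuousAt.mpr fun x ↦ (hprim hv x).continuousAt
  set W : ℝ → ℝ := fun x ↦ ∫ y in p₀..x, ∫ t in p₀..y, v t
  have hslope {a b : ℝ} (hab : a < b) : ∃ ξ ∈ Icc a b, ∫ t in p₀..ξ, v t = (W b - W a) / (b - a) :=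
    (exists_hasDerivAt_eq_slope W _ hab
      (fun x _ ↦ (hprim hV x).continuousAt.continuousWithinAt) fun x _ ↦ hprim hV x).imp
      fun _ h ↦ h.imp_left fun hξ ↦ Ioo_subset_Icc_self hξ
  obtain ⟨ξ, hξ, hWξ⟩ := hslope hp
  obtain ⟨η, hη, hWη⟩ := hslope hq
  refine ⟨ξ, hξ, η, hη, ?_⟩
  calc ∫ t in p₀..q₁, (trapezoid hp hq).tent t * u t
      = ∫ t in p₀..q₁, (trapezoid hp hq).tent t • v t := by
        refine intervalIntegral.integral_congr fun t ht ↦ ?_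
        rw [uIcc_of_le hle] at ht
        simp only [huv ht, smul_eq_mul]
    _ = (∫ t in p₀..η, v t) - ∫ t in p₀..ξ, v t := by
        rw [integral_tent_smul _ (trapezoid_node_mem_Icc hp hq hpq) (f := W)
          (fun x _ ↦ hprim hV x) (fun x _ ↦ hprim hv x) hv.continuousOn, hWξ, hWη]
        exact sum_trapezoid_weight_mul hp hq W
    _ = ∫ t in ξ..η, v t :=
        intervalIntegral.integral_interval_sub_left (hv.intervalIntegrable _ _)
          (hv.intervalIntegrable _ _)
    _ = ∫ t in ξ..η, u t := by
        refine intervalIntegral.integral_congr fun t ht ↦ (huv ?_).symm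
        exact uIcc_subset_Icc ⟨hξ.1, by linarith [hξ.2]⟩ ⟨by linarith [hη.1], hη.2⟩ ht

end Trapezoid

end BalancedNodes

end LerchZeta

namespace IsLerch

open Complex Filter Topology Set MeasureTheory LerchZeta
open scoped Real

section Zeros

variable {l a : ℝ} {F : ℂ → ℂ} (hF : IsLerch l a F)

include hF

lemma analyticAt {s : ℂ} (hs : s ≠ 1) : AnalyticAt ℂ F s :=
  DifferentiableOn.analyticAt (s := {1}ᶜ) (fun z hz ↦ (hF.1 z hz).differentiableWithinAt)
    (isOpen_compl_singleton.mem_nhds hs)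

lemma measurable : Measurable F :=
  ContinuousOn.measurable_of_countable_compl (s := {1}ᶜ)
    (fun z hz ↦ (hF.1 z hz).continuousAt.continuousWithinAt) (by simp)

lemma measurable_normalizedLerch : Measurable (normalizedLerch a F) :=
  (measurable_id.const_pow (a : ℂ)).mul hF.measurable

variable (ha : a ∈ Ioc (0 : ℝ) 1)

include ha

lemma differentiableAt_normalizedLerch {s : ℂ} (hs : s ≠ 1) :
    DifferentiableAt ℂ (normalizedLerch a F) s :=
  (differentiableAt_id.const_cpow (Or.inl (ofReal_ne_zero.2 ha.1.ne'))).mul (hF.1 s hs)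

lemma analyticAt_normalizedLerch {s : ℂ} (hs : s ≠ 1) : AnalyticAt ℂ (normalizedLerch a F) s :=
  DifferentiableOn.analyticAt (s := {1}ᶜ)
    (fun _ hz ↦ (hF.differentiableAt_normalizedLerch ha hz).differentiableWithinAt)
    (isOpen_compl_singleton.mem_nhds hs)

lemma analyticOrderNatAt_normalizedLerch {s : ℂ} (hs : s ≠ 1) :
    analyticOrderNatAt (normalizedLerch a F) s = zeroOrder F s := by
  have ha0 : (a : ℂ) ≠ 0 := ofReal_ne_zero.2 ha.1.ne'
  have hpow : AnalyticAt ℂ (fun s : ℂ ↦ (a : ℂ) ^ s) s :=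
    Differentiable.analyticAt (fun z ↦ differentiableAt_id.const_cpow (Or.inl ha0)) s
  have hord : analyticOrderAt (fun s : ℂ ↦ (a : ℂ) ^ s) s = 0 := by
    rw [hpow.analyticOrderAt_eq_zero]
    exact cpow_ne_zero_iff.2 (Or.inl ha0)
  rw [zeroOrder, dif_pos (hF.analyticAt hs), analyticOrderNatAt,
    show normalizedLerch a F = (fun s : ℂ ↦ (a : ℂ) ^ s) * F from rfl,
    analyticOrderAt_mul hpow (hF.analyticAt hs), hord, zero_add]

lemma normalizedLerch_eq_normalizedSeries {s : ℂ} (hs : 1 < s.re) :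
    normalizedLerch a F s = normalizedSeries l a s := by
  have ha0 : (a : ℂ) ≠ 0 := ofReal_ne_zero.2 ha.1.ne'
  rw [normalizedLerch, hF.2 s hs, lerchSeries_eq_cpow_mul ha hs, ← mul_assoc, ← cpow_add _ _ ha0,
    add_neg_cancel, cpow_zero, one_mul]

lemma ne_zero_of_one_add_le_re {s : ℂ} (hs : 1 + a ≤ s.re) : F s ≠ 0 := by
  rw [hF.2 s (by linarith [ha.1]), lerchSeries_eq_cpow_mul ha (by linarith [ha.1])]
  exact mul_ne_zero (cpow_ne_zero_iff.2 (Or.inl (ofReal_ne_zero.2 ha.1.ne')))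
    (normalizedSeries_ne_zero ha.1 hs)

variable (hl : l ∈ Ioc (0 : ℝ) 1)

include hl

lemma finite_zeros_of_isCompact {K : Set ℂ} (hK : IsCompact K) : {s ∈ K | F s = 0}.Finite := by
  have hzero : ∀ s, F s = 0 → s ∈ ({0, 1} : Set ℂ) ∪ {s | entireLerch hl ha s = 0} := by
    intro s hs
    by_cases h0 : s = 0
    · simp [h0]
    by_cases h1 : s = 1
    · simp [h1]
    exact Or.inr (by rw [mem_ofPred_eq, hF.entireLerch_eq hl ha h0 h1, hs, mul_zero])
  by_contra hinf
  have hinf' : ({s ∈ K | F s = 0} \ {0, 1}).Infinite := Set.Infinite.sdiff hinf (by simp)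
  obtain ⟨z, -, hz⟩ := hinf'.exists_accPt_of_subset_isCompact hK fun s hs ↦ hs.1.1
  rw [accPt_iff_frequently_nhdsNE] at hz
  have hE := (differentiable_entireLerch hl ha).differentiableOn.analyticOnNhd isOpen_univ
    |>.eqOn_zero_of_preconnected_of_frequently_eq_zero isPreconnected_univ (mem_univ z)
      (hz.mono fun s hs ↦ (hzero s hs.1.2).resolve_left hs.2)
  have h3 := hE (mem_univ 3)
  rw [hF.entireLerch_eq hl ha (by norm_num) (by norm_num)] at h3
  exact mul_ne_zero (by norm_num) (hF.ne_zero_of_one_add_le_re ha (by simp; linarith [ha.2])) h3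

lemma countable_zeros : {s | F s = 0}.Countable := by
  refine (countable_iUnion fun n : ℕ ↦ (hF.finite_zeros_of_isCompact ha hl
    (isCompact_closedBall 0 n)).countable).mono fun s hs ↦ ?_
  obtain ⟨n, hn⟩ := exists_nat_ge ‖s‖
  exact mem_iUnion.2 ⟨n, mem_closedBall_zero_iff.2 hn, hs⟩

end Zeros

end IsLerch

namespace LerchZeta

open Complex Set MeasureTheory

/-- The zeros `β + iγ` of `F` with `-1 ≤ β < 1 + a` and `0 < γ ≤ T`. -/
def nontrivialZeros (a : ℝ) (F : ℂ → ℂ) (T : ℝ) : Set ℂ :=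
  {ρ : ℂ | F ρ = 0 ∧ -1 ≤ ρ.re ∧ ρ.re < 1 + a ∧ 0 < ρ.im ∧ ρ.im ≤ T}

/-- A height `Y` at which `F` has no zero, and at which `log ‖normalizedLerch a F‖` has mean value
`O(K)` over the segment `[-n, n + 4]`: the horizontal lines along which a contour may be drawn. -/
structure IsGoodHeight (a : ℝ) (F : ℂ → ℂ) (n : ℕ) (K Y : ℝ) : Prop where
  im_ne : ∀ s, F s = 0 → s.im ≠ Y
  lintegral_le : ∫⁻ x in Icc (-n : ℝ) (n + 4), ‖Real.log ‖normalizedLerch a F (x + Y * I)‖‖ₑ ≤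
    ENNReal.ofReal K

lemma Icc_reProdIm_Icc_subset_closedBall (c : ℂ) {r₁ r₂ R : ℝ} (hR : r₁ + r₂ ≤ R) :
    Icc (c.re - r₁) (c.re + r₁) ×ℂ Icc (c.im - r₂) (c.im + r₂) ⊆ Metric.closedBall c R := by
  rintro z ⟨⟨h₁, h₂⟩, ⟨h₃, h₄⟩⟩
  rw [mem_closedBall_iff_norm]
  have hre : |(z - c).re| ≤ r₁ := by rw [sub_re, abs_le]; constructor <;> linarith
  have him : |(z - c).im| ≤ r₂ := by rw [sub_im, abs_le]; constructor <;> linarith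
  linarith [norm_le_abs_re_add_abs_im (z - c)]

lemma IsGoodHeight.abs_integral_mul_log_le {a : ℝ} {F : ℂ → ℂ} {n : ℕ} {K Y : ℝ}
    (hY : IsGoodHeight a F n K Y) (hK : 0 ≤ K) {f : ℝ → ℝ} {B : ℝ} (hf : ∀ x, |f x| ≤ B) :
    |∫ x in (-n : ℝ)..(n + 4), f x * Real.log ‖normalizedLerch a F (x + Y * I)‖| ≤ B * K := by
  have hB : 0 ≤ B := (abs_nonneg _).trans (hf 0)
  have hn : -(n : ℝ) ≤ n + 4 := by linarith [n.cast_nonneg (α := ℝ)]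
  rw [← ENNReal.ofReal_le_ofReal_iff (by positivity), ← Real.enorm_eq_ofReal_abs,
    intervalIntegral.integral_of_le hn]
  calc _ ≤ ∫⁻ x in Ioc (-n : ℝ) (n + 4),
        ‖f x * Real.log ‖normalizedLerch a F (x + Y * I)‖‖ₑ := enorm_integral_le_lintegral_enorm _
    _ ≤ ∫⁻ x in Icc (-n : ℝ) (n + 4),
        ENNReal.ofReal B * ‖Real.log ‖normalizedLerch a F (x + Y * I)‖‖ₑ := by
        refine (lintegral_mono_set Ioc_subset_Icc_self).trans (lintegral_mono fun x ↦ ?_)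
        rw [enorm_mul, Real.enorm_eq_ofReal_abs (f x)]
        gcongr
        exact hf x
    _ ≤ ENNReal.ofReal B * ENNReal.ofReal K := by
        rw [lintegral_const_mul' _ _ ENNReal.ofReal_ne_top]
        gcongr
        exact hY.lintegral_le
    _ = ENNReal.ofReal (B * K) := (ENNReal.ofReal_mul hB).symm

end LerchZeta

namespace IsLerch

open Complex Filter Topology Set MeasureTheory LerchZeta
open scoped Real

section GoodHeights

variable {l a : ℝ} {F : ℂ → ℂ} (hF : IsLerch l a F) (hl : l ∈ Ioc (0 : ℝ) 1)
  (ha : a ∈ Ioc (0 : ℝ) 1)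

include hF hl ha

lemma finite_nontrivialZeros (T : ℝ) : (nontrivialZeros a F T).Finite := by
  refine (hF.finite_zeros_of_isCompact ha hl
    (isCompact_Icc.reProdIm isCompact_Icc : IsCompact (Icc (-1) (1 + a) ×ℂ Icc 0 T))).subset ?_
  rintro ρ ⟨hρ, h1, h2, h3, h4⟩
  exact ⟨⟨⟨h1, h2.le⟩, ⟨h3.le, h4⟩⟩, hρ⟩

lemma exists_norm_normalizedLerch_le_exp (n : ℕ) : ∃ K : ℝ, 0 ≤ K ∧ ∀ T : ℝ, 3 ≤ T → ∀ s : ℂ,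
    -(n + 1 : ℝ) ≤ s.re → s.re ≤ n + 5 → 1 ≤ s.im → s.im ≤ 2 * T →
      ‖normalizedLerch a F s‖ ≤ Real.exp (K * Real.log T) := by
  obtain ⟨C, hC0, hC⟩ := hF.exists_norm_le_pow hl ha (n := n + 1) (by lia) (R := n + 5)
    (by linarith [n.cast_nonneg (α := ℝ)])
  have ha0 := ha.1
  set D : ℝ := a ^ (-(n + 1) : ℝ) * C with hD
  have hD0 : 0 ≤ D := by positivity
  refine ⟨D + 2 * (n + 4), by positivity, fun T hT s h₁ h₂ h₃ h₄ ↦ ?_⟩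
  have hT0 : 0 < T := by linarith
  have hlog : 1 ≤ Real.log T := by
    rw [Real.le_log_iff_exp_le hT0]
    linarith [Real.exp_one_lt_d9]
  have hF_le : ‖F s‖ ≤ C * (T ^ 2) ^ (n + 4) := by
    refine (hC s (by push_cast; linarith) h₂ (h₃.trans (le_abs_self _))).trans ?_
    rw [abs_of_pos (by linarith)]
    gcongr
    nlinarith
  have hpow_le : ‖(a : ℂ) ^ s‖ ≤ a ^ (-(n + 1) : ℝ) := by
    rw [norm_cpow_eq_rpow_re_of_pos ha0]
    exact Real.rpow_le_rpow_of_exponent_ge ha0 ha.2 h₁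
  have hD_le : D ≤ Real.exp (D * Real.log T) := by
    linarith [Real.add_one_le_exp (D * Real.log T), le_mul_of_one_le_right hD0 hlog]
  calc ‖normalizedLerch a F s‖ ≤ a ^ (-(n + 1) : ℝ) * (C * (T ^ 2) ^ (n + 4)) := by
        rw [normalizedLerch, norm_mul]
        gcongr
    _ = D * (T ^ 2) ^ (n + 4) := by rw [hD, mul_assoc]
    _ ≤ Real.exp (D * Real.log T) * (T ^ 2) ^ (n + 4) := by gcongr
    _ = Real.exp (D * Real.log T) * Real.exp (Real.log T) ^ (2 * (n + 4)) := by
        rw [Real.exp_log hT0, ← pow_mul]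
    _ = Real.exp ((D + 2 * (n + 4)) * Real.log T) := by
        rw [← Real.exp_nat_mul, ← Real.exp_add]
        push_cast
        ring_nf

lemma exists_lintegral_enorm_log_norm_le (n : ℕ) : ∃ C : ℝ, 0 ≤ C ∧ ∀ T : ℝ, n + 4 ≤ T →
    ∫⁻ z in Icc (-n : ℝ) (n + 4) ×ℂ Icc T (T + 1), ‖Real.log ‖normalizedLerch a F z‖‖ₑ ≤
      ENNReal.ofReal (C * Real.log T) := by
  obtain ⟨K, hK0, hK⟩ := hF.exists_norm_normalizedLerch_le_exp hl ha n
  refine ⟨π * (n + 3) ^ 2 * (2 * K + 1), by positivity, fun T hT ↦ ?_⟩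
  have : (0 : ℝ) ≤ n := n.cast_nonneg
  set c : ℂ := 2 + (T + 1 / 2 : ℝ) * I with hc
  have hcre : c.re = 2 := by simp [hc]
  have hcim : c.im = T + 1 / 2 := by simp [hc]
  have hball : ∀ z ∈ Metric.closedBall c (n + 3), |z.re - 2| ≤ n + 3 ∧
      |z.im - (T + 1 / 2)| ≤ n + 3 := fun z hz ↦ by
    rw [mem_closedBall_iff_norm] at hz
    rw [← hcim, ← hcre, ← sub_re, ← sub_im]
    exact ⟨(abs_re_le_norm _).trans hz, (abs_im_le_norm _).trans hz⟩
  have hsub : Icc (-n : ℝ) (n + 4) ×ℂ Icc T (T + 1) ⊆ Metric.closedBall c (n + 3) := by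
    convert Icc_reProdIm_Icc_subset_closedBall c (show (n + 2 : ℝ) + 1 / 2 ≤ n + 3 by linarith)
      using 3 <;> linarith
  have hanalytic : AnalyticOnNhd ℂ (normalizedLerch a F) (Metric.closedBall c (n + 3)) := by
    refine fun z hz ↦ hF.analyticAt_normalizedLerch ha fun h1 ↦ ?_
    have him := (abs_le.1 (hball z hz).2).1
    rw [h1, one_im] at him
    linarith
  have hlower : 1 / 3 ≤ ‖normalizedLerch a F c‖ := by
    rw [hF.normalizedLerch_eq_normalizedSeries ha (by rw [hcre]; norm_num)]
    exact one_third_le_norm_normalizedSeries l ha hcre.ge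
  have hlog : -Real.log T ≤ Real.log ‖normalizedLerch a F c‖ := by
    rw [← Real.log_inv]
    refine Real.log_le_log (inv_pos.2 (by linarith)) (le_trans ?_ hlower)
    rw [inv_eq_one_div]
    exact one_div_le_one_div_of_le (by norm_num) (by linarith)
  have hlogT : 0 ≤ Real.log T := Real.log_nonneg (by linarith)
  refine (lintegral_mono_set hsub).trans ((lintegral_closedBall_enorm_log_norm_le (by linarith)
    hanalytic (mul_nonneg hK0 hlogT) (fun z hz ↦ ?_)
    (norm_pos_iff.1 (by linarith))).trans (ENNReal.ofReal_le_ofReal ?_))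
  · obtain ⟨hre, him⟩ := hball z hz
    rw [abs_le] at hre him
    exact hK T (by linarith) z (by linarith) (by linarith) (by linarith) (by linarith)
  · rw [mul_assoc _ _ (Real.log T)]
    exact mul_le_mul_of_nonneg_left (by linarith) (by positivity)

lemma exists_isGoodHeight (n : ℕ) : ∃ C : ℝ, 0 ≤ C ∧ ∀ T : ℝ, n + 4 ≤ T →
    ∃ Y ∈ Icc T (T + 1), IsGoodHeight a F n (C * Real.log T) Y := by
  obtain ⟨C, hC0, hC⟩ := hF.exists_lintegral_enorm_log_norm_le hl ha n
  refine ⟨C, hC0, fun T hT ↦ ?_⟩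
  have hmeas : Measurable fun z ↦ ‖Real.log ‖normalizedLerch a F z‖‖ₑ :=
    (Real.measurable_log.comp hF.measurable_normalizedLerch.norm).enorm
  obtain ⟨Y, hY, hYN, hle⟩ := exists_lintegral_horizontal_le hmeas (-n) (n + 4) T
    (((hF.countable_zeros ha hl).image im).measure_zero volume)
  exact ⟨Y, hY, fun s hs h ↦ hYN ⟨s, hs, h⟩, hle.trans (hC T hT)⟩

end GoodHeights

end IsLerch

namespace LerchZeta

open Set MeasureTheory
open scoped Interval Real

section MainTerm

variable (l a : ℝ)

/-- The expected size of `2π` times the sum of `b + β` over the nontrivial zeros up to height `T`;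
for `b = n` it is a primitive of `leftLogTerm l a n`. -/
noncomputable def mainTerm (b T : ℝ) : ℝ :=
  (b + 1 / 2) * (T * Real.log (T / (2 * π)) - T) - T * (b * Real.log a + (b + 1) * Real.log l)

lemma hasDerivAt_mainTerm (n : ℕ) {t : ℝ} (ht : 0 < t) :
    HasDerivAt (mainTerm l a n) (leftLogTerm l a n t) t := by
  have hlog : HasDerivAt (fun t : ℝ ↦ Real.log (t / (2 * π))) (1 / (2 * π) / (t / (2 * π))) t :=
    ((hasDerivAt_id t).div_const _).log (by positivity)
  refine (((((hasDerivAt_id' t).mul hlog).sub (hasDerivAt_id' t)).const_mul (n + 1 / 2 : ℝ)).sub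
    ((hasDerivAt_id' t).mul_const (n * Real.log a + (n + 1) * Real.log l))).congr_deriv ?_
  rw [leftLogTerm]
  field_simp
  ring

lemma continuousOn_leftLogTerm (n : ℕ) : ContinuousOn (leftLogTerm l a n) (Ioi 0) := by
  unfold leftLogTerm
  refine ContinuousOn.sub (ContinuousOn.sub (continuousOn_const.mul ?_) continuousOn_const)
    continuousOn_const
  exact (continuousOn_id.div_const _).log fun t ht ↦ by
    have : 0 < t := ht
    simp only [id]
    positivity

lemma integral_leftLogTerm (n : ℕ) {x y : ℝ} (hx : 0 < x) (hxy : x ≤ y) :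
    ∫ t in x..y, leftLogTerm l a n t = mainTerm l a n y - mainTerm l a n x := by
  have hpos : [[x, y]] ⊆ Ioi 0 := fun t ht ↦ hx.trans_le (uIcc_of_le hxy ▸ ht).1
  exact intervalIntegral.integral_eq_sub_of_hasDerivAt
    (fun t ht ↦ hasDerivAt_mainTerm l a n (hpos ht))
    ((continuousOn_leftLogTerm l a n).mono hpos).intervalIntegrable

lemma one_le_log {t : ℝ} (ht : 3 ≤ t) : 1 ≤ Real.log t := by
  rw [Real.le_log_iff_exp_le (by linarith)]
  linarith [Real.exp_one_lt_d9]

lemma log_add_three_le {t : ℝ} (ht : 3 ≤ t) : Real.log (t + 3) ≤ 2 * Real.log t := by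
  rw [← Real.log_rpow (by linarith), Real.rpow_two]
  exact Real.log_le_log (by linarith) (by nlinarith)

lemma exists_abs_leftLogTerm_le (n : ℕ) : ∃ C : ℝ, 0 ≤ C ∧ ∀ t : ℝ, 3 ≤ t →
    |leftLogTerm l a n t| ≤ C * Real.log t := by
  set D : ℝ := (n + 1 / 2) * |Real.log (2 * π)| + n * |Real.log a| + (n + 1) * |Real.log l|
  refine ⟨n + 1 / 2 + D, by positivity, fun t ht ↦ ?_⟩
  have hlog := one_le_log ht
  have hD : D ≤ D * Real.log t := le_mul_of_one_le_right (by positivity) hlog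
  have hsplit : leftLogTerm l a n t = (n + 1 / 2) * Real.log t - ((n + 1 / 2) * Real.log (2 * π) +
      n * Real.log a + (n + 1) * Real.log l) := by
    rw [leftLogTerm, Real.log_div (by linarith) (by positivity)]
    ring
  have hconst : |(n + 1 / 2) * Real.log (2 * π) + n * Real.log a + (n + 1) * Real.log l| ≤ D := by
    refine (abs_add_three _ _ _).trans_eq ?_
    rw [abs_mul, abs_mul, abs_mul, abs_of_pos (by positivity : (0 : ℝ) < n + 1 / 2), Nat.abs_cast,
      abs_of_pos (by positivity : (0 : ℝ) < n + 1)]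
  have hmain : |(n + 1 / 2) * Real.log t| = (n + 1 / 2) * Real.log t :=
    abs_of_nonneg (by positivity)
  rw [hsplit]
  linarith [abs_sub ((n + 1 / 2) * Real.log t) ((n + 1 / 2) * Real.log (2 * π) +
    n * Real.log a + (n + 1) * Real.log l)]

lemma exists_abs_mainTerm_sub_le (n : ℕ) : ∃ C : ℝ, 0 ≤ C ∧ ∀ x y : ℝ, 3 ≤ x → x ≤ y →
    y ≤ x + 3 → |mainTerm l a n y - mainTerm l a n x| ≤ C * Real.log x := by
  obtain ⟨C, hC0, hC⟩ := exists_abs_leftLogTerm_le l a n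
  refine ⟨6 * C, by positivity, fun x y hx hxy hy ↦ ?_⟩
  have hbound := intervalIntegral.norm_integral_le_of_norm_le_const (a := x) (b := y)
    (f := leftLogTerm l a n) (C := C * (2 * Real.log x)) fun t ht ↦ by
      rw [uIoc_of_le hxy] at ht
      refine (hC t (hx.trans ht.1.le)).trans (mul_le_mul_of_nonneg_left ?_ hC0)
      exact (Real.log_le_log (by linarith [ht.1]) (ht.2.trans hy)).trans (log_add_three_le hx)
  rw [integral_leftLogTerm l a n (by linarith) hxy, Real.norm_eq_abs] at hbound
  refine hbound.trans ?_
  rw [abs_of_nonneg (by linarith)]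
  have := one_le_log hx
  calc C * (2 * Real.log x) * (y - x) ≤ C * (2 * Real.log x) * 3 := by gcongr; linarith
    _ = 6 * C * Real.log x := by ring

end MainTerm

lemma abs_integral_sub_integral_le_mul_log {f g : ℝ → ℝ} {C x y : ℝ} (hC : 0 ≤ C) (hx : 1 ≤ x)
    (hxy : x ≤ y) (hf : IntervalIntegrable f volume x y) (hg : IntervalIntegrable g volume x y)
    (h : ∀ t ∈ Icc x y, |f t - g t| ≤ C / t) :
    |(∫ t in x..y, f t) - ∫ t in x..y, g t| ≤ C * Real.log y := by
  have h0 : (0 : ℝ) ∉ [[x, y]] := fun h ↦ by linarith [(uIcc_of_le hxy ▸ h).1]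
  rw [← intervalIntegral.integral_sub hf hg]
  calc |∫ t in x..y, (f t - g t)| ≤ ∫ t in x..y, C * t⁻¹ :=
        intervalIntegral.norm_integral_le_of_norm_le (f := fun t ↦ f t - g t) hxy
          (ae_of_all _ fun t ht ↦ h t (Ioc_subset_Icc_self ht))
          ((intervalIntegrable_inv_iff.2 (Or.inr h0)).const_mul C)
    _ = C * Real.log (y / x) := by
        rw [intervalIntegral.integral_const_mul, integral_inv_of_pos (by linarith) (by linarith)]
    _ ≤ C * Real.log y := mul_le_mul_of_nonneg_left (Real.log_le_log
        (div_pos (by linarith) (by linarith)) (div_le_self (by linarith) hx)) hC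

end LerchZeta

namespace IsLerch

open Complex Filter Topology Set MeasureTheory LerchZeta
open scoped Interval Real

section VerticalLines

variable {l a : ℝ} {F : ℂ → ℂ} (hF : IsLerch l a F) (ha : a ∈ Ioc (0 : ℝ) 1)

include hF ha

lemma continuousOn_log_norm_normalizedLerch {x : ℝ} {s : Set ℝ}
    (hs : ∀ t ∈ s, 0 < t ∧ F (x + t * I) ≠ 0) :
    ContinuousOn (fun t : ℝ ↦ Real.log ‖normalizedLerch a F (x + t * I)‖) s := by
  intro t ht
  obtain ⟨ht0, hne⟩ := hs t ht
  have h1 : (x + t * I : ℂ) ≠ 1 := fun h ↦ ht0.ne' (by simpa using congrArg im h)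
  have hG0 : normalizedLerch a F (x + t * I) ≠ 0 :=
    mul_ne_zero (cpow_ne_zero_iff.2 (Or.inl (ofReal_ne_zero.2 ha.1.ne'))) hne
  have hcont : ContinuousAt (fun t : ℝ ↦ normalizedLerch a F (x + t * I)) t :=
    ContinuousAt.comp (g := normalizedLerch a F)
      (hF.differentiableAt_normalizedLerch ha h1).continuousAt (by fun_prop)
  exact (hcont.norm.log (norm_ne_zero_iff.2 hG0)).continuousWithinAt

lemma abs_integral_log_norm_right_le {x : ℝ} (hx : 2 ≤ x) (t₁ t₂ : ℝ) :
    |∫ t in t₁..t₂, Real.log ‖normalizedLerch a F (x + t * I)‖| ≤ 9 := by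
  refine le_trans (le_of_eq ?_) (abs_integral_log_norm_normalizedSeries_le l ha hx t₁ t₂)
  simp only [fun t : ℝ ↦ hF.normalizedLerch_eq_normalizedSeries ha (s := x + t * I)
    (by simp; linarith)]

variable (hl : l ∈ Ioc (0 : ℝ) 1)

include hl

lemma exists_abs_integral_log_norm_left_sub_le {n : ℕ} (hn : 1 ≤ n) :
    ∃ C t₁ : ℝ, 0 ≤ C ∧ 3 ≤ t₁ ∧ ∀ x y : ℝ, t₁ ≤ x → x ≤ y →
      |(∫ t in x..y, Real.log ‖normalizedLerch a F ((-n : ℝ) + t * I)‖) -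
        (mainTerm l a n y - mainTerm l a n x)| ≤ C * Real.log y := by
  have hn' : (1 : ℝ) ≤ n := by exact_mod_cast hn
  obtain ⟨C, t₁, hC0, -, hC⟩ := hF.exists_abs_log_norm_left_sub_le hl ha hn
  obtain ⟨t₂, -, hne⟩ := hF.exists_ne_zero_of_re_le_neg_one hl ha (R := n) (by linarith)
  refine ⟨C + 9, max 3 (max t₁ t₂), by positivity, le_max_left _ _, fun x y hx hxy ↦ ?_⟩
  obtain ⟨hx3, hxt₁, hxt₂⟩ := And.imp_right max_le_iff.1 (max_le_iff.1 hx)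
  set f : ℝ → ℝ := fun t ↦ Real.log ‖normalizedLerch a F ((-n : ℝ) + t * I)‖
  set g : ℝ → ℝ := fun t ↦ Real.log ‖normalizedSeries (-a) l ((n + 1 : ℝ) + t * I)‖
  have hf : IntervalIntegrable f volume x y :=
    (hF.continuousOn_log_norm_normalizedLerch ha fun t ht ↦ by
      rw [uIcc_of_le hxy] at ht
      exact ⟨by linarith [ht.1], hne _ (by simp) (by simp; linarith) (by simp; linarith [ht.1])⟩
      ).intervalIntegrable
  have hg : Continuous g := continuous_log_norm_normalizedSeries (-a) hl (by linarith)
  have hg_neg : Continuous fun t ↦ g (-t) := hg.comp continuous_neg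
  have hterm : IntervalIntegrable (leftLogTerm l a n) volume x y :=
    ((continuousOn_leftLogTerm l a n).mono fun t ht ↦ by
      rw [uIcc_of_le hxy] at ht
      exact lt_of_lt_of_le (by linarith) ht.1).intervalIntegrable
  have hdiff := abs_integral_sub_integral_le_mul_log hC0 (by linarith) hxy hf
    (hterm.add (hg_neg.intervalIntegrable _ _)) fun t ht ↦ by
      simpa only [f, g, ofReal_neg] using hC t (hxt₁.trans ht.1)
  have hg_le : |∫ t in x..y, g (-t)| ≤ 9 := by
    rw [intervalIntegral.integral_comp_neg]
    exact abs_integral_log_norm_normalizedSeries_le (-a) hl (by linarith) _ _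
  rw [intervalIntegral.integral_add hterm (hg_neg.intervalIntegrable _ _),
    integral_leftLogTerm l a n (by linarith) hxy] at hdiff
  rw [abs_le] at hdiff hg_le ⊢
  constructor <;> linarith [hdiff.1, hdiff.2, hg_le.1, hg_le.2, one_le_log (hx3.trans hxy)]

end VerticalLines

end IsLerch

namespace LerchZeta

open Set MeasureTheory BalancedNodes
open scoped Interval Real

/-- The sum of `w ρ` over the nontrivial zeros `ρ` up to height `T`, counted with multiplicity. -/
noncomputable def zeroSum (a : ℝ) (F : ℂ → ℂ) (T : ℝ) (w : ℂ → ℝ) : ℝ :=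
  ∑ᶠ ρ ∈ nontrivialZeros a F T, (zeroOrder F ρ : ℝ) * w ρ

section ZeroSum

variable {a T T' : ℝ} {F : ℂ → ℂ} {v w : ℂ → ℝ}

lemma zeroSum_const_mul (c : ℝ) :
    zeroSum a F T (fun ρ ↦ c * w ρ) = c * zeroSum a F T w := by
  simp only [zeroSum, mul_left_comm _ c]
  exact (mul_finsum_mem _ _).symm

variable (hT : (nontrivialZeros a F T).Finite)

include hT

lemma zeroSum_add : zeroSum a F T (v + w) = zeroSum a F T v + zeroSum a F T w := by
  simp only [zeroSum, Pi.add_apply, mul_add]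
  exact finsum_mem_add_distrib hT

lemma zeroSum_le_zeroSum (hT' : (nontrivialZeros a F T').Finite)
    (hw : ∀ ρ ∈ nontrivialZeros a F T', 0 ≤ w ρ)
    (hvw : ∀ ρ ∈ nontrivialZeros a F T, v ρ ≤ if ρ.im ≤ T' then w ρ else 0) :
    zeroSum a F T v ≤ zeroSum a F T' w := by
  rw [zeroSum, zeroSum, finsum_mem_eq_finite_toFinset_sum _ hT,
    finsum_mem_eq_finite_toFinset_sum _ hT']
  calc ∑ ρ ∈ hT.toFinset, (zeroOrder F ρ : ℝ) * v ρ
      ≤ ∑ ρ ∈ hT.toFinset, if ρ.im ≤ T' then (zeroOrder F ρ : ℝ) * w ρ else 0 := by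
        refine Finset.sum_le_sum fun ρ hρ ↦ ?_
        rw [← mul_ite_zero]
        exact mul_le_mul_of_nonneg_left (hvw ρ (hT.mem_toFinset.1 hρ)) (Nat.cast_nonneg _)
    _ = ∑ ρ ∈ hT.toFinset with ρ.im ≤ T', (zeroOrder F ρ : ℝ) * w ρ :=
        (Finset.sum_filter _ _).symm
    _ ≤ ∑ ρ ∈ hT'.toFinset, (zeroOrder F ρ : ℝ) * w ρ := by
        refine Finset.sum_le_sum_of_subset_of_nonneg (fun ρ hρ ↦ ?_) fun ρ hρ _ ↦
          mul_nonneg (Nat.cast_nonneg _) (hw ρ (hT'.mem_toFinset.1 hρ))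
        obtain ⟨hρT, him⟩ := Finset.mem_filter.1 hρ
        obtain ⟨h0, h1, h2, h3, -⟩ := hT.mem_toFinset.1 hρT
        exact hT'.mem_toFinset.2 ⟨h0, h1, h2, h3, him⟩

variable {p q : ℝ} {χ : ℝ → ℝ} (hw : ∀ ρ : ℂ, -1 ≤ ρ.re → 0 ≤ w ρ)

include hw

lemma zeroSum_mul_le (hq : (nontrivialZeros a F q).Finite) (hχ : ∀ y, χ y ≤ 1)
    (hχq : ∀ y, q < y → χ y = 0) :
    zeroSum a F T (fun ρ ↦ w ρ * χ ρ.im) ≤ zeroSum a F q w := by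
  refine zeroSum_le_zeroSum hT hq (fun ρ hρ ↦ hw ρ hρ.2.1) fun ρ hρ ↦ ?_
  split_ifs with h
  · exact mul_le_of_le_one_right (hw ρ hρ.2.1) (hχ _)
  · rw [hχq _ (not_le.1 h), mul_zero]

lemma zeroSum_le_add_zeroSum_mul (hT' : (nontrivialZeros a F T').Finite)
    (hp : (nontrivialZeros a F p).Finite) (hTT' : T ≤ T') (hχ : ∀ y, 0 ≤ χ y)
    (hχ1 : ∀ y ∈ Icc p T, χ y = 1) :
    zeroSum a F T w ≤ zeroSum a F p w + zeroSum a F T' (fun ρ ↦ w ρ * χ ρ.im) := by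
  set w₁ : ℂ → ℝ := fun ρ ↦ if ρ.im ≤ p then w ρ else 0
  set w₂ : ℂ → ℝ := fun ρ ↦ if ρ.im ≤ p then 0 else w ρ
  have hsplit : w = w₁ + w₂ := by
    ext ρ
    by_cases h : ρ.im ≤ p <;> simp [w₁, w₂, h]
  have h₁ : zeroSum a F T w₁ ≤ zeroSum a F p w :=
    zeroSum_le_zeroSum hT hp (fun ρ hρ ↦ hw ρ hρ.2.1) fun ρ _ ↦ le_rfl
  have h₂ : zeroSum a F T w₂ ≤ zeroSum a F T' (fun ρ ↦ w ρ * χ ρ.im) := by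
    refine zeroSum_le_zeroSum hT hT' (fun ρ hρ ↦ mul_nonneg (hw ρ hρ.2.1) (hχ _)) fun ρ hρ ↦ ?_
    rw [if_pos (hρ.2.2.2.2.trans hTT')]
    by_cases h : ρ.im ≤ p
    · simpa only [w₂, if_pos h] using mul_nonneg (hw ρ hρ.2.1) (hχ _)
    · simp only [w₂, if_neg h]
      rw [hχ1 _ ⟨(not_le.1 h).le, hρ.2.2.2.2⟩, mul_one]
  rw [hsplit, zeroSum_add hT, ← hsplit]
  exact add_le_add h₁ h₂

end ZeroSum

lemma convex_reProdIm {s t : Set ℝ} (hs : Convex ℝ s) (ht : Convex ℝ t) :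
    Convex ℝ (s ×ℂ t) :=
  (hs.prod ht).linear_preimage Complex.equivRealProdLm.toLinearMap

section Horizontal

variable {a : ℝ} {F : ℂ → ℂ} {n : ℕ} {K p₀ p₁ q₀ q₁ : ℝ}

lemma IsGoodHeight.mono {K' Y : ℝ} (hY : IsGoodHeight a F n K Y) (hK : K ≤ K') :
    IsGoodHeight a F n K' Y :=
  ⟨hY.im_ne, hY.lintegral_le.trans (ENNReal.ofReal_le_ofReal hK)⟩

lemma abs_tent_hat_le {c r : ℝ} (hr : 0 ≤ r) (x : ℝ) : |(hat c r).tent x| ≤ r := by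
  rw [tent_hat hr, abs_of_nonneg (le_max_right _ _)]
  exact max_le (sub_le_self _ (abs_nonneg _)) hr

lemma tent_hat_of_mem_Icc {c r x : ℝ} (hr : 0 ≤ r) (hx : x ∈ Icc (c - r) c) :
    (hat c r).tent x = x - (c - r) := by
  rw [tent_hat hr, abs_of_nonpos (by linarith [hx.2]), max_eq_left (by linarith [hx.1])]
  ring

lemma ne_hat_node_of_mem_Ioo {c r x : ℝ} (hr : 0 ≤ r) (hx : x ∈ Ioo (c - r) c) (i : Fin 3) :
    x ≠ (hat c r).node i := by
  fin_cases i
  exacts [hx.1.ne', hx.2.ne, (show x < c + r by linarith [hx.2]).ne]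

lemma abs_sum_trapezoid_weight_mul_integral_le (hp : 1 ≤ p₁ - p₀) (hq : 1 ≤ q₁ - q₀)
    (hp' : p₀ < p₁) (hq' : q₀ < q₁) (hK : 0 ≤ K) (hp₀ : IsGoodHeight a F n K p₀)
    (hp₁ : IsGoodHeight a F n K p₁) (hq₀ : IsGoodHeight a F n K q₀)
    (hq₁ : IsGoodHeight a F n K q₁) {f : ℝ → ℝ} {B : ℝ} (hf : ∀ x, |f x| ≤ B) :
    |∑ j, (trapezoid hp' hq').weight j * ∫ x in (-n : ℝ)..(n + 4), f x *
      Real.log ‖normalizedLerch a F (x + (trapezoid hp' hq').node j * Complex.I)‖| ≤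
        4 * (B * K) := by
  set J : ℝ → ℝ := fun y ↦ ∫ x in (-n : ℝ)..(n + 4), f x *
    Real.log ‖normalizedLerch a F (x + y * Complex.I)‖
  have hdiv {x d : ℝ} (hd : 1 ≤ d) : |x / d| ≤ |x| := by
    rw [abs_div, abs_of_pos (show 0 < d by linarith)]
    exact div_le_self (_root_.abs_nonneg x) hd
  rw [sum_trapezoid_weight_mul hp' hq' J]
  linarith [abs_sub ((J q₁ - J q₀) / (q₁ - q₀)) ((J p₁ - J p₀) / (p₁ - p₀)),
    hdiv (x := J q₁ - J q₀) hq, hdiv (x := J p₁ - J p₀) hp, abs_sub (J q₁) (J q₀),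
    abs_sub (J p₁) (J p₀), hp₀.abs_integral_mul_log_le hK hf, hp₁.abs_integral_mul_log_le hK hf,
    hq₀.abs_integral_mul_log_le hK hf, hq₁.abs_integral_mul_log_le hK hf]

end Horizontal

end LerchZeta

namespace IsLerch

open Complex Filter Topology Set MeasureTheory LerchZeta LerchZeta.BalancedNodes
open scoped Interval Real

section ZeroCount

variable {l a : ℝ} {F : ℂ → ℂ} (hF : IsLerch l a F) (hl : l ∈ Ioc (0 : ℝ) 1)
  (ha : a ∈ Ioc (0 : ℝ) 1) {n : ℕ} (hn : 1 ≤ n) {t₁ : ℝ}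
  (hleft : ∀ s : ℂ, -(n + 1 : ℝ) ≤ s.re → s.re ≤ -1 → t₁ ≤ s.im → F s ≠ 0)

include hF ha hleft

lemma re_mem_Ioo_of_eq_zero {s : ℂ} (hs : F s = 0) (hre : -(n + 1 : ℝ) ≤ s.re) (him : t₁ ≤ s.im) :
    s.re ∈ Ioo (-1) (1 + a) :=
  ⟨lt_of_not_ge fun h ↦ hleft s hre h him hs,
    lt_of_not_ge fun h ↦ hF.ne_zero_of_one_add_le_re ha h hs⟩

include hl hn

lemma mem_filter_nontrivialZeros_iff (ht₁ : 0 ≤ t₁) {T : ℝ} (s : ℂ) :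
    s ∈ {ρ ∈ (hF.finite_nontrivialZeros hl ha T).toFinset | ρ.im ∈ Ioo t₁ T} ↔
      s ∈ Ioo (-(n + 1 : ℝ)) (n + 5) ×ℂ Ioo t₁ T ∧ normalizedLerch a F s = 0 := by
  have hn' : (1 : ℝ) ≤ n := by exact_mod_cast hn
  rw [Finset.mem_filter, Finite.mem_toFinset, normalizedLerch, mul_eq_zero,
    or_iff_right (cpow_ne_zero_iff.2 (Or.inl (ofReal_ne_zero.2 ha.1.ne')))]
  constructor
  · rintro ⟨⟨h0, h1, h2, -, -⟩, him⟩
    exact ⟨⟨⟨by linarith, by linarith [ha.2]⟩, him⟩, h0⟩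
  · rintro ⟨⟨hre, him⟩, h0⟩
    have h := hF.re_mem_Ioo_of_eq_zero ha hleft h0 hre.1.le him.1.le
    exact ⟨⟨h0, h.1.le, h.2, ht₁.trans_lt him.1, him.2.le⟩, him⟩

lemma two_pi_mul_zeroSum_eq_gridIntegral {ι : Type*} [Fintype ι] {B : BalancedNodes ι}
    {p q : ℝ} (ht₁ : 1 ≤ t₁) (hp : t₁ < p) (hpq : p ≤ q) (hB : ∀ j, B.node j ∈ Icc p q)
    (hB_ne : ∀ s, F s = 0 → ∀ j, s.im ≠ B.node j) :
    2 * π * zeroSum a F (q + 1) (fun ρ ↦ (n + ρ.re) * B.tent ρ.im) =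
      gridIntegral (hat 2 (n + 2)) B (-n) (n + 4) p q
        (fun z ↦ Real.log ‖normalizedLerch a F z‖) := by
  have hn' : (1 : ℝ) ≤ n := by exact_mod_cast hn
  have ha1 := ha.2
  have hr : (0 : ℝ) ≤ n + 2 := by linarith
  set U : Set ℂ := Ioo (-(n + 1 : ℝ)) (n + 5) ×ℂ Ioo t₁ (q + 1)
  have hfin := hF.finite_nontrivialZeros hl ha (q + 1)
  set S : Finset ℂ := {ρ ∈ hfin.toFinset | ρ.im ∈ Ioo t₁ (q + 1)}
  have hS (s : ℂ) : s ∈ S ↔ s ∈ U ∧ normalizedLerch a F s = 0 :=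
    hF.mem_filter_nontrivialZeros_iff hl ha hn hleft (by linarith) s
  have hS_zero {ρ : ℂ} (hρ : ρ ∈ S) : F ρ = 0 ∧ ρ.re ∈ Ioo (-1) (1 + a) := by
    have h0 : F ρ = 0 := (hfin.mem_toFinset.1 (Finset.mem_filter.1 hρ).1).1
    obtain ⟨hre, him⟩ := ((hS ρ).1 hρ).1
    exact ⟨h0, hF.re_mem_Ioo_of_eq_zero ha hleft h0 hre.1.le him.1.le⟩
  have hU1 {s : ℂ} (hs : s ∈ U) : s ≠ 1 := fun h ↦ by
    have him := hs.2.1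
    rw [h, one_im] at him
    linarith
  have hA (i : Fin 3) : (hat 2 (n + 2)).node i ∈ Icc (-n : ℝ) (n + 4) := by
    convert hat_node_mem_Icc (c := 2) hr i using 2 <;> ring
  have hre {ρ : ℂ} (hρ : ρ ∈ S) : ρ.re ∈ Ioo (2 - (n + 2 : ℝ)) 2 :=
    Ioo_subset_Ioo (by linarith) (by linarith) (hS_zero hρ).2
  have hU : [[(-n : ℝ), n + 4]] ×ℂ [[p, q]] ⊆ U := by
    rw [uIcc_of_le (by linarith), uIcc_of_le hpq]
    exact reProdIm_subset_iff.2 (prod_mono (Icc_subset_Ioo (by linarith) (by linarith))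
      (Icc_subset_Ioo hp (by linarith)))
  rw [gridIntegral_log_norm hA hB (isOpen_Ioo.reProdIm isOpen_Ioo)
    (convex_reProdIm (convex_Ioo _ _) (convex_Ioo _ _)) hU
    (fun z hz ↦ (hF.differentiableAt_normalizedLerch ha (hU1 hz)).differentiableWithinAt)
    hS (fun ρ hρ ↦ ne_hat_node_of_mem_Ioo hr (hre hρ)) fun ρ hρ ↦ hB_ne ρ (hS_zero hρ).1,
    zeroSum, finsum_mem_eq_finite_toFinset_sum _ hfin,
    ← Finset.sum_filter_of_ne (p := fun ρ ↦ ρ.im ∈ Ioo t₁ (q + 1)) fun ρ _ hne ↦ ?_]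
  · refine congrArg _ (Finset.sum_congr rfl fun ρ hρ ↦ ?_)
    rw [hF.analyticOrderNatAt_normalizedLerch ha (hU1 ((hS ρ).1 hρ).1),
      tent_hat_of_mem_Icc hr (Ioo_subset_Icc_self (hre hρ)), sub_add_cancel_right, sub_neg_eq_add,
      add_comm ρ.re]
  · contrapose! hne
    rw [B.tent_eq_zero_of_notMem_Ioo hB fun h ↦ hne (Ioo_subset_Ioo hp.le (by linarith) h),
      mul_zero, mul_zero]

end ZeroCount

end IsLerch

namespace IsLerch

open Complex Filter Topology Set MeasureTheory LerchZeta LerchZeta.BalancedNodes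
open scoped Interval Real

variable {l a : ℝ} {F : ℂ → ℂ} (hF : IsLerch l a F) (ha : a ∈ Ioc (0 : ℝ) 1)

include hF ha

lemma abs_integral_trapezoid_mul_log_norm_right_le {x p₀ p₁ q₀ q₁ : ℝ} (hp : p₀ < p₁)
    (hq : q₀ < q₁) (hpq : p₁ ≤ q₀) (hx : 2 ≤ x) (hp₀ : 0 < p₀) :
    |∫ t in p₀..q₁, (trapezoid hp hq).tent t *
      Real.log ‖normalizedLerch a F (x + t * I)‖| ≤ 9 := by
  obtain ⟨ξ, -, η, -, h⟩ := exists_integral_trapezoid_mul_eq hp hq hpq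
    (hF.continuousOn_log_norm_normalizedLerch ha (x := x) (s := Icc p₀ q₁) fun t ht ↦
      ⟨hp₀.trans_le ht.1, hF.ne_zero_of_one_add_le_re ha (by simp; linarith [ha.2])⟩)
  rw [h]
  exact hF.abs_integral_log_norm_right_le ha hx ξ η

variable (hl : l ∈ Ioc (0 : ℝ) 1) {n : ℕ} (hn : 1 ≤ n)

include hl hn

lemma exists_abs_integral_trapezoid_mul_log_norm_left_sub_le :
    ∃ C t₁ : ℝ, 0 ≤ C ∧ 3 ≤ t₁ ∧ ∀ (p₀ p₁ q₀ q₁ : ℝ) (hp : p₀ < p₁) (hq : q₀ < q₁),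
      t₁ ≤ p₀ → p₁ ≤ q₀ → ∃ ξ ∈ Icc p₀ p₁, ∃ η ∈ Icc q₀ q₁,
        |(∫ t in p₀..q₁, (trapezoid hp hq).tent t *
            Real.log ‖normalizedLerch a F ((-n : ℝ) + t * I)‖) -
          (mainTerm l a n η - mainTerm l a n ξ)| ≤ C * Real.log q₁ := by
  have hn' : (1 : ℝ) ≤ n := by exact_mod_cast hn
  obtain ⟨C, t₁, hC0, ht₁, hC⟩ := hF.exists_abs_integral_log_norm_left_sub_le ha hl hn
  obtain ⟨t₂, -, hne⟩ := hF.exists_ne_zero_of_re_le_neg_one hl ha (R := n) (by linarith)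
  refine ⟨C, max t₁ t₂, hC0, ht₁.trans (le_max_left _ _), fun p₀ p₁ q₀ q₁ hp hq hp₀ hpq ↦ ?_⟩
  obtain ⟨hp₁, hp₂⟩ := max_le_iff.1 hp₀
  obtain ⟨ξ, hξ, η, hη, h⟩ := exists_integral_trapezoid_mul_eq hp hq hpq
    (hF.continuousOn_log_norm_normalizedLerch ha (x := -n) (s := Icc p₀ q₁) fun t ht ↦
      ⟨by linarith [ht.1], hne _ (by simp) (by simpa using hn') (by simpa using hp₂.trans ht.1)⟩)
  refine ⟨ξ, hξ, η, hη, ?_⟩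
  rw [h]
  refine (hC ξ η (hp₁.trans hξ.1) (hξ.2.trans (hpq.trans hη.1))).trans ?_
  have hη0 : 0 < η := by linarith [hξ.1, hξ.2, hη.1]
  gcongr
  exact hη.2

lemma exists_abs_sum_hat_weight_mul_integral_sub_le :
    ∃ C t₁ : ℝ, 0 ≤ C ∧ 3 ≤ t₁ ∧ ∀ (p₀ p₁ q₀ q₁ : ℝ) (hp : p₀ < p₁) (hq : q₀ < q₁),
      t₁ ≤ p₀ → p₁ ≤ q₀ → ∃ ξ ∈ Icc p₀ p₁, ∃ η ∈ Icc q₀ q₁,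
        |(∑ i, (hat 2 (n + 2)).weight i * ∫ t in p₀..q₁, (trapezoid hp hq).tent t *
            Real.log ‖normalizedLerch a F ((hat 2 (n + 2)).node i + t * I)‖) -
          (mainTerm l a n η - mainTerm l a n ξ)| ≤ C * Real.log q₁ := by
  obtain ⟨C, t₁, hC0, ht₁, hC⟩ :=
    hF.exists_abs_integral_trapezoid_mul_log_norm_left_sub_le ha hl hn
  refine ⟨C + 27, t₁, by positivity, ht₁, fun p₀ p₁ q₀ q₁ hp hq hp₀ hpq ↦ ?_⟩
  obtain ⟨ξ, hξ, η, hη, h⟩ := hC p₀ p₁ q₀ q₁ hp hq hp₀ hpq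
  refine ⟨ξ, hξ, η, hη, ?_⟩
  set V : ℝ → ℝ := fun x ↦ ∫ t in p₀..q₁, (trapezoid hp hq).tent t *
    Real.log ‖normalizedLerch a F (x + t * I)‖
  have hright {x : ℝ} (hx : 2 ≤ x) : |V x| ≤ 9 :=
    hF.abs_integral_trapezoid_mul_log_norm_right_le ha hp hq hpq hx (by linarith)
  have hlog := one_le_log (show 3 ≤ q₁ by linarith)
  rw [sum_hat_weight_mul 2 (n + 2) V, show (2 : ℝ) - (n + 2) = -n by ring]
  rw [abs_le] at h ⊢
  have h₁ := abs_le.1 (hright le_rfl)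
  have h₂ := abs_le.1 (hright (x := 2 + (n + 2)) (by linarith [n.cast_nonneg (α := ℝ)]))
  constructor <;> linarith

lemma exists_abs_two_pi_mul_zeroSum_sub_le :
    ∃ C t₁ : ℝ, 0 ≤ C ∧ 3 ≤ t₁ ∧ ∀ (K p₀ p₁ q₀ q₁ : ℝ) (hp : p₀ < p₁) (hq : q₀ < q₁), 0 ≤ K →
      t₁ ≤ p₀ → 1 ≤ p₁ - p₀ → p₁ ≤ q₀ → 1 ≤ q₁ - q₀ →
      IsGoodHeight a F n K p₀ → IsGoodHeight a F n K p₁ →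
      IsGoodHeight a F n K q₀ → IsGoodHeight a F n K q₁ →
      ∃ ξ ∈ Icc p₀ p₁, ∃ η ∈ Icc q₀ q₁,
        |2 * π * zeroSum a F (q₁ + 1) (fun ρ ↦ (n + ρ.re) * (trapezoid hp hq).tent ρ.im) -
          (mainTerm l a n η - mainTerm l a n ξ)| ≤ C * Real.log q₁ + 4 * ((n + 2) * K) := by
  obtain ⟨C, t₁, hC0, ht₁, hC⟩ := hF.exists_abs_sum_hat_weight_mul_integral_sub_le ha hl hn
  obtain ⟨t₂, ht₂, hne⟩ := hF.exists_ne_zero_of_re_le_neg_one hl ha (R := n + 1) (by positivity)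
  refine ⟨C, max t₁ (t₂ + 1), hC0, ht₁.trans (le_max_left _ _),
    fun K p₀ p₁ q₀ q₁ hp hq hK ht₁p hpp hpq hqq hp₀ hp₁ hq₀ hq₁ ↦ ?_⟩
  obtain ⟨h₁, h₂⟩ := max_le_iff.1 ht₁p
  obtain ⟨ξ, hξ, η, hη, hvert⟩ := hC p₀ p₁ q₀ q₁ hp hq h₁ hpq
  refine ⟨ξ, hξ, η, hη, ?_⟩
  have hhor := abs_sum_trapezoid_weight_mul_integral_le hpp hqq hp hq hK hp₀ hp₁ hq₀ hq₁
    (abs_tent_hat_le (c := 2) (show (0 : ℝ) ≤ n + 2 by positivity))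
  have hnode : ∀ s, F s = 0 → ∀ j, s.im ≠ (trapezoid hp hq).node j := fun s hs j ↦ by
    fin_cases j
    exacts [hp₀.im_ne s hs, hp₁.im_ne s hs, hq₀.im_ne s hs, hq₁.im_ne s hs]
  rw [hF.two_pi_mul_zeroSum_eq_gridIntegral hl ha hn hne ht₂ (by linarith) (by linarith)
    (trapezoid_node_mem_Icc hp hq hpq) hnode, gridIntegral, add_sub_right_comm]
  exact (abs_add_le _ _).trans (add_le_add hvert hhor)

end IsLerch

namespace IsLerch

open Complex Filter Topology Set MeasureTheory LerchZeta LerchZeta.BalancedNodes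
open scoped Interval Real

variable {l a : ℝ} {F : ℂ → ℂ} (hF : IsLerch l a F) (ha : a ∈ Ioc (0 : ℝ) 1)
  (hl : l ∈ Ioc (0 : ℝ) 1)

include hF ha hl

lemma exists_forall_isGoodHeight (n : ℕ) : ∃ C τ : ℝ, 0 ≤ C ∧ 3 ≤ τ ∧ ∀ T x : ℝ,
    3 ≤ T → τ ≤ x → x ≤ T + 2 → ∃ Y ∈ Icc x (x + 1), IsGoodHeight a F n (C * Real.log T) Y := by
  obtain ⟨C, hC0, hC⟩ := hF.exists_isGoodHeight hl ha n
  refine ⟨C * 2, n + 4, by positivity, by linarith [n.cast_nonneg (α := ℝ)],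
    fun T x hT hx hxT ↦ ?_⟩
  obtain ⟨Y, hY, hgood⟩ := hC x hx
  have hx0 : 0 < x := by linarith [n.cast_nonneg (α := ℝ)]
  refine ⟨Y, hY, hgood.mono ?_⟩
  rw [mul_assoc]
  exact mul_le_mul_of_nonneg_left
    ((Real.log_le_log hx0 (by linarith)).trans (log_add_three_le hT)) hC0

variable {n : ℕ} (hn : 1 ≤ n)

include hn

lemma exists_cutoff_abs_two_pi_mul_zeroSum_sub_le :
    ∃ C p T₀ : ℝ, 0 ≤ C ∧ 3 ≤ T₀ ∧ ∀ T, T₀ ≤ T → ∃ q ∈ Icc T (T + 3), ∃ χ : ℝ → ℝ,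
      (∀ y, χ y ∈ Icc 0 1) ∧ (∀ y ∈ Icc p T, χ y = 1) ∧ (∀ y, q ≤ y → χ y = 0) ∧
        |2 * π * zeroSum a F (q + 1) (fun ρ ↦ (n + ρ.re) * χ ρ.im) - mainTerm l a n T| ≤
          C * Real.log T := by
  obtain ⟨C₁, t₁, hC₁, ht₁, hsum⟩ := hF.exists_abs_two_pi_mul_zeroSum_sub_le ha hl hn
  obtain ⟨C₂, t₂, hC₂, -, hgood⟩ := hF.exists_forall_isGoodHeight ha hl n
  obtain ⟨C₃, hC₃, hmain⟩ := exists_abs_mainTerm_sub_le l a n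
  set τ := max t₁ t₂
  have hτ₁ : t₁ ≤ τ := le_max_left _ _
  have hτ₂ : t₂ ≤ τ := le_max_right _ _
  set M := |mainTerm l a n τ| + C₃ * Real.log τ
  have hM0 : 0 ≤ M := by
    have := one_le_log (ht₁.trans hτ₁)
    positivity
  refine ⟨C₁ * 2 + 4 * ((n + 2) * C₂) + C₃ + M, τ + 3, τ + 3, by positivity, by linarith,
    fun T hT ↦ ?_⟩
  have hT3 : 3 ≤ T := by linarith
  obtain ⟨p₀, hp₀, hgp₀⟩ := hgood T τ hT3 hτ₂ (by linarith)
  obtain ⟨p₁, hp₁, hgp₁⟩ := hgood T (τ + 2) hT3 (by linarith) (by linarith)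
  obtain ⟨q₀, hq₀, hgq₀⟩ := hgood T T hT3 (by linarith) (by linarith)
  obtain ⟨q₁, hq₁, hgq₁⟩ := hgood T (T + 2) hT3 (by linarith) le_rfl
  rw [mem_Icc] at hp₀ hp₁ hq₀ hq₁
  have hp : p₀ < p₁ := by linarith
  have hq : q₀ < q₁ := by linarith
  have hlogT := one_le_log hT3
  obtain ⟨ξ, hξ, η, hη, h⟩ := hsum (C₂ * Real.log T) p₀ p₁ q₀ q₁ hp hq (by positivity)
    (by linarith) (by linarith) (by linarith) (by linarith) hgp₀ hgp₁ hgq₀ hgq₁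
  refine ⟨q₁, ⟨by linarith, by linarith⟩, (trapezoid hp hq).tent,
    tent_trapezoid_mem_Icc hp hq (by linarith),
    fun y hy ↦ tent_trapezoid_eq_one hp hq ⟨by linarith [hy.1], by linarith [hy.2]⟩,
    fun y hy ↦ tent_eq_zero_of_notMem_Ioo _ (trapezoid_node_mem_Icc hp hq (by linarith))
      fun h ↦ hy.not_gt h.2, ?_⟩
  have hlogq : C₁ * Real.log q₁ ≤ C₁ * (2 * Real.log T) := mul_le_mul_of_nonneg_left
    ((Real.log_le_log (by linarith) (by linarith)).trans (log_add_three_le hT3)) hC₁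
  have hη_le := abs_le.1 (hmain T η hT3 (by linarith [hη.1]) (by linarith [hη.2]))
  have hξ_le := abs_le.1 (hmain τ ξ (by linarith) (by linarith [hξ.1]) (by linarith [hξ.2]))
  have hτ_le := abs_le.1 (le_refl |mainTerm l a n τ|)
  have hMT : M ≤ M * Real.log T := le_mul_of_one_le_right hM0 hlogT
  rw [abs_le] at h ⊢
  constructor <;> linarith

lemma two_pi_mul_zeroSum_sub_mainTerm_isBigO_natCast :
    (fun T ↦ 2 * π * zeroSum a F T (fun ρ ↦ n + ρ.re) - mainTerm l a n T) =O[atTop] Real.log := by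
  have hn' : (1 : ℝ) ≤ n := by exact_mod_cast hn
  obtain ⟨C, p, T₀, hC0, hT₀, hC⟩ := hF.exists_cutoff_abs_two_pi_mul_zeroSum_sub_le ha hl hn
  obtain ⟨D, hD0, hD⟩ := exists_abs_mainTerm_sub_le l a n
  have hfin := hF.finite_nontrivialZeros hl ha
  set w : ℂ → ℝ := fun ρ ↦ n + ρ.re
  have hw (ρ : ℂ) (hρ : -1 ≤ ρ.re) : 0 ≤ w ρ := by linarith
  set E := 2 * π * |zeroSum a F p w|
  refine Asymptotics.IsBigO.of_bound (C + D + E) ?_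
  filter_upwards [eventually_ge_atTop (T₀ + 3)] with T hT
  have hlog := one_le_log (show 3 ≤ T by linarith)
  have hE : E ≤ E * Real.log T := le_mul_of_one_le_right (by positivity) hlog
  rw [Real.norm_eq_abs, Real.norm_of_nonneg (by linarith), abs_le]
  constructor
  · obtain ⟨q, hq, χ, hχ, -, hχ0, h⟩ := hC (T - 3) (by linarith)
    have hle : zeroSum a F (q + 1) (fun ρ ↦ w ρ * χ ρ.im) ≤ zeroSum a F T w :=
      zeroSum_mul_le (hfin _) hw (hfin _) (fun y ↦ (hχ y).2)
        fun y hy ↦ hχ0 y (by linarith [hq.2])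
    have hle' := mul_le_mul_of_nonneg_left hle (show 0 ≤ 2 * π by positivity)
    have hDT := (abs_le.1 (hD (T - 3) T (by linarith) (by linarith) (by linarith))).2
    have hlog' : (C + D) * Real.log (T - 3) ≤ (C + D) * Real.log T :=
      mul_le_mul_of_nonneg_left (Real.log_le_log (by linarith) (by linarith)) (by positivity)
    have hE0 : 0 ≤ E := by positivity
    linarith [(abs_le.1 h).1]
  · obtain ⟨q, hq, χ, hχ, hχ1, -, h⟩ := hC T (by linarith)
    have hle : zeroSum a F T w ≤
        zeroSum a F p w + zeroSum a F (q + 1) (fun ρ ↦ w ρ * χ ρ.im) :=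
      zeroSum_le_add_zeroSum_mul (hfin _) hw (hfin _) (hfin _) (by linarith [hq.1])
        (fun y ↦ (hχ y).1) hχ1
    have hle' := mul_le_mul_of_nonneg_left hle (show 0 ≤ 2 * π by positivity)
    have hp : 2 * π * zeroSum a F p w ≤ E :=
      mul_le_mul_of_nonneg_left (le_abs_self _) (by positivity)
    have hDlog : 0 ≤ D * Real.log T := by positivity
    linarith [(abs_le.1 h).2]

omit hn

lemma two_pi_mul_zeroSum_sub_mainTerm_isBigO (b : ℝ) :
    (fun T ↦ 2 * π * zeroSum a F T (fun ρ ↦ b + ρ.re) - mainTerm l a b T) =O[atTop] Real.log := by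
  have h₁ := hF.two_pi_mul_zeroSum_sub_mainTerm_isBigO_natCast ha hl le_rfl
  have h₂ := hF.two_pi_mul_zeroSum_sub_mainTerm_isBigO_natCast ha hl one_le_two
  refine ((h₁.const_mul_left (2 - b)).add (h₂.const_mul_left (b - 1))).congr_left fun T ↦ ?_
  have hsum : zeroSum a F T (fun ρ ↦ b + ρ.re) =
      (2 - b) * zeroSum a F T (fun ρ ↦ (1 : ℕ) + ρ.re) +
        (b - 1) * zeroSum a F T (fun ρ ↦ (2 : ℕ) + ρ.re) := by
    rw [← zeroSum_const_mul, ← zeroSum_const_mul, ← zeroSum_add (hF.finite_nontrivialZeros hl ha T)]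
    congr 1
    ext ρ
    simp only [Pi.add_apply]
    push_cast
    ring
  rw [hsum]
  simp only [mainTerm]
  push_cast
  ring

end IsLerch

namespace LerchZeta

open scoped Real

lemma mainTerm_eq_two_pi_mul {l a : ℝ} (hl : 0 < l) (ha : 0 < a) (b : ℝ) {T : ℝ} (hT : 0 < T) :
    mainTerm l a b T = 2 * π * ((b + 1 / 2) * (T / (2 * π)) *
      Real.log (T / (2 * π * Real.exp 1 * a * l)) + T / (4 * π) * Real.log (a / l)) := by
  have hlog : Real.log (T / (2 * π * Real.exp 1 * a * l)) =
      Real.log (T / (2 * π)) - 1 - Real.log a - Real.log l := by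
    rw [mul_assoc, mul_assoc, ← div_div, Real.log_div (by positivity) (by positivity),
      Real.log_mul (by positivity) (by positivity), Real.log_mul ha.ne' hl.ne', Real.log_exp]
    ring
  rw [mainTerm, hlog, Real.log_div ha.ne' hl.ne']
  field_simp
  ring

end LerchZeta

theorem lerch_sum_b_plus_beta_general
    (b lam alp : ℝ) (hlam0 : 0 < lam) (hlam1 : lam ≤ 1) (halp0 : 0 < alp) (halp1 : alp ≤ 1)
    (F : ℂ → ℂ) (hF : IsLerch lam alp F) :
    (fun T : ℝ =>
      (∑ᶠ ρ ∈ {ρ : ℂ | F ρ = 0 ∧ -1 ≤ ρ.re ∧ ρ.re < 1 + alp ∧ 0 < ρ.im ∧ ρ.im ≤ T},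
        (zeroOrder F ρ : ℝ) * (b + ρ.re))
        - ((b + 1 / 2) * (T / (2 * Real.pi))
              * Real.log (T / (2 * Real.pi * Real.exp 1 * alp * lam))
            + T / (4 * Real.pi) * Real.log (alp / lam)))
      =O[Filter.atTop] Real.log := by
  have h := hF.two_pi_mul_zeroSum_sub_mainTerm_isBigO ⟨halp0, halp1⟩ ⟨hlam0, hlam1⟩ b
  refine (h.const_mul_left (2 * Real.pi)⁻¹).congr' ?_ .rfl
  filter_upwards [Filter.eventually_gt_atTop 0] with T hT
  rw [LerchZeta.mainTerm_eq_two_pi_mul hlam0 halp0 b hT, ← mul_sub,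
    inv_mul_cancel_left₀ (by positivity)]
  rfl

/-- asymptotics for the sum of `b + β` over the nontrivial zeros. -/
theorem lerch_sum_b_plus_beta (b lam alp : ℝ) (hb : 3 ≤ b) (hlam0 : 0 < lam) (hlam1 : lam ≤ 1)
    (halp0 : 0 < alp) (halp1 : alp ≤ 1) (F : ℂ → ℂ) (hF : IsLerch lam alp F) :
    (fun T : ℝ =>
        (∑ᶠ ρ ∈ {ρ : ℂ | F ρ = 0 ∧ -1 ≤ ρ.re ∧ ρ.re < 1 + alp ∧ 0 < ρ.im ∧ ρ.im ≤ T},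
          (zeroOrder F ρ : ℝ) * (b + ρ.re))
        - ((b + 1 / 2) * (T / (2 * Real.pi)) * Real.log (T / (2 * Real.pi * Real.exp 1 * alp * lam))
            + T / (4 * Real.pi) * Real.log (alp / lam)))
      =O[Filter.atTop] Real.log :=
  lerch_sum_b_plus_beta_general b lam alp hlam0 hlam1 halp0 halp1 F hF
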